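/- arXiv:2405.20480 — 2 statements merged into one kernel-verified Lean document; each statement's English description precedes it below -/
import Mathlib

section
/- Let G = ([n], E) be the n-path graph (edges {i, i+1} for i = 1, …, n−1), with n ≥ 3. For d = 3, the divisor class group of the normal Noetherian domain R_G(3) satisfies Cl(R_G(3)) ≅ ℤ^{n−2}. -/
open MvPolynomial nonZeroDivisors

/-- The variable `y_{i c}` of the polynomial ring `K[y_{ij} : i ∈ [n], j ∈ [3]]`,
with the indices `i ∈ {1, …, n}` and `c ∈ {1, 2, 3}` as in the paper
(and junk value `0` for out-of-range indices). -/
noncomputable def yvar (K : Type) [Field K] (n i c : ℕ) : MvPolynomial (Fin n × Fin 3) K :=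
  if h : 1 ≤ i ∧ i ≤ n ∧ 1 ≤ c ∧ c ≤ 3 then
    MvPolynomial.X (⟨i - 1, by omega⟩, ⟨c - 1, by omega⟩)
  else 0

/-- The LSS generator `f_{a(a+1)} = ∑_{k=1}^3 y_{ak} y_{(a+1)k}` associated to the edge
`{a, a+1}` of the `n`-path graph. -/
noncomputable def pathGen (K : Type) [Field K] (n a : ℕ) : MvPolynomial (Fin n × Fin 3) K :=
  ∑ k : Fin 3, yvar K n a (k.1 + 1) * yvar K n (a + 1) (k.1 + 1)

/-- The LSS ideal `L_G(3) = (f_{12}, …, f_{(n-1)n})` of the `n`-path graph `G`. -/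
noncomputable def pathLSS (K : Type) [Field K] (n : ℕ) :
    Ideal (MvPolynomial (Fin n × Fin 3) K) :=
  Ideal.span {g | ∃ a : ℕ, 1 ≤ a ∧ a + 1 ≤ n ∧ g = pathGen K n a}

section DivisorClassGroup

variable (R : Type) [CommRing R] [IsDomain R]
variable (F : Type) [Field F] [Algebra R F] [IsFractionRing R F]

/-- The divisorial closure `(I⁻¹)⁻¹` of a fractional ideal; a fractional ideal is
divisorial when it equals its divisorial closure. -/
noncomputable def divisorialClosure (I : FractionalIdeal R⁰ F) : FractionalIdeal R⁰ F :=
  1 / (1 / I)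

/-- The `n`-th power of a nonzero fractional ideal in the group of divisorial ideals:
for `n ≥ 0` the divisorial closure of `Iⁿ`, and for `n < 0` the divisorial closure of
`(1/I)^{-n}`. -/
noncomputable def divZPow (I : FractionalIdeal R⁰ F) (m : ℤ) : FractionalIdeal R⁰ F :=
  if 0 ≤ m then divisorialClosure R F (I ^ m.toNat)
  else divisorialClosure R F ((1 / I) ^ (-m).toNat)

/-- Two (nonzero) fractional ideals define the same divisor class iff their divisorial
closures differ by a principal fractional ideal. -/
def SameDivisorClass (I J : FractionalIdeal R⁰ F) : Prop :=
  ∃ a : F, a ≠ 0 ∧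
    divisorialClosure R F I = divisorialClosure R F (FractionalIdeal.spanSingleton R⁰ a * J)

/-- The divisor class group of `R` (divisorial fractional ideals modulo principal ones)
is free abelian of rank `r`: there are `r` nonzero fractional ideals whose divisor
classes form a `ℤ`-basis, i.e. every nonzero fractional ideal has the divisor class of a
unique `ℤ`-linear combination of them. -/
def DivisorClassGroupIsFreeOfRank (r : ℕ) : Prop :=
  ∃ I : Fin r → FractionalIdeal R⁰ F,
    (∀ i, I i ≠ 0) ∧
    (∀ J : FractionalIdeal R⁰ F, J ≠ 0 →
      ∃ v : Fin r → ℤ, SameDivisorClass R F (∏ i, divZPow R F (I i) (v i)) J) ∧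
    ∀ v w : Fin r → ℤ,
      SameDivisorClass R F (∏ i, divZPow R F (I i) (v i)) (∏ i, divZPow R F (I i) (w i)) →
        v = w

end DivisorClassGroup

/-- A divisor theory on a domain. -/
structure DivTheory (R : Type) [CommRing R] (P : Type) where
  φ : R → P →₀ ℤ
  map_mul : ∀ x y, x ≠ 0 → y ≠ 0 → φ (x * y) = φ x + φ y
  dvd_iff : ∀ x y, x ≠ 0 → y ≠ 0 → (x ∣ y ↔ φ x ≤ φ y)
  exists_eq : ∀ δ : P →₀ ℤ, 0 ≤ δ → ∀ p, ∃ x, x ≠ 0 ∧ δ ≤ φ x ∧ φ x p = δ p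

/-- `R` has a divisor theory whose class group is free with basis indexed by `ι`. -/
def GoodRing (R : Type) [CommRing R] (ι : Type) [Fintype ι] : Prop :=
  ∃ (P : Type) (T : DivTheory R P) (q : ι → P →₀ ℤ),
    (∀ δ : P →₀ ℤ, ∃ (m : ι → ℤ) (x y : R), x ≠ 0 ∧ y ≠ 0 ∧
      δ = ∑ i, m i • q i + T.φ x - T.φ y) ∧
    (∀ (m : ι → ℤ) (x y : R), x ≠ 0 → y ≠ 0 → ∑ i, m i • q i = T.φ x - T.φ y → m = 0)

namespace DivTheory

variable {R : Type} [CommRing R] [IsDomain R] {P : Type} (T : DivTheory R P)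

theorem map_one : T.φ 1 = 0 := by
  have h := T.map_mul 1 1 one_ne_zero one_ne_zero
  rw [mul_one] at h
  simpa using h

theorem nonneg (x : R) (hx : x ≠ 0) : 0 ≤ T.φ x := by
  rw [← T.map_one]
  exact (T.dvd_iff 1 x one_ne_zero hx).1 (one_dvd x)

theorem exists_ge (δ : P →₀ ℤ) : ∃ x, x ≠ 0 ∧ δ ≤ T.φ x := by
  classical
  rcases isEmpty_or_nonempty P with h | ⟨⟨p⟩⟩
  · exact ⟨1, one_ne_zero, fun p => (IsEmpty.false p).elim⟩
  · obtain ⟨x, hx, hd, -⟩ := T.exists_eq (δ ⊔ 0) le_sup_right p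
    exact ⟨x, hx, le_trans le_sup_left hd⟩

variable (F : Type) [Field F] [Algebra R F] [IsFractionRing R F]

theorem exists_repr (x : F) (hx : x ≠ 0) : ∃ r : R × R, r.1 ≠ 0 ∧ r.2 ≠ 0 ∧
    x = algebraMap R F r.1 / algebraMap R F r.2 := by
  obtain ⟨r, s, hs, rfl⟩ := IsFractionRing.div_surjective (A := R) x
  have hs0 : s ≠ 0 := nonZeroDivisors.ne_zero hs
  refine ⟨(r, s), ?_, hs0, rfl⟩
  rintro h
  simp only at h
  subst h
  simp at hx

open Classical in
/-- Extension to the fraction field. -/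
noncomputable def ψ (x : F) : P →₀ ℤ :=
  if h : x = 0 then 0 else
    T.φ (exists_repr (R := R) F x h).choose.1 - T.φ (exists_repr (R := R) F x h).choose.2

variable {F}

theorem ψ_div (r s : R) (hr : r ≠ 0) (hs : s ≠ 0) :
    T.ψ F (algebraMap R F r / algebraMap R F s) = T.φ r - T.φ s := by
  have inj := IsFractionRing.injective R F
  have hr' : algebraMap R F r ≠ 0 := by simpa using hr
  have hs' : algebraMap R F s ≠ 0 := by simpa using hs
  have h0 : algebraMap R F r / algebraMap R F s ≠ 0 := div_ne_zero hr' hs'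
  rw [ψ, dif_neg h0]
  set e := exists_repr (R := R) F _ h0
  obtain ⟨h1, h2, h3⟩ := e.choose_spec
  have h2' : algebraMap R F e.choose.2 ≠ 0 := by simpa using h2
  rw [div_eq_div_iff hs' h2', ← _root_.map_mul, ← _root_.map_mul] at h3
  have h4 := congrArg T.φ (inj h3)
  rw [T.map_mul _ _ hr h2, T.map_mul _ _ h1 hs] at h4
  rw [sub_eq_sub_iff_add_eq_add, ← h4]

theorem ψ_algebraMap (r : R) (hr : r ≠ 0) : T.ψ F (algebraMap R F r) = T.φ r := by
  have h := T.ψ_div (F := F) r 1 hr one_ne_zero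
  simpa [T.map_one] using h

theorem ψ_mul (x y : F) (hx : x ≠ 0) (hy : y ≠ 0) : T.ψ F (x * y) = T.ψ F x + T.ψ F y := by
  obtain ⟨⟨r, s⟩, hr, hs, rfl⟩ := exists_repr (R := R) F x hx
  obtain ⟨⟨r', s'⟩, hr', hs', rfl⟩ := exists_repr (R := R) F y hy
  simp only at hr hs hr' hs' ⊢
  rw [div_mul_div_comm, ← _root_.map_mul, ← _root_.map_mul,
    T.ψ_div _ _ (mul_ne_zero hr hr') (mul_ne_zero hs hs'), T.ψ_div _ _ hr hs,
    T.ψ_div _ _ hr' hs', T.map_mul _ _ hr hr', T.map_mul _ _ hs hs']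
  abel

theorem ψ_one : T.ψ F 1 = 0 := by
  have := T.ψ_algebraMap (F := F) 1 one_ne_zero
  rwa [_root_.map_one, T.map_one] at this

theorem ψ_pow (x : F) (hx : x ≠ 0) (k : ℕ) : T.ψ F (x ^ k) = k • T.ψ F x := by
  induction k with
  | zero => simp [T.ψ_one]
  | succ k ih => rw [pow_succ, T.ψ_mul _ _ (pow_ne_zero _ hx) hx, ih, succ_nsmul]

theorem ψ_nonneg_iff (x : F) (hx : x ≠ 0) : 0 ≤ T.ψ F x ↔ ∃ r, algebraMap R F r = x := by
  constructor
  · intro h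
    obtain ⟨⟨r, s⟩, hr, hs, rfl⟩ := exists_repr (R := R) F x hx
    simp only at hr hs h ⊢
    rw [T.ψ_div _ _ hr hs, sub_nonneg] at h
    obtain ⟨t, rfl⟩ := (T.dvd_iff s r hs hr).2 h
    have hs' : algebraMap R F s ≠ 0 := by simpa using hs
    exact ⟨t, by rw [_root_.map_mul]; field_simp⟩
  · rintro ⟨r, rfl⟩
    have hr : r ≠ 0 := by rintro rfl; simp at hx
    rw [T.ψ_algebraMap _ hr]
    exact T.nonneg r hr

theorem exists_ψ (δ : P →₀ ℤ) (p : P) : ∃ x : F, x ≠ 0 ∧ δ ≤ T.ψ F x ∧ T.ψ F x p = δ p := by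
  obtain ⟨s, hs, hsd⟩ := T.exists_ge (-δ)
  obtain ⟨x, hx, hxd, hxp⟩ := T.exists_eq (δ + T.φ s) (by
    have := add_le_add_right hsd δ
    simpa using this) p
  refine ⟨algebraMap R F x / algebraMap R F s, div_ne_zero (by simpa using hx) (by simpa using hs),
    ?_, ?_⟩
  · rw [T.ψ_div _ _ hx hs]; exact le_sub_iff_add_le.2 hxd
  · rw [T.ψ_div _ _ hx hs]; simp [hxp]

theorem ψ_inv (x : F) (hx : x ≠ 0) : T.ψ F x⁻¹ = - T.ψ F x := by
  have := T.ψ_mul x x⁻¹ hx (inv_ne_zero hx)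
  rw [mul_inv_cancel₀ hx, T.ψ_one] at this
  exact (neg_eq_of_add_eq_zero_right this.symm).symm

theorem ψ_add (δ : P →₀ ℤ) (x y : F) (hx : x = 0 ∨ δ ≤ T.ψ F x) (hy : y = 0 ∨ δ ≤ T.ψ F y) :
    x + y = 0 ∨ δ ≤ T.ψ F (x + y) := by
  by_cases h0 : x + y = 0
  · exact Or.inl h0
  refine Or.inr fun p => ?_
  obtain ⟨z, hz, hzd, hzp⟩ := T.exists_ψ (F := F) (-δ) p
  have key : ∀ t : F, (t = 0 ∨ δ ≤ T.ψ F t) → ∃ r, algebraMap R F r = t * z := by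
    rintro t (rfl | ht)
    · exact ⟨0, by simp⟩
    by_cases ht0 : t = 0
    · exact ⟨0, by simp [ht0]⟩
    rw [← T.ψ_nonneg_iff _ (mul_ne_zero ht0 hz), T.ψ_mul _ _ ht0 hz]
    have := add_le_add ht hzd
    simpa using this
  obtain ⟨r, hr⟩ := key x hx
  obtain ⟨s, hs⟩ := key y hy
  have : 0 ≤ T.ψ F ((x + y) * z) := by
    rw [T.ψ_nonneg_iff _ (mul_ne_zero h0 hz)]
    exact ⟨r + s, by rw [map_add, hr, hs, add_mul]⟩
  rw [T.ψ_mul _ _ h0 hz] at this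
  have := this p
  simp [hzp] at this
  linarith

end DivTheory

theorem DivTheory.isIntegrallyClosed {R : Type} [CommRing R] [IsDomain R] {P : Type}
    (T : DivTheory R P) : IsIntegrallyClosed R := by
  rw [isIntegrallyClosed_iff (FractionRing R)]
  intro x hx
  by_cases h0 : x = 0
  · exact ⟨0, by simp [h0]⟩
  rw [← T.ψ_nonneg_iff x h0]
  obtain ⟨d, hd, h⟩ := hx.isAlmostIntegral
  intro p
  by_contra hneg
  have hd0 : d ≠ 0 := nonZeroDivisors.ne_zero hd
  have hd0' : algebraMap R (FractionRing R) d ≠ 0 := by simpa using hd0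
  have key : ∀ k : ℕ, 0 ≤ T.φ d + k • T.ψ (FractionRing R) x := by
    intro k
    obtain ⟨r, hr⟩ := h k
    rw [Algebra.smul_def] at hr
    rw [← T.ψ_pow x h0, ← T.ψ_algebraMap (F := FractionRing R) d hd0,
      ← T.ψ_mul _ _ hd0' (pow_ne_zero _ h0), T.ψ_nonneg_iff _ (mul_ne_zero hd0' (pow_ne_zero _ h0))]
    exact ⟨r, hr⟩
  have := key ((T.φ d p).toNat + 1) p
  simp at this hneg
  have h3 := T.nonneg d hd0 p
  simp at h3
  rw [max_eq_left h3] at this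
  nlinarith

namespace DivTheory

variable {R : Type} [CommRing R] [IsDomain R] {P : Type} (T : DivTheory R P)
variable {F : Type} [Field F] [Algebra R F] [IsFractionRing R F]

/-- The fractional ideal `I` has divisor `δ`. -/
def HasDiv (I : FractionalIdeal R⁰ F) (δ : P →₀ ℤ) : Prop :=
  I ≠ 0 ∧ (∀ x ∈ I, x ≠ 0 → δ ≤ T.ψ F x) ∧ ∀ p, ∃ x ∈ I, x ≠ 0 ∧ T.ψ F x p = δ p

theorem exists_mem_ne_zero {I : FractionalIdeal R⁰ F} (hI : I ≠ 0) : ∃ x ∈ I, x ≠ 0 := by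
  by_contra! h
  exact hI (FractionalIdeal.eq_zero_iff.2 h)

theorem ψ_smul (r : R) (hr : r ≠ 0) (x : F) (hx : x ≠ 0) : T.ψ F (r • x) = T.φ r + T.ψ F x := by
  rw [Algebra.smul_def, T.ψ_mul _ _ (by simpa using hr) hx, T.ψ_algebraMap _ hr]

variable (F) in
/-- The divisorial ideal attached to a divisor. -/
noncomputable def M (δ : P →₀ ℤ) : FractionalIdeal R⁰ F :=
  ⟨{ carrier := {x | x = 0 ∨ δ ≤ T.ψ F x}
     add_mem' := fun {x y} hx hy => T.ψ_add δ x y hx hy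
     zero_mem' := Or.inl rfl
     smul_mem' := by
      rintro r x (rfl | hx)
      · exact Or.inl (by simp)
      by_cases hr : r = 0
      · exact Or.inl (by simp [hr])
      by_cases hx0 : x = 0
      · exact Or.inl (by simp [hx0])
      refine Or.inr ?_
      rw [T.ψ_smul r hr x hx0]
      have := add_le_add (T.nonneg r hr) hx
      simpa using this }, by
    obtain ⟨s, hs, hsd⟩ := T.exists_ge (-δ)
    refine ⟨s, mem_nonZeroDivisors_of_ne_zero hs, ?_⟩
    rintro x (rfl | hx)
    · exact ⟨0, by simp⟩
    by_cases hx0 : x = 0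
    · exact ⟨0, by simp [hx0]⟩
    have h2 : 0 ≤ T.ψ F (s • x) := by
      rw [T.ψ_smul s hs x hx0]
      have := add_le_add hsd hx
      simpa using this
    rw [T.ψ_nonneg_iff _ (by simp [Algebra.smul_def, hs, hx0])] at h2
    exact h2⟩

theorem mem_M {δ : P →₀ ℤ} {x : F} : x ∈ T.M F δ ↔ x = 0 ∨ δ ≤ T.ψ F x := Iff.rfl

theorem hasDiv_M (δ : P →₀ ℤ) : T.HasDiv (T.M F δ) δ := by
  refine ⟨?_, ?_, ?_⟩
  · intro h
    obtain ⟨s, hs, hsd⟩ := T.exists_ge δ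
    have : algebraMap R F s ∈ T.M F δ := Or.inr (by rwa [T.ψ_algebraMap _ hs])
    rw [h, FractionalIdeal.mem_zero_iff] at this
    simp at this
    exact hs this
  · rintro x (rfl | h) hx
    · exact absurd rfl hx
    · exact h
  · intro p
    obtain ⟨x, hx, h1, h2⟩ := T.exists_ψ (F := F) δ p
    exact ⟨x, Or.inr h1, hx, h2⟩

variable {T}

theorem HasDiv.unique {I : FractionalIdeal R⁰ F} {δ ε : P →₀ ℤ} (h : T.HasDiv I δ)
    (h' : T.HasDiv I ε) : δ = ε := by
  apply le_antisymm
  · intro p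
    obtain ⟨x, hx, hx0, hp⟩ := h'.2.2 p
    rw [← hp]; exact h.2.1 x hx hx0 p
  · intro p
    obtain ⟨x, hx, hx0, hp⟩ := h.2.2 p
    rw [← hp]; exact h'.2.1 x hx hx0 p

theorem HasDiv.le_M {I : FractionalIdeal R⁰ F} {δ : P →₀ ℤ} (h : T.HasDiv I δ) : I ≤ T.M F δ := by
  intro x hx
  by_cases hx0 : x = 0
  · exact Or.inl hx0
  · exact Or.inr (h.2.1 x hx hx0)

theorem HasDiv.one_div {I : FractionalIdeal R⁰ F} {δ : P →₀ ℤ} (h : T.HasDiv I δ) :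
    1 / I = T.M F (-δ) := by
  apply le_antisymm
  · intro x hx
    have hx := (FractionalIdeal.mem_div_iff_of_ne_zero h.1).1 hx
    by_cases hx0 : x = 0
    · exact Or.inl hx0
    refine Or.inr fun p => ?_
    obtain ⟨y, hy, hy0, hp⟩ := h.2.2 p
    have h2 := hx y hy
    rw [FractionalIdeal.mem_one_iff, ← T.ψ_nonneg_iff _ (mul_ne_zero hx0 hy0),
      T.ψ_mul _ _ hx0 hy0] at h2
    have := h2 p
    simp [hp] at this ⊢
    linarith
  · intro x hx
    refine (FractionalIdeal.mem_div_iff_of_ne_zero h.1).2 fun y hy => ?_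
    rw [FractionalIdeal.mem_one_iff]
    by_cases hx0 : x = 0
    · exact ⟨0, by simp [hx0]⟩
    by_cases hy0 : y = 0
    · exact ⟨0, by simp [hy0]⟩
    rw [← T.ψ_nonneg_iff _ (mul_ne_zero hx0 hy0), T.ψ_mul _ _ hx0 hy0]
    have h1 := (T.hasDiv_M (F := F) (-δ)).2.1 x hx hx0
    have := add_le_add h1 (h.2.1 y hy hy0)
    simpa using this

theorem HasDiv.one_div' {I : FractionalIdeal R⁰ F} {δ : P →₀ ℤ} (h : T.HasDiv I δ) :
    T.HasDiv (1 / I) (-δ) := by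
  rw [h.one_div]; exact T.hasDiv_M _

theorem HasDiv.closure_eq {I : FractionalIdeal R⁰ F} {δ : P →₀ ℤ} (h : T.HasDiv I δ) :
    divisorialClosure R F I = T.M F δ := by
  rw [divisorialClosure, h.one_div'.one_div, neg_neg]

theorem HasDiv.closure {I : FractionalIdeal R⁰ F} {δ : P →₀ ℤ} (h : T.HasDiv I δ) :
    T.HasDiv (divisorialClosure R F I) δ := by
  rw [h.closure_eq]; exact T.hasDiv_M _

theorem HasDiv.mul {I J : FractionalIdeal R⁰ F} {δ ε : P →₀ ℤ} (h : T.HasDiv I δ)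
    (h' : T.HasDiv J ε) : T.HasDiv (I * J) (δ + ε) := by
  have hle : I * J ≤ T.M F (δ + ε) := by
    rw [FractionalIdeal.mul_le]
    intro i hi j hj
    by_cases hi0 : i = 0
    · exact Or.inl (by simp [hi0])
    by_cases hj0 : j = 0
    · exact Or.inl (by simp [hj0])
    refine Or.inr ?_
    rw [T.ψ_mul _ _ hi0 hj0]
    exact add_le_add (h.2.1 i hi hi0) (h'.2.1 j hj hj0)
  have hne : I * J ≠ 0 := by
    obtain ⟨x, hx, hx0⟩ := exists_mem_ne_zero h.1
    obtain ⟨y, hy, hy0⟩ := exists_mem_ne_zero h'.1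
    intro h0
    have := FractionalIdeal.mul_mem_mul hx hy
    rw [h0, FractionalIdeal.mem_zero_iff] at this
    exact mul_ne_zero hx0 hy0 this
  refine ⟨hne, fun x hx hx0 => (hle hx).resolve_left hx0, fun p => ?_⟩
  obtain ⟨x, hx, hx0, hp⟩ := h.2.2 p
  obtain ⟨y, hy, hy0, hp'⟩ := h'.2.2 p
  exact ⟨x * y, FractionalIdeal.mul_mem_mul hx hy, mul_ne_zero hx0 hy0, by
    rw [T.ψ_mul _ _ hx0 hy0]; simp [hp, hp']⟩

variable (T) in
theorem hasDiv_span (a : F) (ha : a ≠ 0) :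
    T.HasDiv (FractionalIdeal.spanSingleton R⁰ a) (T.ψ F a) := by
  refine ⟨FractionalIdeal.spanSingleton_ne_zero_iff.2 ha, ?_, fun p =>
    ⟨a, FractionalIdeal.mem_spanSingleton_self _ _, ha, rfl⟩⟩
  intro x hx hx0
  obtain ⟨r, rfl⟩ := (FractionalIdeal.mem_spanSingleton _).1 hx
  have hr : r ≠ 0 := by rintro rfl; simp at hx0
  rw [T.ψ_smul r hr a ha]
  have := T.nonneg r hr
  simpa using this

variable (T) in
theorem hasDiv_one : T.HasDiv (1 : FractionalIdeal R⁰ F) 0 := by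
  have := T.hasDiv_span (1 : F) one_ne_zero
  rwa [T.ψ_one, FractionalIdeal.spanSingleton_one] at this

theorem HasDiv.pow {I : FractionalIdeal R⁰ F} {δ : P →₀ ℤ} (h : T.HasDiv I δ) (k : ℕ) :
    T.HasDiv (I ^ k) (k • δ) := by
  induction k with
  | zero => simpa using T.hasDiv_one
  | succ k ih => rw [pow_succ, succ_nsmul]; exact ih.mul h

theorem HasDiv.divZPow {I : FractionalIdeal R⁰ F} {δ : P →₀ ℤ} (h : T.HasDiv I δ) (m : ℤ) :
    T.HasDiv (divZPow R F I m) (m • δ) := by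
  rw [_root_.divZPow]
  split_ifs with hm
  · convert (h.pow m.toNat).closure using 1
    obtain ⟨k, rfl⟩ := Int.eq_ofNat_of_zero_le hm
    simp
  · convert (h.one_div'.pow (-m).toNat).closure using 1
    obtain ⟨k, hk⟩ := Int.eq_ofNat_of_zero_le (a := -m) (by omega)
    rw [hk]
    have : m = -(k : ℤ) := by omega
    subst this
    simp

theorem HasDiv.prod {ι : Type} (s : Finset ι) {I : ι → FractionalIdeal R⁰ F} {δ : ι → P →₀ ℤ}
    (h : ∀ i, T.HasDiv (I i) (δ i)) : T.HasDiv (∏ i ∈ s, I i) (∑ i ∈ s, δ i) := by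
  classical
  induction s using Finset.induction_on with
  | empty => simpa using T.hasDiv_one
  | insert a s ha ih => rw [Finset.prod_insert ha, Finset.sum_insert ha]; exact (h a).mul ih

variable (T) in
theorem exists_hasDiv (I : FractionalIdeal R⁰ F) (hI : I ≠ 0) : ∃ δ, T.HasDiv I δ := by
  classical
  obtain ⟨x0, hx0, hx0'⟩ := exists_mem_ne_zero hI
  obtain ⟨d, hd, hdI⟩ := I.2
  have hd0 : d ≠ 0 := nonZeroDivisors.ne_zero hd
  have hlow : ∀ x ∈ I, x ≠ 0 → - T.φ d ≤ T.ψ F x := by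
    intro x hx h0
    obtain ⟨r, hr⟩ := hdI x hx
    have : 0 ≤ T.ψ F (d • x) := by
      rw [T.ψ_nonneg_iff _ (by simp [Algebra.smul_def, hd0, h0])]
      exact ⟨r, hr⟩
    rw [T.ψ_smul d hd0 x h0] at this
    exact neg_le_iff_add_nonneg'.2 this
  have hmin : ∀ p, ∃ m : ℤ, (∃ x ∈ I, x ≠ 0 ∧ T.ψ F x p = m) ∧
      ∀ z : ℤ, (∃ x ∈ I, x ≠ 0 ∧ T.ψ F x p = z) → m ≤ z := by
    intro p
    refine Int.exists_least_of_bdd ⟨(- T.φ d) p, ?_⟩ ⟨_, x0, hx0, hx0', rfl⟩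
    rintro z ⟨x, hx, h0, rfl⟩
    exact hlow x hx h0 p
  choose m hm1 hm2 using hmin
  refine ⟨Finsupp.onFinset ((T.φ d).support ∪ (T.ψ F x0).support) m ?_, hI, ?_, ?_⟩
  · intro p hp
    by_contra hn
    simp only [Finset.mem_union, Finsupp.mem_support_iff, not_or, not_not] at hn
    apply hp
    apply le_antisymm
    · rw [← hn.2]; exact hm2 p _ ⟨x0, hx0, hx0', rfl⟩
    · obtain ⟨x, hx, h0, h1⟩ := hm1 p
      have := hlow x hx h0 p
      rw [h1] at this
      simpa [hn.1] using this
  · intro x hx h0 p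
    exact hm2 p _ ⟨x, hx, h0, rfl⟩
  · intro p
    exact hm1 p

theorem sameDivisorClass_iff {I J : FractionalIdeal R⁰ F} {δ ε : P →₀ ℤ} (h : T.HasDiv I δ)
    (h' : T.HasDiv J ε) : SameDivisorClass R F I J ↔ ∃ a : F, a ≠ 0 ∧ δ = T.ψ F a + ε := by
  refine exists_congr fun a => and_congr_right fun ha => ?_
  have h2 := (T.hasDiv_span a ha).mul h'
  constructor
  · intro he
    have h3 := h.closure
    rw [he] at h3
    exact h3.unique h2.closure
  · intro he
    rw [h.closure_eq, h2.closure_eq, he]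

end DivTheory

theorem GoodRing.classGroup {R : Type} [CommRing R] [IsDomain R] {r : ℕ} (h : GoodRing R (Fin r))
    (F : Type) [Field F] [Algebra R F] [IsFractionRing R F] :
    DivisorClassGroupIsFreeOfRank R F r := by
  obtain ⟨P, T, q, h1, h2⟩ := h
  have hq : ∀ v : Fin r → ℤ, T.HasDiv (∏ i, divZPow R F (T.M F (q i)) (v i)) (∑ i, v i • q i) :=
    fun v => DivTheory.HasDiv.prod _ fun i => (T.hasDiv_M _).divZPow _
  refine ⟨fun i => T.M F (q i), fun i => (T.hasDiv_M _).1, ?_, ?_⟩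
  · intro J hJ
    obtain ⟨δ, hδ⟩ := T.exists_hasDiv J hJ
    obtain ⟨m, x, y, hx, hy, he⟩ := h1 δ
    refine ⟨m, (DivTheory.sameDivisorClass_iff (hq m) hδ).2
      ⟨algebraMap R F y / algebraMap R F x, div_ne_zero (by simpa using hy) (by simpa using hx), ?_⟩⟩
    rw [T.ψ_div _ _ hy hx, he]
    abel
  · intro v w hvw
    obtain ⟨a, ha, he⟩ := (DivTheory.sameDivisorClass_iff (hq v) (hq w)).1 hvw
    obtain ⟨⟨x, y⟩, hx, hy, rfl⟩ := DivTheory.exists_repr (R := R) F a ha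
    simp only at hx hy he
    rw [T.ψ_div _ _ hx hy] at he
    have := h2 (v - w) x y hx hy (by
      simp only [Pi.sub_apply, sub_smul, Finset.sum_sub_distrib]
      rw [he]; abel)
    exact sub_eq_zero.1 this

theorem GoodRing.congr {R R' : Type} [CommRing R] [CommRing R'] (e : R ≃+* R') {ι ι' : Type}
    [Fintype ι] [Fintype ι'] (f : ι ≃ ι') (h : GoodRing R ι) : GoodRing R' ι' := by
  obtain ⟨P, T, q, h1, h2⟩ := h
  have hne : ∀ x : R', x ≠ 0 → e.symm x ≠ 0 := fun x hx => by simpa using hx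
  refine ⟨P, ⟨fun x => T.φ (e.symm x), ?_, ?_, ?_⟩, fun i => q (f.symm i), ?_, ?_⟩
  · intro x y hx hy
    rw [map_mul, T.map_mul _ _ (hne x hx) (hne y hy)]
  · intro x y hx hy
    rw [← T.dvd_iff _ _ (hne x hx) (hne y hy)]
    exact (map_dvd_iff e.symm).symm
  · intro δ hδ p
    obtain ⟨x, hx, h3, h4⟩ := T.exists_eq δ hδ p
    exact ⟨e x, by simpa using hx, by simpa using h3, by simpa using h4⟩
  · intro δ
    obtain ⟨m, x, y, hx, hy, h⟩ := h1 δ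
    refine ⟨fun i => m (f.symm i), e x, e y, by simpa using hx, by simpa using hy, ?_⟩
    rw [h, ← Equiv.sum_comp f.symm (fun i => m i • q i)]
    simp
  · intro m x y hx hy h
    have := h2 (fun i => m (f i)) _ _ (hne x hx) (hne y hy) (by
      rw [← Equiv.sum_comp f.symm]
      simpa using h)
    funext i
    simpa using congrFun this (f.symm i)

section UFD

variable (R : Type) [CommRing R] [IsDomain R] [UniqueFactorizationMonoid R]

theorem goodRing_of_ufd : GoodRing R (Fin 0) := by
  classical
  let _ : StrongNormalizationMonoid R := UniqueFactorizationMonoid.strongNormalizationMonoid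
  let P := {p : R // Irreducible p ∧ normalize p = p}
  let nf : R → Multiset R := UniqueFactorizationMonoid.normalizedFactors
  have hP : ∀ x p, p ∈ nf x → Irreducible p ∧ normalize p = p := fun x p hp =>
    ⟨UniqueFactorizationMonoid.irreducible_of_normalized_factor p hp,
      UniqueFactorizationMonoid.normalize_normalized_factor p hp⟩
  let φ : R → P →₀ ℤ := fun x =>
    Finsupp.onFinset ((nf x).toFinset.subtype (fun p => Irreducible p ∧ normalize p = p)) (fun p => ((nf x).count p.1 : ℤ)) (by
      intro p hp
      rw [Finset.mem_subtype, Multiset.mem_toFinset]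
      by_contra hn
      exact hp (by simp [Multiset.count_eq_zero_of_notMem hn]))
  have hφ : ∀ x p, φ x p = ((nf x).count p.1 : ℤ) := fun x p => rfl
  have hmul : ∀ x y, x ≠ 0 → y ≠ 0 → φ (x * y) = φ x + φ y := by
    intro x y hx hy
    ext p
    simp only [hφ, nf, Finsupp.add_apply,
      UniqueFactorizationMonoid.normalizedFactors_mul hx hy, Multiset.count_add, Nat.cast_add]
  have hone : φ 1 = 0 := by
    ext p; simp [hφ, nf]
  have hsurj : ∀ f : P →₀ ℕ, ∃ x, x ≠ 0 ∧ φ x = f.mapRange (Nat.cast : ℕ → ℤ) (by simp) := by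
    intro f
    induction f using Finsupp.induction_linear with
    | zero => exact ⟨1, one_ne_zero, by simp [hone]⟩
    | add f g hf hg =>
      obtain ⟨x, hx, h1⟩ := hf
      obtain ⟨y, hy, h2⟩ := hg
      refine ⟨x * y, mul_ne_zero hx hy, ?_⟩
      rw [hmul x y hx hy, h1, h2, ← Finsupp.mapRange_add]
      simp
    | single p k =>
      refine ⟨p.1 ^ k, pow_ne_zero _ p.2.1.ne_zero, ?_⟩
      ext q
      simp only [hφ, nf, UniqueFactorizationMonoid.normalizedFactors_pow,
        UniqueFactorizationMonoid.normalizedFactors_irreducible p.2.1, p.2.2,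
        Finsupp.mapRange_apply]
      rw [Multiset.count_nsmul, Multiset.count_singleton, Finsupp.single_apply]
      by_cases h : p = q
      · subst h; simp
      · rw [if_neg h, if_neg (fun h' => h (Subtype.ext h'.symm))]; simp
  have hsurj' : ∀ δ : P →₀ ℤ, ∃ x y, x ≠ 0 ∧ y ≠ 0 ∧ δ = φ x - φ y := by
    intro δ
    obtain ⟨x, hx, h1⟩ := hsurj (δ.mapRange Int.toNat (by simp))
    obtain ⟨y, hy, h2⟩ := hsurj (δ.mapRange (fun z => (-z).toNat) (by simp))
    refine ⟨x, y, hx, hy, ?_⟩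
    ext p
    rw [h1, h2]
    simp only [Finsupp.sub_apply, Finsupp.mapRange_apply]
    omega
  refine ⟨P, ⟨φ, hmul, ?_, ?_⟩, fun i => i.elim0, ?_, ?_⟩
  · intro x y hx hy
    rw [UniqueFactorizationMonoid.dvd_iff_normalizedFactors_le_normalizedFactors hx hy,
      Multiset.le_iff_count]
    constructor
    · intro h p
      simp only [hφ]
      exact_mod_cast h p.1
    · intro h p
      by_cases hp : p ∈ nf x
      · have := h ⟨p, hP x p hp⟩
        simp only [hφ] at this
        exact_mod_cast this
      · exact (Multiset.count_eq_zero_of_notMem hp).le.trans (Nat.zero_le _)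
  · intro δ hδ p
    obtain ⟨x, hx, h1⟩ := hsurj (δ.mapRange Int.toNat (by simp))
    have : φ x = δ := by
      ext p
      rw [h1]
      have := hδ p
      simp only [Finsupp.mapRange_apply, Finsupp.coe_zero, Pi.zero_apply] at this ⊢
      omega
    exact ⟨x, hx, this.ge, by rw [this]⟩
  · intro δ
    obtain ⟨x, y, hx, hy, h⟩ := hsurj' δ
    exact ⟨0, x, y, hx, hy, by simpa using h⟩
  · intro m x y _ _ _
    exact Subsingleton.elim _ _

end UFD

/-- `i : B → A` is the localization away from `a` (for domains). -/
def IsAway {B A : Type} [CommRing B] [CommRing A] (i : B →+* A) (a : B) : Prop :=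
  Function.Injective i ∧ IsUnit (i a) ∧ ∀ t, ∃ (N : ℕ) (b : B), i a ^ N * t = i b

namespace DivTheory

variable {B : Type} [CommRing B] [IsDomain B] {P : Type} (T : DivTheory B P)

theorem map_pow (x : B) (hx : x ≠ 0) (k : ℕ) : T.φ (x ^ k) = k • T.φ x := by
  induction k with
  | zero => simp [T.map_one]
  | succ k ih => rw [pow_succ, T.map_mul _ _ (pow_ne_zero _ hx) hx, ih, succ_nsmul]

theorem map_unit (x : B) (hx : IsUnit x) : T.φ x = 0 := by
  apply le_antisymm
  · rw [← T.map_one]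
    exact (T.dvd_iff x 1 hx.ne_zero one_ne_zero).1 hx.dvd
  · exact T.nonneg x hx.ne_zero

theorem map_prime (a : B) (ha : Prime a) : ∃ p, T.φ a = Finsupp.single p 1 := by
  classical
  have h0 := T.nonneg a ha.ne_zero
  have : ∃ p, T.φ a p ≠ 0 := by
    by_contra! h
    have h1 : T.φ a = 0 := Finsupp.ext h
    apply ha.not_isUnit
    rw [isUnit_iff_dvd_one, T.dvd_iff a 1 ha.ne_zero one_ne_zero, h1, T.map_one]
  obtain ⟨p, hp⟩ := this
  have hp1 : 1 ≤ T.φ a p := by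
    have := h0 p
    simp at this
    omega
  have hle : Finsupp.single p 1 ≤ T.φ a := by
    intro q
    rw [Finsupp.single_apply]
    split_ifs with h
    · rw [← h]; exact hp1
    · exact h0 q
  obtain ⟨g, hg, hg1, hg2⟩ := T.exists_eq (T.φ a - Finsupp.single p 1) (sub_nonneg.2 hle) p
  have hng : ¬ a ∣ g := by
    intro h
    have := (T.dvd_iff a g ha.ne_zero hg).1 h p
    rw [hg2] at this
    simp at this
  refine ⟨p, le_antisymm ?_ hle⟩
  intro q
  obtain ⟨f, hf, hf1, hf2⟩ := T.exists_eq (Finsupp.single p 1) (by simp) q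
  have : a ∣ f * g := by
    rw [T.dvd_iff _ _ ha.ne_zero (mul_ne_zero hf hg), T.map_mul _ _ hf hg]
    have := add_le_add hf1 hg1
    simpa using this
  have hd := (ha.dvd_or_dvd this).resolve_right hng
  rw [← hf2]
  exact (T.dvd_iff _ _ ha.ne_zero hf).1 hd q

end DivTheory

/-- Localization at a prime element. -/
theorem GoodRing.away {B A : Type} [CommRing B] [CommRing A] [IsDomain B] [IsDomain A]
    {i : B →+* A} {a : B} (ha : Prime a) (hi : IsAway i a) {ι : Type} [Fintype ι]
    (h : GoodRing B ι) : GoodRing A ι := by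
  classical
  obtain ⟨P, T, q, h1, h2⟩ := h
  obtain ⟨inj, hu, hs⟩ := hi
  obtain ⟨p0, hp0⟩ := T.map_prime a ha
  have ha0 := ha.ne_zero
  choose N num hnum using hs
  have hnum0 : ∀ t, t ≠ 0 → num t ≠ 0 := by
    intro t ht h
    have := hnum t
    rw [h, map_zero] at this
    exact mul_ne_zero (pow_ne_zero _ hu.ne_zero) ht this
  let ρ : (P →₀ ℤ) →+ ({p // p ≠ p0} →₀ ℤ) := Finsupp.subtypeDomainAddMonoidHom
  have hρ : ∀ f p, ρ f p = f p.1 := fun f p => rfl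
  have hρa : ρ (T.φ a) = 0 := by
    ext p
    rw [hρ, hp0, Finsupp.single_apply, if_neg (fun h => p.2 h.symm)]; rfl
  have hρpow : ∀ k b, b ≠ 0 → ρ (T.φ (a ^ k * b)) = ρ (T.φ b) := by
    intro k b hb
    rw [T.map_mul _ _ (pow_ne_zero _ ha0) hb, T.map_pow _ ha0, map_add, map_nsmul, hρa]
    simp
  let φ : A → {p // p ≠ p0} →₀ ℤ := fun t => ρ (T.φ (num t))
  have hφ : ∀ t b k, b ≠ 0 → i a ^ k * t = i b → φ t = ρ (T.φ b) := by
    intro t b k hb h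
    have ht : t ≠ 0 := by
      rintro rfl
      rw [mul_zero] at h
      exact hb ((map_eq_zero_iff i inj).1 h.symm)
    have h3 : a ^ k * num t = a ^ (N t) * b := by
      apply inj
      rw [map_mul, map_mul, map_pow, map_pow, ← h, ← hnum]
      ring
    change ρ (T.φ (num t)) = _
    rw [← hρpow k _ (hnum0 t ht), h3, hρpow _ _ hb]
  have hφi : ∀ b, b ≠ 0 → φ (i b) = ρ (T.φ b) := fun b hb => hφ _ b 0 hb (by simp)
  have key : ∀ b c, b ≠ 0 → c ≠ 0 → ρ (T.φ b) ≤ ρ (T.φ c) → ∃ k, b ∣ a ^ k * c := by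
    intro b c hb hc h
    refine ⟨(T.φ b p0).toNat, ?_⟩
    rw [T.dvd_iff _ _ hb (mul_ne_zero (pow_ne_zero _ ha0) hc),
      T.map_mul _ _ (pow_ne_zero _ ha0) hc, T.map_pow _ ha0, hp0]
    intro p
    by_cases hp : p = p0
    · subst hp
      have h3 := T.nonneg c hc p
      simp at h3 ⊢
      have := le_max_left (T.φ b p) 0
      linarith
    · have := h ⟨p, hp⟩
      rw [hρ, hρ] at this
      simp [Ne.symm hp]
      exact this
  have hext : ∀ δ : {p // p ≠ p0} →₀ ℤ, ρ (δ.extendDomain) = δ := fun δ =>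
    Finsupp.subtypeDomain_extendDomain δ
  refine ⟨_, ⟨φ, ?_, ?_, ?_⟩, fun j => ρ (q j), ?_, ?_⟩
  · intro x y hx hy
    rw [hφ (x * y) (num x * num y) (N x + N y) (mul_ne_zero (hnum0 x hx) (hnum0 y hy))
      (by rw [map_mul, ← hnum, ← hnum]; ring),
      T.map_mul _ _ (hnum0 x hx) (hnum0 y hy), map_add]
  · intro x y hx hy
    constructor
    · rintro ⟨z, rfl⟩
      have hz : z ≠ 0 := by rintro rfl; simp at hy
      rw [hφ (x * z) (num x * num z) (N x + N z) (mul_ne_zero (hnum0 x hx) (hnum0 z hz))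
        (by rw [map_mul, ← hnum, ← hnum]; ring),
        T.map_mul _ _ (hnum0 x hx) (hnum0 z hz), map_add]
      have : 0 ≤ ρ (T.φ (num z)) := fun p => T.nonneg _ (hnum0 z hz) p.1
      exact le_add_of_nonneg_right this
    · intro h
      obtain ⟨k, hk⟩ := key _ _ (hnum0 x hx) (hnum0 y hy) h
      have h3 := map_dvd i hk
      rw [map_mul, map_pow, ← hnum, ← hnum] at h3
      have hu' : ∀ m t, Associated (i a ^ m * t) t := fun m t =>
        (associated_isUnit_mul_left_iff (hu.pow m)).2 (Associated.refl _)
      rw [(hu' _ _).dvd_iff_dvd_left] at h3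
      exact (hu' (N y) y).dvd_iff_dvd_right.1 ((hu' k _).dvd_iff_dvd_right.1 h3)
  · intro δ hδ p
    obtain ⟨x, hx, h3, h4⟩ := T.exists_eq δ.extendDomain (by
      intro p'
      by_cases hp : p' ≠ p0
      · have := hδ ⟨p', hp⟩
        have h5 := congrArg (fun f => f ⟨p', hp⟩) (hext δ)
        simp only [hρ] at h5
        rw [h5]; exact this
      · have := not_not.1 hp; simp [Finsupp.extendDomain, this]) p.1
    refine ⟨i x, by simpa [map_eq_zero_iff i inj] using hx, ?_, ?_⟩
    · rw [hφi x hx, ← hext δ]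
      exact fun p => h3 p.1
    · rw [hφi x hx]
      conv_rhs => rw [← hext δ]
      exact h4
  · intro δ
    obtain ⟨m, x, y, hx, hy, he⟩ := h1 δ.extendDomain
    refine ⟨m, i x, i y, by simpa [map_eq_zero_iff i inj] using hx,
      by simpa [map_eq_zero_iff i inj] using hy, ?_⟩
    change δ = ∑ j, m j • ρ (q j) + φ (i x) - φ (i y)
    rw [hφi x hx, hφi y hy, ← hext δ, he]
    simp [map_sum]
  · intro m x y hx hy he
    have hx' := hnum0 x hx
    have hy' := hnum0 y hy
    set k : ℤ := (∑ j, m j • q j - (T.φ (num x) - T.φ (num y))) p0 with hk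
    have h3 : ∑ j, m j • q j - (T.φ (num x) - T.φ (num y)) = k • T.φ a := by
      ext p
      by_cases hp : p = p0
      · subst hp; rw [← hk, hp0]; simp
      · have h4 : ρ (∑ j, m j • q j - (T.φ (num x) - T.φ (num y))) = 0 := by
          rw [map_sub, map_sub, map_sum, sub_eq_zero]
          simpa [φ] using he
        have h5 := congrArg (fun f => f ⟨p, hp⟩) h4
        simp only [hρ] at h5
        rw [h5, hp0]
        simp [Ne.symm hp]
    refine h2 m (a ^ k.toNat * num x) (a ^ (-k).toNat * num y)
      (mul_ne_zero (pow_ne_zero _ ha0) hx') (mul_ne_zero (pow_ne_zero _ ha0) hy') ?_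
    rw [T.map_mul _ _ (pow_ne_zero _ ha0) hx', T.map_mul _ _ (pow_ne_zero _ ha0) hy',
      T.map_pow _ ha0, T.map_pow _ ha0, sub_eq_iff_eq_add.1 h3]
    have h6 : k • T.φ a = k.toNat • T.φ a - (-k).toNat • T.φ a := by
      rw [← natCast_zsmul, ← natCast_zsmul, ← sub_smul]
      congr 1
      omega
    rw [h6]
    abel

theorem exists_val {C : Type} [CommRing C] [IsDomain C] [IsNoetherianRing C] (Q : Ideal C)
    [hQ : Q.IsPrime] (a : C) (haQ : a ∈ Q)
    (hloc : ∀ q ∈ Q, ∃ u, u ∉ Q ∧ a ∣ u * q) :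
    ∃ v : C → ℕ, ∀ x, x ≠ 0 → ∃ u y, u ∉ Q ∧ y ∉ Q ∧ u * x = a ^ v x * y := by
  have key : ∀ x : C, x ≠ 0 → ∃ (k : ℕ) (u y : C), u ∉ Q ∧ y ∉ Q ∧ u * x = a ^ k * y := by
    intro x hx
    by_contra! hcon
    have hall : ∀ k : ℕ, ∃ u y, u ∉ Q ∧ u * x = a ^ k * y := by
      intro k
      induction k with
      | zero => exact ⟨1, x, fun h => hQ.ne_top ((Ideal.eq_top_iff_one _).2 h), by simp⟩
      | succ k ih =>
        obtain ⟨u, y, hu, h⟩ := ih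
        have hy : y ∈ Q := by
          by_contra hy
          exact hcon k u y hu hy h
        obtain ⟨u', hu', z, hz⟩ := hloc y hy
        refine ⟨u' * u, z, fun h => (hQ.mem_or_mem h).elim hu' hu, ?_⟩
        rw [mul_assoc, h, pow_succ, mul_assoc, ← hz]; ring
    let L := Localization.AtPrime Q
    have : IsNoetherianRing L := IsLocalization.isNoetherianRing Q.primeCompl L inferInstance
    have : IsDomain L := IsLocalization.isDomain_localization (Ideal.primeCompl_le_nonZeroDivisors Q)
    have hinj : Function.Injective (algebraMap C L) :=
      IsLocalization.injective L (Ideal.primeCompl_le_nonZeroDivisors Q)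
    have hau : ¬ IsUnit (algebraMap C L a) := by
      rw [IsLocalization.AtPrime.isUnit_to_map_iff L Q]
      exact fun h => h haQ
    obtain ⟨k, hk⟩ := FiniteMultiplicity.of_not_isUnit hau
      (b := algebraMap C L x) (by simpa [map_eq_zero_iff _ hinj] using hx)
    obtain ⟨u, y, hu, h⟩ := hall (k + 1)
    apply hk
    have h2 : IsUnit (algebraMap C L u) :=
      (IsLocalization.AtPrime.isUnit_to_map_iff L Q u).2 hu
    rw [← h2.dvd_mul_left, ← map_mul, h, map_mul, map_pow]
    exact dvd_mul_right _ _
  classical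
  refine ⟨fun x => if h : x = 0 then 0 else (key x h).choose, fun x hx => ?_⟩
  simp only [dif_neg hx]
  exact (key x hx).choose_spec

theorem val_unique {C : Type} [CommRing C] [IsDomain C] (Q : Ideal C)
    [hQ : Q.IsPrime] (a : C) (haQ : a ∈ Q) (ha0 : a ≠ 0) {x u y u' y' : C} {k l : ℕ}
    (hu : u ∉ Q) (hy : y ∉ Q) (h : u * x = a ^ k * y)
    (hu' : u' ∉ Q) (hy' : y' ∉ Q) (h' : u' * x = a ^ l * y') : k = l := by
  have aux : ∀ {x u y u' y' : C} {k l : ℕ}, u ∉ Q → y ∉ Q → u * x = a ^ k * y →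
      u' ∉ Q → y' ∉ Q → u' * x = a ^ l * y' → k < l → False := by
    intro x u y u' y' k l hu hy h hu' hy' h' hkl
    obtain ⟨d, rfl⟩ := Nat.exists_eq_add_of_lt hkl
    have h1 : a ^ k * (u' * y) = a ^ k * (a * (a ^ d * (u * y'))) := by
      calc a ^ k * (u' * y) = u' * (a ^ k * y) := by ring
        _ = u * (u' * x) := by rw [← h]; ring
        _ = _ := by rw [h']; ring
    have h2 := mul_left_cancel₀ (pow_ne_zero _ ha0) h1
    have h3 : u' * y ∈ Q := by rw [h2]; exact Q.mul_mem_right _ haQ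
    exact (hQ.mem_or_mem h3).elim hu' hy
  rcases lt_trichotomy k l with h1 | h1 | h1
  · exact (aux hu hy h hu' hy' h' h1).elim
  · exact h1
  · exact (aux hu' hy' h' hu hy h h1).elim

theorem GoodRing.step {C A : Type} [CommRing C] [CommRing A] [IsDomain C] [IsDomain A]
    [IsNoetherianRing C] {i : C →+* A} {a : C} (ha0 : a ≠ 0) (hi : IsAway i a)
    {J : Type} [Fintype J] (Q : Option J → Ideal C) (hQ : ∀ j, (Q j).IsPrime)
    (haQ : ∀ j, a ∈ Q j)
    (hloc : ∀ j, ∀ q ∈ Q j, ∃ u, u ∉ Q j ∧ a ∣ u * q)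
    (hinter : ∀ x, (∀ j, x ∈ Q j) → a ∣ x)
    (hsep : ∀ j, ∃ w, w ∉ Q j ∧ ∀ k, k ≠ j → w ∈ Q k)
    (hunit : ∀ u, IsUnit (i u) → ∃ k : ℕ, Associated u (a ^ k))
    {ι : Type} [Fintype ι] (h : GoodRing A ι) : GoodRing C (ι ⊕ J) := by
  classical
  obtain ⟨P, T, q, h1, h2⟩ := h
  obtain ⟨inj, hu, hs⟩ := hi
  have hv := fun j => exists_val (hQ := hQ j) (Q j) a (haQ j) (hloc j)
  choose v hv using hv
  have hne : ∀ x, x ≠ 0 → i x ≠ 0 := fun x hx => by simpa [map_eq_zero_iff i inj] using hx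
  have hone : ∀ j, (1 : C) ∉ Q j := fun j h => (hQ j).ne_top ((Ideal.eq_top_iff_one _).2 h)
  have hnm : ∀ j x y, x ∉ Q j → y ∉ Q j → x * y ∉ Q j := fun j x y hx hy h =>
    ((hQ j).mem_or_mem h).elim hx hy
  have huniq : ∀ j x u y k, x ≠ 0 → u ∉ Q j → y ∉ Q j → u * x = a ^ k * y → v j x = k := by
    intro j x u y k hx hu hy h
    obtain ⟨u', y', hu', hy', h'⟩ := hv j x hx
    exact val_unique (hQ := hQ j) (Q j) a (haQ j) ha0 hu' hy' h' hu hy h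
  have hvmul : ∀ j x y, x ≠ 0 → y ≠ 0 → v j (x * y) = v j x + v j y := by
    intro j x y hx hy
    obtain ⟨u, z, hu, hz, h⟩ := hv j x hx
    obtain ⟨u', z', hu', hz', h'⟩ := hv j y hy
    refine huniq j _ (u * u') (z * z') _ (mul_ne_zero hx hy) (hnm _ _ _ hu hu') (hnm _ _ _ hz hz') ?_
    calc u * u' * (x * y) = (u * x) * (u' * y) := by ring
      _ = _ := by rw [h, h', pow_add]; ring
  have hv0 : ∀ j x, x ∉ Q j → v j x = 0 := by
    intro j x hx
    exact huniq j x 1 x 0 (by rintro rfl; exact hx (Q j).zero_mem) (hone j) hx (by simp)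
  have hvpos : ∀ j x, x ≠ 0 → x ∈ Q j → 1 ≤ v j x := by
    intro j x hx hxQ
    obtain ⟨u, z, hu, hz, h⟩ := hv j x hx
    by_contra h0
    have : v j x = 0 := by omega
    rw [this, pow_zero, one_mul] at h
    exact hz (h ▸ (Q j).mul_mem_left _ hxQ)
  have hva : ∀ j k, v j (a ^ k) = k := fun j k =>
    huniq j _ 1 1 k (pow_ne_zero _ ha0) (hone j) (hone j) (by ring)
  have hvak : ∀ j k x, x ≠ 0 → v j (a ^ k * x) = k + v j x := by
    intro j k x hx
    rw [hvmul j _ _ (pow_ne_zero _ ha0) hx, hva]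
  have hdvd : ∀ k x, x ≠ 0 → (∀ j, k ≤ v j x) → a ^ k ∣ x := by
    intro k
    induction k with
    | zero => intro x _ _; simp
    | succ k ih =>
      intro x hx h
      have hmem : ∀ j, x ∈ Q j := by
        intro j
        by_contra hn
        have := h j
        rw [hv0 j x hn] at this
        omega
      obtain ⟨y, rfl⟩ := hinter x hmem
      have hy : y ≠ 0 := by rintro rfl; simp at hx
      rw [pow_succ']
      refine mul_dvd_mul_left _ (ih y hy fun j => ?_)
      have h3 := h j
      have h4 := hvak j 1 y hy
      rw [pow_one] at h4
      omega
  have hφa : ∀ k x, x ≠ 0 → T.φ (i (a ^ k * x)) = T.φ (i x) := by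
    intro k x hx
    rw [map_mul, T.map_mul _ _ (hne _ (pow_ne_zero _ ha0)) (hne _ hx), map_pow,
      T.map_unit _ (hu.pow k), zero_add]
  have hnum : ∀ t, t ≠ 0 → ∃ x, x ≠ 0 ∧ T.φ (i x) = T.φ t := by
    intro t ht
    obtain ⟨N, x, hx⟩ := hs t
    have hx0 : x ≠ 0 := by
      rintro rfl
      rw [map_zero] at hx
      exact mul_ne_zero (pow_ne_zero _ hu.ne_zero) ht hx
    refine ⟨x, hx0, ?_⟩
    rw [← hx, T.map_mul _ _ (pow_ne_zero _ hu.ne_zero) ht, T.map_unit _ (hu.pow _), zero_add]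
  let fin : (Option J → ℤ) → (Option J →₀ ℤ) := fun f => Finsupp.equivFunOnFinite.symm f
  let φ : C → (Option J ⊕ P) →₀ ℤ := fun x =>
    Finsupp.sumElim (fin fun j => (v j x : ℤ)) (T.φ (i x))
  have hφl : ∀ x j, φ x (Sum.inl j) = v j x := fun x j => rfl
  have hφr : ∀ x p, φ x (Sum.inr p) = T.φ (i x) p := fun x p => rfl
  let q' : ι ⊕ J → (Option J ⊕ P) →₀ ℤ :=
    Sum.elim (fun k => Finsupp.sumElim 0 (q k)) (fun j => Finsupp.single (Sum.inl (some j)) 1)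
  have hsum : ∀ m : ι ⊕ J → ℤ, ∑ k, m k • q' k = Finsupp.sumElim
      (fin fun j => j.elim 0 (fun j => m (Sum.inr j))) (∑ k, m (Sum.inl k) • q k) := by
    intro m
    rw [Fintype.sum_sum_type]
    ext (j | p)
    · rcases j with _ | j
      · simp [q', fin, Finsupp.finset_sum_apply]
      · simp [q', fin, Finsupp.finset_sum_apply, Finsupp.single_apply]
    · simp [q', fin, Finsupp.finset_sum_apply]
  refine ⟨_, ⟨φ, ?_, ?_, ?_⟩, q', ?_, ?_⟩
  · intro x y hx hy
    ext (j | p)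
    · rw [Finsupp.add_apply, hφl, hφl, hφl, hvmul j x y hx hy]; push_cast; rfl
    · rw [Finsupp.add_apply, hφr, hφr, hφr, map_mul, T.map_mul _ _ (hne x hx) (hne y hy)]; rfl
  · intro x y hx hy
    constructor
    · rintro ⟨z, rfl⟩
      have hz : z ≠ 0 := by rintro rfl; simp at hy
      rintro (j | p)
      · rw [hφl, hφl, hvmul j x z hx hz]; push_cast; omega
      · rw [hφr, hφr, map_mul]
        exact (T.dvd_iff _ _ (hne x hx) (mul_ne_zero (hne x hx) (hne z hz))).1 (dvd_mul_right _ _) p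
    · intro hle
      have h3 : i x ∣ i y := (T.dvd_iff _ _ (hne x hx) (hne y hy)).2 fun p => hle (Sum.inr p)
      obtain ⟨t, ht⟩ := h3
      obtain ⟨N, z, hz⟩ := hs t
      have h4 : a ^ N * y = x * z := by
        apply inj
        rw [map_mul, map_mul, map_pow, ht, ← hz]; ring
      have hz0 : z ≠ 0 := by
        rintro rfl
        rw [mul_zero] at h4
        exact mul_ne_zero (pow_ne_zero _ ha0) hy h4
      obtain ⟨z', rfl⟩ := hdvd N z hz0 (by
        intro j
        have h5 := hvak j N y hy
        rw [h4, hvmul j x z hx hz0] at h5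
        have h6 := hle (Sum.inl j)
        rw [hφl, hφl] at h6
        omega)
      refine ⟨z', mul_left_cancel₀ (pow_ne_zero N ha0) ?_⟩
      rw [h4]; ring
  · intro δ hδ p
    let δ' : P →₀ ℤ := (Finsupp.sumFinsuppEquivProdFinsupp δ).2
    have hδ' : ∀ p, δ' p = δ (Sum.inr p) := fun p => rfl
    have hδ'0 : 0 ≤ δ' := fun p => hδ (Sum.inr p)
    rcases p with j | p
    · obtain ⟨t, ht, htd⟩ := T.exists_ge δ'
      obtain ⟨x, hx, hxt⟩ := hnum t ht
      obtain ⟨u, y, hu', hy, hxy⟩ := hv j x hx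
      obtain ⟨w, hw, hwk⟩ := hsep j
      have hw0 : w ≠ 0 := by rintro rfl; exact hw (Q j).zero_mem
      have hy0 : y ≠ 0 := by rintro rfl; exact hy (Q j).zero_mem
      have hu0 : u ≠ 0 := by rintro rfl; exact hu' (Q j).zero_mem
      have hyd : δ' ≤ T.φ (i y) := by
        rw [← hφa (v j x) y hy0, ← hxy, map_mul, T.map_mul _ _ (hne _ hu0) (hne _ hx), hxt]
        have := add_le_add (T.nonneg _ (hne _ hu0)) htd
        simpa using this
      let S : ℕ := ∑ k, (δ (Sum.inl k)).toNat
      have hS : ∀ k, (δ (Sum.inl k)).toNat ≤ S := fun k =>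
        Finset.single_le_sum (f := fun k => (δ (Sum.inl k)).toNat)
          (fun _ _ => Nat.zero_le _) (Finset.mem_univ k)
      have hvw : ∀ k, v k (w ^ S) = S * v k w := by
        intro k
        generalize S = S
        induction S with
        | zero => simpa using hv0 k 1 (hone k)
        | succ S ih => rw [pow_succ, hvmul k _ _ (pow_ne_zero _ hw0) hw0, ih]; ring
      have hwy0 : w ^ S * y ≠ 0 := mul_ne_zero (pow_ne_zero _ hw0) hy0
      have hvj : v j (a ^ (δ (Sum.inl j)).toNat * (w ^ S * y)) = (δ (Sum.inl j)).toNat := by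
        rw [hvak _ _ _ hwy0, hvmul _ _ _ (pow_ne_zero _ hw0) hy0, hvw, hv0 j w hw, hv0 j y hy]
        simp
      have hδj := hδ (Sum.inl j)
      simp only [Finsupp.coe_zero, Pi.zero_apply] at hδj
      refine ⟨a ^ (δ (Sum.inl j)).toNat * (w ^ S * y), mul_ne_zero (pow_ne_zero _ ha0) hwy0, ?_, ?_⟩
      · rintro (k | p)
        · rw [hφl]
          by_cases hkj : k = j
          · subst hkj
            rw [hvj]; omega
          · rw [hvak _ _ _ hwy0, hvmul _ _ _ (pow_ne_zero _ hw0) hy0, hvw]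
            have h5 := hvpos k w hw0 (hwk k hkj)
            have h6 := hS k
            have h7 : S ≤ S * v k w := Nat.le_mul_of_pos_right _ h5
            push_cast
            have h8 : (S : ℤ) ≤ S * v k w := by exact_mod_cast h7
            omega
        · rw [hφr, hφa _ _ hwy0, map_mul, T.map_mul _ _ (hne _ (pow_ne_zero _ hw0)) (hne _ hy0)]
          have h5 := T.nonneg _ (hne _ (pow_ne_zero S hw0)) p
          have h6 := hyd p
          rw [hδ'] at h6
          simp only [Finsupp.add_apply, Finsupp.coe_zero, Pi.zero_apply] at h5 ⊢
          omega
      · rw [hφl, hvj]; omega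
    · obtain ⟨t, ht, htd, htp⟩ := T.exists_eq δ' hδ'0 p
      obtain ⟨x, hx, hxt⟩ := hnum t ht
      let S : ℕ := ∑ k, (δ (Sum.inl k)).toNat
      have hS : ∀ k, (δ (Sum.inl k)).toNat ≤ S := fun k =>
        Finset.single_le_sum (f := fun k => (δ (Sum.inl k)).toNat)
          (fun _ _ => Nat.zero_le _) (Finset.mem_univ k)
      refine ⟨a ^ S * x, mul_ne_zero (pow_ne_zero _ ha0) hx, ?_, ?_⟩
      · rintro (k | p)
        · rw [hφl, hvak _ _ _ hx]
          have := hS k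
          push_cast
          omega
        · rw [hφr, hφa _ _ hx, hxt]; exact htd p
      · rw [hφr, hφa _ _ hx, hxt]; exact htp
  · intro δ
    let δ' : P →₀ ℤ := (Finsupp.sumFinsuppEquivProdFinsupp δ).2
    have hδ' : ∀ p, δ' p = δ (Sum.inr p) := fun p => rfl
    obtain ⟨m, s, t, hs0, ht0, he⟩ := h1 δ'
    obtain ⟨x, hx, hxs⟩ := hnum s hs0
    obtain ⟨y, hy, hyt⟩ := hnum t ht0
    let c : ℤ := δ (Sum.inl none) - v none x + v none y
    refine ⟨Sum.elim m (fun j => δ (Sum.inl (some j)) - v (some j) x + v (some j) y - c),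
      a ^ c.toNat * x, a ^ (-c).toNat * y, mul_ne_zero (pow_ne_zero _ ha0) hx,
      mul_ne_zero (pow_ne_zero _ ha0) hy, ?_⟩
    rw [hsum]
    change δ = _ + φ _ - φ _
    ext (j | p)
    · rw [Finsupp.sub_apply, Finsupp.add_apply, hφl, hφl, hvak _ _ _ hx, hvak _ _ _ hy]
      rcases j with _ | j
      · simp [fin, c]
        omega
      · simp [fin]
        omega
    · rw [Finsupp.sub_apply, Finsupp.add_apply, hφr, hφr, hφa _ _ hx, hφa _ _ hy, ← hδ', he,
        hxs, hyt]
      simp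
  · intro m x y hx hy he
    rw [hsum] at he
    change _ = φ x - φ y at he
    have hr : ∑ k, m (Sum.inl k) • q k = T.φ (i x) - T.φ (i y) := by
      ext p
      have := congrArg (fun f => f (Sum.inr p)) he
      simp only [Finsupp.sub_apply, hφr, Finsupp.sumElim_inr] at this
      rw [this]; rfl
    have hm := h2 _ _ _ (hne x hx) (hne y hy) hr
    have hml : ∀ k, m (Sum.inl k) = 0 := fun k => congrFun hm k
    have hxy : T.φ (i x) = T.φ (i y) := by
      rw [← sub_eq_zero, ← hr]; simp [hml]
    obtain ⟨t, ht⟩ := (T.dvd_iff _ _ (hne y hy) (hne x hx)).2 hxy.ge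
    have ht0 : t ≠ 0 := by
      rintro rfl
      rw [mul_zero] at ht
      exact hne x hx ht
    have htu : IsUnit t := by
      obtain ⟨t', ht'⟩ := (T.dvd_iff _ _ (hne x hx) (hne y hy)).2 hxy.le
      refine IsUnit.of_mul_eq_one t' (mul_left_cancel₀ (hne y hy) ?_)
      rw [← mul_assoc, ← ht, ← ht', mul_one]
    obtain ⟨N, z, hz⟩ := hs t
    have hzu : IsUnit (i z) := by rw [← hz]; exact (hu.pow N).mul htu
    obtain ⟨k, hk⟩ := hunit z hzu
    have hz0 : z ≠ 0 := by rintro rfl; simp at hzu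
    have hvz : ∀ j, v j z = k := by
      intro j
      obtain ⟨ε, hε⟩ := hk
      have hε' : (ε : C) ∉ Q j := fun h => hone j (by
        have := (Q j).mul_mem_right (↑ε⁻¹) h
        simpa using this)
      exact huniq j z ε 1 k hz0 hε' (hone j) (by rw [← hε]; ring)
    have h4 : a ^ N * x = y * z := by
      apply inj
      rw [map_mul, map_mul, map_pow, ht, ← hz]; ring
    have h5 : ∀ j, (N : ℤ) + v j x = v j y + k := by
      intro j
      have := hvak j N x hx
      rw [h4, hvmul j y z hy hz0, hvz] at this
      exact_mod_cast this.symm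
    have h6 : ∀ j : Option J, (j.elim 0 (fun j => m (Sum.inr j)) : ℤ) = v j x - v j y := by
      intro j
      have := congrArg (fun f => f (Sum.inl j)) he
      simp only [Finsupp.sub_apply, hφl] at this
      rw [← this]; rfl
    funext k'
    rcases k' with k' | j
    · exact hml k'
    · have h7 := h6 none
      have h8 := h6 (some j)
      have h9 := h5 none
      have h10 := h5 (some j)
      simp only [Option.elim] at h7 h8
      simp only [Pi.zero_apply]
      omega

/-- The linear form with coefficients `a`. -/
noncomputable def lin {D : Type} [CommRing D] {τ : Type} [Fintype τ] (a : τ → D) :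
    MvPolynomial τ D := ∑ j, C (a j) * X j

theorem lin_split {D : Type} [CommRing D] {τ : Type} [Fintype τ] [DecidableEq τ] (a : τ → D)
    (i : τ) : lin a = C (a i) * X i + ∑ j : {j // j ≠ i}, C (a j.1) * X j.1 := by
  rw [lin, ← Finset.add_sum_erase _ _ (Finset.mem_univ i)]
  congr 1
  refine (Finset.sum_subtype (Finset.univ.erase i) (p := fun j => j ≠ i) ?_
    (fun j => (C (a j) * X j : MvPolynomial τ D)))
  intro j; simp

theorem red_exists {D : Type} [CommRing D] {τ : Type} [Fintype τ] [DecidableEq τ] (a : τ → D)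
    (i : τ) (h : MvPolynomial τ D) : ∃ (N : ℕ) (r : MvPolynomial {j // j ≠ i} D),
      C (a i) ^ N * h - rename Subtype.val r ∈ Ideal.span {lin a} := by
  induction h using MvPolynomial.induction_on with
  | C c => exact ⟨0, C c, by simp⟩
  | add p q hp hq =>
    obtain ⟨N, r, h1⟩ := hp
    obtain ⟨M, s, h2⟩ := hq
    refine ⟨N + M, C (a i) ^ M * r + C (a i) ^ N * s, ?_⟩
    have := Ideal.add_mem _ (Ideal.mul_mem_left _ (C (a i) ^ M) h1)
      (Ideal.mul_mem_left _ (C (a i) ^ N) h2)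
    convert this using 1
    simp only [map_add, map_mul, map_pow, rename_C]
    ring
  | mul_X p j hp =>
    obtain ⟨N, r, h1⟩ := hp
    by_cases hj : j = i
    · subst hj
      refine ⟨N + 1, - r * ∑ k : {k // k ≠ j}, C (a k.1) * X k, ?_⟩
      have h2 : lin a ∈ Ideal.span {lin a} := Ideal.mem_span_singleton_self _
      have := Ideal.add_mem _ (Ideal.mul_mem_left _ (C (a j) * X j) h1)
        (Ideal.mul_mem_left _ (rename Subtype.val r) h2)
      convert this using 1
      rw [lin_split a j]
      simp only [map_neg, map_mul, map_sum, rename_C, rename_X]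
      ring
    · refine ⟨N, r * X ⟨j, hj⟩, ?_⟩
      have := Ideal.mul_mem_left _ (X j) h1
      convert this using 1
      simp only [map_mul, rename_X]
      ring

theorem psi_exists {D : Type} [CommRing D] [IsDomain D] {τ : Type} [Fintype τ] [DecidableEq τ]
    (a : τ → D) (i : τ) (ha : a i ≠ 0) :
    ∃ Ψ : MvPolynomial τ D →+* Localization.Away (C (a i) : MvPolynomial {j // j ≠ i} D),
      (∀ r : MvPolynomial {j // j ≠ i} D, Ψ (rename Subtype.val r) = algebraMap _ _ r) ∧ Ψ (lin a) = 0 ∧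
      ∀ h, Ψ h = 0 ↔ ∃ N : ℕ, C (a i) ^ N * h ∈ Ideal.span {lin a} := by
  set B := MvPolynomial {j // j ≠ i} D with hB
  set A := Localization.Away (C (a i) : B) with hA
  have hne : (C (a i) : B) ≠ 0 := by simpa using ha
  have hle : Submonoid.powers (C (a i) : B) ≤ B⁰ := powers_le_nonZeroDivisors_of_noZeroDivisors hne
  have hinj : Function.Injective (algebraMap B A) := IsLocalization.injective A hle
  have hu : IsUnit (algebraMap B A (C (a i))) := IsLocalization.Away.algebraMap_isUnit _
  obtain ⟨u, hu'⟩ := hu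
  let v : τ → A := fun j => if h : j = i then
      - (↑(u⁻¹) * ∑ k : {k // k ≠ i}, algebraMap B A (C (a k.1) * X k))
    else algebraMap B A (X ⟨j, h⟩)
  let Ψ : MvPolynomial τ D →+* A := eval₂Hom ((algebraMap B A).comp C) v
  have h1 : ∀ r : B, Ψ (rename Subtype.val r) = algebraMap B A r := by
    intro r
    have : (Ψ.comp (rename (Subtype.val : {j // j ≠ i} → τ) : B →ₐ[D] _).toRingHom) =
        algebraMap B A := by
      apply MvPolynomial.ringHom_ext
      · intro r; simp [Ψ]
      · intro j; simp [Ψ, v, j.2]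
    exact congrArg (fun f : B →+* A => f r) this
  have h2 : Ψ (lin a) = 0 := by
    have e : (∑ j : {j // j ≠ i}, C (a j.1) * X j.1 : MvPolynomial τ D) =
      rename Subtype.val (∑ j : {j // j ≠ i}, C (a j.1) * X j : B) := by simp
    rw [lin_split a i, e, map_add, h1, map_mul]
    have e2 : Ψ (C (a i)) = u := by simp [Ψ, hu']
    have e3 : Ψ (X i) = - (↑(u⁻¹) * ∑ k : {k // k ≠ i}, algebraMap B A (C (a k.1) * X k)) := by
      simp [Ψ, v]
    rw [e2, e3, map_sum, mul_neg, ← mul_assoc, Units.mul_inv, one_mul, neg_add_cancel]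
  refine ⟨Ψ, h1, h2, fun h => ⟨fun h0 => ?_, ?_⟩⟩
  · obtain ⟨N, r, hr⟩ := red_exists a i h
    obtain ⟨t, ht⟩ := Ideal.mem_span_singleton.1 hr
    have := congrArg Ψ ht
    rw [map_sub, map_mul, map_mul, h0, h2, h1] at this
    have hr0 : r = 0 := hinj (by simpa using this)
    refine ⟨N, ?_⟩
    simpa [hr0] using hr
  · rintro ⟨N, hN⟩
    obtain ⟨t, ht⟩ := Ideal.mem_span_singleton.1 hN
    have := congrArg Ψ ht
    rw [map_mul, map_mul, h2, zero_mul, map_pow] at this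
    have e2 : Ψ (C (a i)) = u := by simp [Ψ, hu']
    rw [e2] at this
    exact ((u.isUnit.pow N).mul_right_eq_zero).1 this

/-- The contraction of `f` from the localisation at `a i` is a prime ideal. -/
theorem sat_isPrime {D : Type} [CommRing D] [IsDomain D] {τ : Type} [Fintype τ] [DecidableEq τ]
    (a : τ → D) (i : τ) (ha : a i ≠ 0) : ∃ 𝔭 : Ideal (MvPolynomial τ D), 𝔭.IsPrime ∧
      ∀ h, h ∈ 𝔭 ↔ ∃ N : ℕ, C (a i) ^ N * h ∈ Ideal.span {lin a} := by
  obtain ⟨Ψ, -, -, h⟩ := psi_exists a i ha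
  have hne : (C (a i) : MvPolynomial {j // j ≠ i} D) ≠ 0 := by simpa using ha
  have : IsDomain (Localization.Away (C (a i) : MvPolynomial {j // j ≠ i} D)) :=
    IsLocalization.isDomain_localization (powers_le_nonZeroDivisors_of_noZeroDivisors hne)
  exact ⟨RingHom.ker Ψ, RingHom.ker_isPrime Ψ, fun g => h g⟩

theorem coeff_lin {D : Type} [CommRing D] {τ : Type} [Fintype τ] [DecidableEq τ]
    (a : τ → D) (i : τ) : coeff (Finsupp.single i 1) (lin a) = a i := by
  rw [lin, coeff_sum]
  simp only [coeff_C_mul, coeff_X]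
  simp [Finsupp.single_left_inj]

theorem lin_prime {D : Type} [CommRing D] [IsDomain D] {τ : Type} [Fintype τ] [DecidableEq τ]
    (a : τ → D) (i j : τ) (ha : Prime (a i)) (hj : ¬ a i ∣ a j) : Prime (lin a) := by
  have hC : Prime (C (a i) : MvPolynomial τ D) := (MvPolynomial.prime_C_iff τ).2 ha
  have hnd : ¬ (C (a i) : MvPolynomial τ D) ∣ lin a := by
    intro h
    rw [C_dvd_iff_dvd_coeff] at h
    exact hj (by simpa [coeff_lin] using h (Finsupp.single j 1))
  obtain ⟨𝔭, hp, hmem⟩ := sat_isPrime a i ha.ne_zero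
  have h0 : lin a ≠ 0 := fun h => hnd (h ▸ dvd_zero _)
  rw [← Ideal.span_singleton_prime h0]
  have key : ∀ (N : ℕ) h, C (a i) ^ N * h ∈ Ideal.span {lin a} → h ∈ Ideal.span {lin a} := by
    intro N
    induction N with
    | zero => intro h; simp
    | succ N ih =>
      intro h hh
      rw [pow_succ, mul_assoc] at hh
      have := ih _ hh
      obtain ⟨t, ht⟩ := Ideal.mem_span_singleton.1 this
      obtain ⟨s, rfl⟩ := (hC.dvd_or_dvd (Dvd.intro _ ht)).resolve_left hnd
      rw [Ideal.mem_span_singleton]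
      refine ⟨s, mul_left_cancel₀ hC.ne_zero ?_⟩
      rw [ht]; ring
  have : Ideal.span {lin a} = 𝔭 := by
    ext h
    rw [hmem]
    exact ⟨fun hh => ⟨0, by simpa using hh⟩, fun ⟨N, hN⟩ => key N h hN⟩
  rw [this]; exact hp

theorem GoodRing.ext_step {D E : Type} [CommRing D] [IsDomain D] [CommRing E] [IsDomain E]
    [IsNoetherianRing E] (y : Fin 3 → D) (h0 : Prime (y 0))
    (π : MvPolynomial (Fin 3) D →+* E) (hπ : Function.Surjective π)
    (hk : RingHom.ker π = Ideal.span {lin y})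
    {J : Type} [Fintype J] (Q : Option J → Ideal E)
    (hQ : ∀ j, (Q j).IsPrime) (haQ : ∀ j, π (C (y 0)) ∈ Q j)
    (hloc : ∀ j, ∀ q ∈ Q j, ∃ u, u ∉ Q j ∧ π (C (y 0)) ∣ u * q)
    (hinter : ∀ x, (∀ j, x ∈ Q j) → π (C (y 0)) ∣ x)
    (hsep : ∀ j, ∃ w, w ∉ Q j ∧ ∀ k, k ≠ j → w ∈ Q k)
    {ι : Type} [Fintype ι] (h : GoodRing (MvPolynomial {j : Fin 3 // j ≠ 0} D) ι) :
    GoodRing E (ι ⊕ J) := by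
  set B := MvPolynomial {j : Fin 3 // j ≠ 0} D with hB
  obtain ⟨Ψ, hΨ1, hΨ2, hΨ3⟩ := psi_exists y 0 h0.ne_zero
  set A := Localization.Away (C (y 0) : B) with hA
  have hp : Prime (C (y 0) : B) := (MvPolynomial.prime_C_iff _).2 h0
  have hle : Submonoid.powers (C (y 0) : B) ≤ B⁰ :=
    powers_le_nonZeroDivisors_of_noZeroDivisors hp.ne_zero
  have hAd : IsDomain A := IsLocalization.isDomain_localization hle
  have hinj : Function.Injective (algebraMap B A) := IsLocalization.injective A hle
  have hu : IsUnit (algebraMap B A (C (y 0))) := IsLocalization.Away.algebraMap_isUnit _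
  have hsurj : ∀ t : A, ∃ (N : ℕ) (b : B),
      algebraMap B A (C (y 0)) ^ N * t = algebraMap B A b := by
    intro t
    obtain ⟨N, b, hb⟩ := IsLocalization.Away.surj (C (y 0) : B) t
    refine ⟨N, b, ?_⟩
    rw [← hb]; ring
  have hiB : IsAway (algebraMap B A) (C (y 0)) := ⟨hinj, hu, hsurj⟩
  have hkle : RingHom.ker π ≤ RingHom.ker Ψ := by
    rw [hk, Ideal.span_singleton_le_iff_mem]
    exact hΨ2
  let i : E →+* A := π.liftOfSurjective hπ ⟨Ψ, hkle⟩
  have hi : ∀ h, i (π h) = Ψ h := fun h =>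
    RingHom.liftOfRightInverse_comp_apply _ _ _ ⟨Ψ, hkle⟩ h
  have hΨC : Ψ (C (y 0)) = algebraMap B A (C (y 0)) := by
    have := hΨ1 (C (y 0)); rwa [rename_C] at this
  set α := π (C (y 0)) with hα
  have hiα : i α = algebraMap B A (C (y 0)) := by rw [hα, hi, hΨC]
  have hα0 : α ≠ 0 := by
    intro h
    rw [h, map_zero] at hiα
    rw [← hiα] at hu
    exact not_isUnit_zero hu
  have hiE : IsAway i α := by
    refine ⟨?_, by rw [hiα]; exact hu, ?_⟩
    · rw [injective_iff_map_eq_zero]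
      intro x hx
      obtain ⟨g, rfl⟩ := hπ x
      rw [hi, hΨ3] at hx
      obtain ⟨N, hN⟩ := hx
      rw [← hk, RingHom.mem_ker, map_mul, map_pow] at hN
      exact (mul_eq_zero.1 hN).resolve_left (pow_ne_zero _ hα0)
    · intro t
      obtain ⟨N, b, hb⟩ := hsurj t
      refine ⟨N, π (rename Subtype.val b), ?_⟩
      rw [hiα, hb, hi, hΨ1]
  have hαu : ¬ IsUnit α := fun hu' =>
    (hQ none).ne_top (Ideal.eq_top_of_isUnit_mem _ (haQ none) hu')
  refine GoodRing.step hα0 hiE Q hQ haQ hloc hinter hsep ?_ (GoodRing.away hp hiB h)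
  intro u huu
  obtain ⟨g, rfl⟩ := hπ u
  obtain ⟨N, r, hr⟩ := red_exists y 0 g
  rw [← hk, RingHom.mem_ker, map_sub, map_mul, map_pow, sub_eq_zero] at hr
  have hru : IsUnit (algebraMap B A r) := by
    rw [← hΨ1, ← hi, ← hr, map_mul, map_pow, hiα]
    exact (hu.pow N).mul huu
  obtain ⟨s, hs⟩ := hru.exists_right_inv
  obtain ⟨M, b, hb⟩ := hsurj s
  have hrb : r * b = C (y 0) ^ M := by
    apply hinj
    rw [map_mul, ← hb, map_pow]
    linear_combination (algebraMap B A (C (y 0))) ^ M * hs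
  obtain ⟨k, -, ε, hε⟩ := (dvd_prime_pow hp M).1 (Dvd.intro _ hrb)
  have hε2 := congrArg (fun t => π (rename Subtype.val t)) hε
  simp only [map_mul, map_pow, rename_C] at hε2
  have hε3 : IsUnit (π (rename Subtype.val (ε : B))) :=
    (ε.isUnit.map (rename (Subtype.val : {j : Fin 3 // j ≠ 0} → Fin 3))).map π
  rw [← hr] at hε2
  rcases le_or_gt N k with hNk | hNk
  · refine ⟨k - N, hε3.unit, ?_⟩
    apply mul_left_cancel₀ (pow_ne_zero N hα0)
    rw [← pow_add, Nat.add_sub_cancel' hNk, IsUnit.unit_spec, ← mul_assoc, hε2]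
  · exfalso
    apply hαu
    have : α ^ k * (α ^ (N - k) * (π g * π (rename Subtype.val (ε : B)))) = α ^ k * 1 := by
      rw [← mul_assoc, ← pow_add, Nat.add_sub_cancel' hNk.le, mul_one, ← mul_assoc, hε2]
    have := mul_left_cancel₀ (pow_ne_zero k hα0) this
    have := IsUnit.of_mul_eq_one _ this
    exact (isUnit_pow_iff (by omega)).1 this

theorem map_lin {D D' : Type} [CommRing D] [CommRing D'] {τ : Type} [Fintype τ] (g : D →+* D')
    (y : τ → D) : map g (lin y) = lin (fun i => g (y i)) := by
  simp [lin, map_sum]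

theorem ext_dvd_iff {D E : Type} [CommRing D] [CommRing E] (y : Fin 3 → D)
    (π : MvPolynomial (Fin 3) D →+* E) (hπ : Function.Surjective π)
    (hk : RingHom.ker π = Ideal.span {lin y}) (a : D) (g : MvPolynomial (Fin 3) D) :
    π (C a) ∣ π g ↔ map (Ideal.Quotient.mk (Ideal.span {a})) g ∈
      Ideal.span {lin (fun i => Ideal.Quotient.mk (Ideal.span {a}) (y i))} := by
  set q := Ideal.Quotient.mk (Ideal.span {a}) with hq
  have hqa : q a = 0 := by
    rw [hq, Ideal.Quotient.eq_zero_iff_mem]; exact Ideal.mem_span_singleton_self a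
  constructor
  · rintro ⟨e, he⟩
    obtain ⟨e', rfl⟩ := hπ e
    rw [← map_mul, ← sub_eq_zero, ← map_sub, ← RingHom.mem_ker, hk,
      Ideal.mem_span_singleton] at he
    obtain ⟨t, ht⟩ := he
    have := congrArg (map q) ht
    rw [map_sub, map_mul, map_mul, map_C, hqa, C_0, zero_mul, sub_zero, map_lin] at this
    rw [this]
    exact Ideal.mul_mem_right _ _ (Ideal.mem_span_singleton_self _)
  · intro h
    obtain ⟨t, ht⟩ := Ideal.mem_span_singleton.1 h
    obtain ⟨t', rfl⟩ := map_surjective q Ideal.Quotient.mk_surjective t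
    rw [← map_lin, ← map_mul, ← sub_eq_zero, ← map_sub, ← RingHom.mem_ker,
      MvPolynomial.ker_map, hq, Ideal.mk_ker, Ideal.map_span, Set.image_singleton,
      Ideal.mem_span_singleton] at ht
    obtain ⟨s, hs⟩ := ht
    refine ⟨π s, ?_⟩
    have hl : π (lin y) = 0 := by
      rw [← RingHom.mem_ker, hk]; exact Ideal.mem_span_singleton_self _
    rw [← map_mul, ← hs, map_sub, map_mul, hl, zero_mul, sub_zero]

theorem lin_not_dvd_C {D : Type} [CommRing D] {τ : Type} [Fintype τ] (y : τ → D)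
    (a : D) (ha : a ≠ 0) : C a ∉ Ideal.span {lin y} := by
  intro h
  obtain ⟨t, ht⟩ := Ideal.mem_span_singleton.1 h
  have := congrArg (eval (fun _ => 0)) ht
  simp [lin, map_sum] at this
  exact ha this

theorem GoodRing.ext_two {D E : Type} [CommRing D] [IsDomain D] [CommRing E] [IsDomain E]
    [IsNoetherianRing E] (y : Fin 3 → D) (h0 : Prime (y 0)) (h01 : ¬ y 0 ∣ y 1)
    (hp : (Ideal.span {y 0, y 1}).IsPrime) (h2 : y 2 ∉ Ideal.span {y 0, y 1})
    (π : MvPolynomial (Fin 3) D →+* E) (hπ : Function.Surjective π)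
    (hk : RingHom.ker π = Ideal.span {lin y})
    {ι : Type} [Fintype ι] (h : GoodRing (MvPolynomial {j : Fin 3 // j ≠ 0} D) ι) :
    GoodRing E (ι ⊕ Empty) := by
  have hI : (Ideal.span {y 0}).IsPrime := (Ideal.span_singleton_prime h0.ne_zero).2 h0
  set q := Ideal.Quotient.mk (Ideal.span {y 0}) with hq
  have hq0 : ∀ d, q d = 0 ↔ y 0 ∣ d := fun d => by
    rw [hq, Ideal.Quotient.eq_zero_iff_mem, Ideal.mem_span_singleton]
  have hq1 : ∀ d, q (y 1) ∣ q d ↔ d ∈ Ideal.span {y 0, y 1} := by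
    intro d
    rw [Ideal.mem_span_pair]
    constructor
    · rintro ⟨t, ht⟩
      obtain ⟨t, rfl⟩ := Ideal.Quotient.mk_surjective t
      rw [← map_mul, ← sub_eq_zero, ← map_sub, hq0] at ht
      obtain ⟨s, hs⟩ := ht
      exact ⟨s, t, by linear_combination - hs⟩
    · rintro ⟨s, t, rfl⟩
      rw [map_add, map_mul, (hq0 (y 0)).2 dvd_rfl, mul_zero, zero_add, map_mul]
      exact Dvd.intro_left _ rfl
  have hpr : Prime (q (y 1)) := by
    refine ⟨by rwa [Ne, hq0], ?_, ?_⟩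
    · intro hu
      exact h2 ((hq1 _).1 hu.dvd)
    · intro u v huv
      obtain ⟨u, rfl⟩ := Ideal.Quotient.mk_surjective u
      obtain ⟨v, rfl⟩ := Ideal.Quotient.mk_surjective v
      rw [← map_mul, hq1] at huv
      rw [hq1, hq1]
      exact hp.mem_or_mem huv
  have hlin : Prime (lin (fun i => q (y i))) :=
    lin_prime (fun i => q (y i)) 1 2 hpr (by rwa [hq1])
  have hα : Prime (π (C (y 0))) := by
    refine ⟨?_, ?_, ?_⟩
    · intro h
      rw [← RingHom.mem_ker, hk] at h
      exact lin_not_dvd_C _ _ h0.ne_zero h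
    · intro hu
      have := hu.dvd (a := π 1)
      rw [ext_dvd_iff y π hπ hk, map_one, Ideal.mem_span_singleton] at this
      exact hlin.not_dvd_one this
    · intro u v huv
      obtain ⟨u, rfl⟩ := hπ u
      obtain ⟨v, rfl⟩ := hπ v
      rw [← map_mul, ext_dvd_iff y π hπ hk, map_mul, Ideal.mem_span_singleton] at huv
      rw [ext_dvd_iff y π hπ hk, ext_dvd_iff y π hπ hk, Ideal.mem_span_singleton,
        Ideal.mem_span_singleton]
      exact hlin.dvd_or_dvd huv
  refine GoodRing.ext_step y h0 π hπ hk (J := Empty) (fun _ => Ideal.span {π (C (y 0))})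
    (fun _ => (Ideal.span_singleton_prime hα.ne_zero).2 hα)
    (fun _ => Ideal.mem_span_singleton_self _) ?_ ?_ ?_ h
  · intro _ r hr
    refine ⟨1, ?_, ?_⟩
    · rw [Ideal.mem_span_singleton]; exact hα.not_dvd_one
    · rw [one_mul]; exact Ideal.mem_span_singleton.1 hr
  · intro x hx
    exact Ideal.mem_span_singleton.1 (hx none)
  · intro j
    refine ⟨1, ?_, ?_⟩
    · rw [Ideal.mem_span_singleton]; exact hα.not_dvd_one
    · intro k hk'
      exact (hk' (Subsingleton.elim _ _)).elim

theorem mem_map_C_triple {D τ : Type} [CommRing D] (a b c : D) (g : MvPolynomial τ D)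
    (h : g ∈ Ideal.map (C : D →+* MvPolynomial τ D) (Ideal.span {a, b, c})) :
    ∃ p q r, g = C a * p + C b * q + C c * r := by
  rw [Ideal.map_span, Set.image_insert_eq, Set.image_pair, Ideal.mem_span_insert] at h
  obtain ⟨p, z, hz, rfl⟩ := h
  obtain ⟨q, r, rfl⟩ := Ideal.mem_span_pair.1 hz
  exact ⟨p, q, r, by ring⟩

theorem claim_three {S D : Type} [CommRing S] [IsDomain S] [CommRing D] [IsDomain D]
    (y x : Fin 3 → D) (h0 : Prime (y 0)) (h01 : ¬ y 0 ∣ y 1)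
    (hxy : x 0 * y 0 + x 1 * y 1 + x 2 * y 2 = 0) (ρ : D →+* S)
    (hρ : RingHom.ker ρ = Ideal.span {y 0, y 1, y 2}) (hx1 : ρ (x 1) ≠ 0)
    (h4 : ∀ d, y 2 * d ∈ Ideal.span {y 0, y 1} → d ∈ Ideal.span {y 0, y 1, x 2})
    (G α β γ : MvPolynomial (Fin 3) D)
    (h : C (y 1) * G = C (y 0) * α + (C (x 1) * X 2 - C (x 2) * X 1) * β + lin y * γ) :
    ∃ α' β' γ', G = C (y 0) * α' + (C (x 1) * X 2 - C (x 2) * X 1) * β' + lin y * γ' := by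
  have hf : lin y = C (y 0) * X 0 + C (y 1) * X 1 + C (y 2) * X 2 := by
    simp [lin, Fin.sum_univ_three]
  have hxy' : (C (x 0) * C (y 0) + C (x 1) * C (y 1) + C (x 2) * C (y 2) :
      MvPolynomial (Fin 3) D) = 0 := by
    simp only [← map_mul, ← map_add, hxy, map_zero]
  have hy : ∀ i, ρ (y i) = 0 := by
    intro i
    rw [← RingHom.mem_ker, hρ]
    apply Ideal.subset_span
    fin_cases i <;> simp
  have hw : map ρ (C (x 1) * X 2 - C (x 2) * X 1 : MvPolynomial (Fin 3) D) ≠ 0 := by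
    intro h
    have := congrArg (coeff (Finsupp.single 2 1)) h
    simp [coeff_C_mul, coeff_X, Finsupp.single_left_inj] at this
    exact hx1 this
  have hlin0 : map ρ (lin y) = 0 := by
    rw [map_lin]; simp [lin, hy]
  have hβ : β ∈ Ideal.map (C : D →+* MvPolynomial (Fin 3) D) (Ideal.span {y 0, y 1, y 2}) := by
    rw [← hρ, ← MvPolynomial.ker_map, RingHom.mem_ker]
    have := congrArg (map ρ) h
    rw [map_mul, map_add, map_add, map_mul, map_mul, map_mul, hlin0, map_C, map_C, hy, hy, C_0,
      zero_mul, zero_mul, zero_mul, add_zero, zero_add] at this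
    exact (mul_eq_zero.1 this.symm).resolve_left hw
  obtain ⟨β2, β1, β', rfl⟩ := mem_map_C_triple _ _ _ _ hβ
  have hδ : (C (x 1) * X 2 - C (x 2) * X 1) * β' + X 2 * γ ∈
      Ideal.map (C : D →+* MvPolynomial (Fin 3) D) (Ideal.span {y 0, y 1, x 2}) := by
    rw [MvPolynomial.mem_map_C_iff]
    intro m
    apply h4
    rw [← coeff_C_mul]
    revert m
    rw [← MvPolynomial.mem_map_C_iff, Ideal.map_span, Set.image_pair, Ideal.mem_span_pair]
    refine ⟨- (α + (C (x 1) * X 2 - C (x 2) * X 1) * β2 + X 0 * γ),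
      G - (C (x 1) * X 2 - C (x 2) * X 1) * β1 - X 1 * γ, ?_⟩
    rw [hf] at h
    linear_combination h
  have hγ : C (x 1) * β' + γ ∈
      Ideal.map (C : D →+* MvPolynomial (Fin 3) D) (Ideal.span {y 0, y 1, x 2}) := by
    have h1 : X 2 * (C (x 1) * β' + γ) ∈
        Ideal.map (C : D →+* MvPolynomial (Fin 3) D) (Ideal.span {y 0, y 1, x 2}) := by
      have h2 : (C (x 2) : MvPolynomial (Fin 3) D) ∈
          Ideal.map (C : D →+* MvPolynomial (Fin 3) D) (Ideal.span {y 0, y 1, x 2}) :=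
        Ideal.mem_map_of_mem _ (Ideal.subset_span (by simp))
      have := Ideal.add_mem _ hδ (Ideal.mul_mem_left _ (X 1 * β') h2)
      convert this using 1
      ring
    rw [MvPolynomial.mem_map_C_iff] at h1 ⊢
    intro m
    have := h1 (Finsupp.single 2 1 + m)
    rwa [coeff_X_mul] at this
  obtain ⟨γ2, γ1, H, hH⟩ := mem_map_C_triple _ _ _ _ hγ
  have hp : Prime (C (y 0) : MvPolynomial (Fin 3) D) := (MvPolynomial.prime_C_iff _).2 h0
  have hnd : ¬ (C (y 0) : MvPolynomial (Fin 3) D) ∣ C (y 1) := by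
    rw [C_dvd_iff_dvd_coeff]
    intro h
    apply h01
    simpa using h 0
  have hdvd : (C (y 0) : MvPolynomial (Fin 3) D) ∣ C (y 1) *
      (G - (C (x 1) * X 2 - C (x 2) * X 1) * (β1 - H) - lin y * γ1) := by
    refine ⟨α + (C (x 1) * X 2 - C (x 2) * X 1) * β2 + lin y * γ2 +
      (C (x 0) * X 1 - C (x 1) * X 0) * β' + (C (x 2) * X 0 - C (x 0) * X 2) * H, ?_⟩
    have hγ' : γ = C (y 0) * γ2 + C (y 1) * γ1 + C (x 2) * H - C (x 1) * β' := by
      linear_combination hH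
    rw [hγ'] at h
    rw [mul_sub, mul_sub, h, hf]
    linear_combination (X 2 * H - X 1 * β') * hxy'
  obtain ⟨t, ht⟩ := (hp.dvd_or_dvd hdvd).resolve_left hnd
  exact ⟨t, β1 - H, γ1, by linear_combination ht⟩

theorem GoodRing.ext_three {S D E : Type} [CommRing S] [IsDomain S] [CommRing D] [IsDomain D]
    [CommRing E] [IsDomain E] [IsNoetherianRing E]
    (y x : Fin 3 → D) (h0 : Prime (y 0)) (h01 : ¬ y 0 ∣ y 1)
    (hxy : x 0 * y 0 + x 1 * y 1 + x 2 * y 2 = 0) (ρ : D →+* S)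
    (hρ : RingHom.ker ρ = Ideal.span {y 0, y 1, y 2}) (hx1 : ρ (x 1) ≠ 0)
    (h4 : ∀ d, y 2 * d ∈ Ideal.span {y 0, y 1} → d ∈ Ideal.span {y 0, y 1, x 2})
    (π : MvPolynomial (Fin 3) D →+* E) (hπ : Function.Surjective π)
    (hk : RingHom.ker π = Ideal.span {lin y})
    {ι : Type} [Fintype ι] (h : GoodRing (MvPolynomial {j : Fin 3 // j ≠ 0} D) ι) :
    GoodRing E (ι ⊕ Unit) := by
  have hf : lin y = C (y 0) * X 0 + C (y 1) * X 1 + C (y 2) * X 2 := by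
    simp [lin, Fin.sum_univ_three]
  have hxy' : (C (x 0) * C (y 0) + C (x 1) * C (y 1) + C (x 2) * C (y 2) :
      MvPolynomial (Fin 3) D) = 0 := by
    simp only [← map_mul, ← map_add, hxy, map_zero]
  have hy : ∀ i, ρ (y i) = 0 := by
    intro i
    rw [← RingHom.mem_ker, hρ]
    apply Ideal.subset_span
    fin_cases i <;> simp
  have hl : π (lin y) = 0 := by
    rw [← RingHom.mem_ker, hk]; exact Ideal.mem_span_singleton_self _
  set w : MvPolynomial (Fin 3) D := C (x 1) * X 2 - C (x 2) * X 1 with hw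
  have hwρ : map ρ w ≠ 0 := by
    intro h
    have := congrArg (coeff (Finsupp.single 2 1)) h
    simp [hw, coeff_C_mul, coeff_X, Finsupp.single_left_inj] at this
    exact hx1 this
  have hlin0 : map ρ (lin y) = 0 := by
    rw [map_lin]; simp [lin, hy]
  have hkle : RingHom.ker π ≤ RingHom.ker (map ρ : MvPolynomial (Fin 3) D →+* _) := by
    rw [hk, Ideal.span_singleton_le_iff_mem]
    exact hlin0
  -- the prime `Q`
  let θ : E →+* MvPolynomial (Fin 3) S := π.liftOfSurjective hπ ⟨map ρ, hkle⟩
  have hθ : ∀ g, θ (π g) = map ρ g := fun g =>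
    RingHom.liftOfRightInverse_comp_apply _ _ _ ⟨map ρ, hkle⟩ g
  -- the identities
  have hwb : π w * π (C (y 1)) = π (C (y 0)) * π (C (x 2) * X 0 - C (x 0) * X 2) := by
    have : w * C (y 1) = C (y 0) * (C (x 2) * X 0 - C (x 0) * X 2) - C (x 2) * lin y := by
      rw [hw, hf]; linear_combination X 2 * hxy'
    rw [← map_mul, this, map_sub, map_mul π (C (x 2)), hl, mul_zero, sub_zero, map_mul]
  have hwc : π w * π (C (y 2)) = π (C (y 0)) * π (C (x 0) * X 1 - C (x 1) * X 0) := by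
    have : w * C (y 2) = C (y 0) * (C (x 0) * X 1 - C (x 1) * X 0) + C (x 1) * lin y := by
      rw [hw, hf]; linear_combination - X 1 * hxy'
    rw [← map_mul, this, map_add, map_mul π (C (x 1)), hl, mul_zero, add_zero, map_mul]
  have hQw : ∀ e, θ e = 0 → π (C (y 0)) ∣ π w * e := by
    intro e he
    obtain ⟨g, rfl⟩ := hπ e
    rw [hθ, ← RingHom.mem_ker, MvPolynomial.ker_map, hρ] at he
    obtain ⟨p, q, r, rfl⟩ := mem_map_C_triple _ _ _ _ he
    refine ⟨π w * π p + π (C (x 2) * X 0 - C (x 0) * X 2) * π q +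
      π (C (x 0) * X 1 - C (x 1) * X 0) * π r, ?_⟩
    rw [map_add, map_add, map_mul π (C (y 0)), map_mul π (C (y 1)), map_mul π (C (y 2))]
    linear_combination π q * hwb + π r * hwc
  -- the prime `P`
  have hI : (Ideal.span {y 0}).IsPrime := (Ideal.span_singleton_prime h0.ne_zero).2 h0
  set q := Ideal.Quotient.mk (Ideal.span {y 0}) with hq
  have hq0 : ∀ d, q d = 0 ↔ y 0 ∣ d := fun d => by
    rw [hq, Ideal.Quotient.eq_zero_iff_mem, Ideal.mem_span_singleton]
  have hq1 : q (y 1) ≠ 0 := by rwa [Ne, hq0]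
  obtain ⟨𝔭, h𝔭, hmem⟩ := sat_isPrime (fun i => q (y i)) 1 hq1
  have hle : RingHom.ker π ≤ 𝔭.comap (map q) := by
    rw [hk, Ideal.span_singleton_le_iff_mem, Ideal.mem_comap, map_lin, hmem]
    exact ⟨0, by simp [Ideal.mem_span_singleton_self]⟩
  have hcp : (𝔭.comap (map q)).IsPrime := Ideal.comap_isPrime _ _
  have hPp : (Ideal.map π (𝔭.comap (map q))).IsPrime := Ideal.map_isPrime_of_surjective hπ hle
  set P := Ideal.map π (𝔭.comap (map q)) with hP
  have hPmem : ∀ e, e ∈ P ↔ ∃ N : ℕ, π (C (y 0)) ∣ π (C (y 1)) ^ N * e := by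
    intro e
    obtain ⟨g, rfl⟩ := hπ e
    have h1 : π g ∈ P ↔ g ∈ 𝔭.comap (map q) := by
      conv_rhs => rw [← sup_eq_left.2 hle, RingHom.ker_eq_comap_bot,
        ← Ideal.comap_map_of_surjective π hπ, Ideal.mem_comap]
    rw [h1, Ideal.mem_comap, hmem]
    refine exists_congr fun N => ?_
    rw [← map_pow π, ← map_mul π, ext_dvd_iff y π hπ hk, map_mul, map_pow, map_C]
  have hbP : π (C (y 1)) ∉ P := by
    intro hb
    obtain ⟨N, hN⟩ := (hPmem _).1 hb
    rw [← pow_succ, ← map_pow π, ext_dvd_iff y π hπ hk, map_pow, map_C, ← map_pow] at hN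
    exact lin_not_dvd_C _ _ (pow_ne_zero _ hq1) hN
  have hPw : ∀ e, e ∈ P → ∃ s t, e = π (C (y 0)) * s + π w * t := by
    have key : ∀ (N : ℕ) e, (∃ s t, π (C (y 1)) ^ N * e = π (C (y 0)) * s + π w * t) →
        ∃ s t, e = π (C (y 0)) * s + π w * t := by
      intro N
      induction N with
      | zero => intro e; simp
      | succ N ih =>
        rintro e ⟨s, t, hst⟩
        apply ih
        obtain ⟨G, rfl⟩ := hπ e
        obtain ⟨s, rfl⟩ := hπ s
        obtain ⟨t, rfl⟩ := hπ t
        have h5 : C (y 1) * (C (y 1) ^ N * G) - (C (y 0) * s + w * t) ∈ RingHom.ker π := by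
          rw [RingHom.mem_ker, map_sub, sub_eq_zero]
          simp only [map_add, map_mul, map_pow]
          rw [← hst]; ring
        rw [hk, Ideal.mem_span_singleton] at h5
        obtain ⟨γ, hγ⟩ := h5
        obtain ⟨s', t', γ', h6⟩ := claim_three y x h0 h01 hxy ρ hρ hx1 h4 (C (y 1) ^ N * G) s t γ
          (by rw [← hw]; linear_combination hγ)
        refine ⟨π s', π t', ?_⟩
        rw [← hw] at h6
        have := congrArg π h6
        rw [map_add, map_mul π (lin y), hl, zero_mul, add_zero] at this
        simpa only [map_add, map_mul, map_pow] using this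
    intro e he
    obtain ⟨N, s, hs⟩ := (hPmem e).1 he
    exact key N e ⟨s, 0, by rw [hs]; ring⟩
  have hwP : π w ∈ P := (hPmem _).2 ⟨1, _, by rw [pow_one, mul_comm, hwb]⟩
  have haP : π (C (y 0)) ∈ P := (hPmem _).2 ⟨0, by simp⟩
  have hQp : (RingHom.ker θ).IsPrime := RingHom.ker_isPrime θ
  have hwQ : π w ∉ RingHom.ker θ := by
    rw [RingHom.mem_ker, hθ]; exact hwρ
  have hyQ : ∀ i, π (C (y i)) ∈ RingHom.ker θ := by
    intro i
    rw [RingHom.mem_ker, hθ, map_C, hy, C_0]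
  refine GoodRing.ext_step y h0 π hπ hk (J := Unit)
    (fun j => Option.elim j P (fun _ => RingHom.ker θ)) ?_ ?_ ?_ ?_ ?_ h
  · rintro (_ | _)
    · exact hPp
    · exact hQp
  · rintro (_ | _)
    · exact haP
    · exact hyQ 0
  · rintro (_ | _) e he
    · obtain ⟨N, hN⟩ := (hPmem e).1 he
      exact ⟨π (C (y 1)) ^ N, fun h => hbP (hPp.mem_of_pow_mem N h), hN⟩
    · exact ⟨π w, hwQ, hQw e he⟩
  · intro e he
    have he1 : e ∈ P := he none
    have he2 : e ∈ RingHom.ker θ := he (some ())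
    obtain ⟨s, t, rfl⟩ := hPw e he1
    have h7 : π w * t ∈ RingHom.ker θ :=
      (Ideal.add_mem_iff_right _ (Ideal.mul_mem_right _ _ (hyQ 0))).1 he2
    have h8 := (hQp.mem_or_mem h7).resolve_left hwQ
    exact dvd_add (Dvd.intro _ rfl) (hQw t h8)
  · rintro (_ | _)
    · refine ⟨π (C (y 1)), hbP, ?_⟩
      rintro (_ | _) hk'
      · exact (hk' rfl).elim
      · exact hyQ 1
    · refine ⟨π w, hwQ, ?_⟩
      rintro (_ | _) hk'
      · exact hwP
      · exact (hk' rfl).elim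

/-- `B` is `S[y₀, y₁, y₂]` modulo the relation `∑ xᵢ yᵢ = 0`. -/
def IsExt (S B : Type) [CommRing S] [CommRing B] (x : Fin 3 → S) (y : Fin 3 → B) : Prop :=
  ∃ π : MvPolynomial (Fin 3) S →+* B, Function.Surjective π ∧
    RingHom.ker π = Ideal.span {lin x} ∧ ∀ i, π (X i) = y i

/-- Iterated extensions of a unique factorization domain. -/
def IsPath : ℕ → (B : Type) → [CommRing B] → (Fin 3 → B) → Prop
  | 0, B, _, y => ∃ _ : IsDomain B, IsNoetherianRing B ∧ UniqueFactorizationMonoid B ∧ y = 0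
  | n + 1, B, _, y => ∃ (S : Type) (_ : CommRing S) (x : Fin 3 → S), IsPath n S x ∧ IsExt S B x y

theorem IsPath.noeth : ∀ (n : ℕ) {B : Type} [CommRing B] {y : Fin 3 → B}, IsPath n B y →
    IsNoetherianRing B
  | 0, _, _, _, h => by obtain ⟨_, h, _⟩ := h; exact h
  | n + 1, B, _, y, h => by
    obtain ⟨S, _, x, h1, π, hπ, -, -⟩ := h
    have := IsPath.noeth n h1
    exact isNoetherianRing_of_surjective _ _ π hπ

theorem IsExt.poly {S B : Type} [CommRing S] [CommRing B] {x : Fin 3 → S} {y : Fin 3 → B}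
    (h : IsExt S B x y) (σ : Type) :
    IsExt (MvPolynomial σ S) (MvPolynomial σ B) (fun i => C (x i)) (fun i => C (y i)) := by
  obtain ⟨π, hπ, hk, hX⟩ := h
  let e := commAlgEquiv S (Fin 3) σ
  have he : e (lin (fun i => C (x i))) = C (lin x) := by
    simp [lin, map_sum, e]
  refine ⟨(map π).comp (e : _ ≃ₐ[S] _).toRingEquiv.toRingHom, ?_, ?_, ?_⟩
  · exact (map_surjective π hπ).comp e.surjective
  · ext g
    have h1 : ((map π).comp (e : _ ≃ₐ[S] _).toRingEquiv.toRingHom) g = map π (e g) := rfl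
    rw [RingHom.mem_ker, h1, ← RingHom.mem_ker, MvPolynomial.ker_map, hk, Ideal.map_span,
      Set.image_singleton, Ideal.mem_span_singleton, Ideal.mem_span_singleton, ← he]
    exact map_dvd_iff e
  · intro i
    have h1 : ((map π).comp (e : _ ≃ₐ[S] _).toRingEquiv.toRingHom) (X i) = map π (e (X i)) := rfl
    rw [h1]
    simp [e, hX]

theorem IsPath.poly : ∀ (n : ℕ) {B : Type} [CommRing B] {y : Fin 3 → B}, IsPath n B y →
    ∀ (σ : Type) [Finite σ], IsPath n (MvPolynomial σ B) (fun i => C (y i))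
  | 0, B, _, y, h, σ, _ => by
    obtain ⟨_, _, _, rfl⟩ := h
    exact ⟨inferInstance, inferInstance, inferInstance, by ext; simp⟩
  | n + 1, B, _, y, h, σ, _ => by
    obtain ⟨S, _, x, h1, h2⟩ := h
    exact ⟨MvPolynomial σ S, inferInstance, _, IsPath.poly n h1 σ, h2.poly σ⟩

theorem hom_sub_mem {σ S B : Type} [CommRing S] [CommRing B] (I : Ideal B)
    (φ ψ : MvPolynomial σ S →+* B) (hC : ∀ s, φ (C s) = ψ (C s)) (hX : ∀ j, φ (X j) - ψ (X j) ∈ I)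
    (g : MvPolynomial σ S) : φ g - ψ g ∈ I := by
  have : (Ideal.Quotient.mk I).comp φ = (Ideal.Quotient.mk I).comp ψ := by
    apply MvPolynomial.ringHom_ext
    · intro s; simp [hC]
    · intro j
      simp only [RingHom.comp_apply]
      rw [Ideal.Quotient.eq]; exact hX j
  rw [← Ideal.Quotient.eq]
  exact congrArg (fun f : MvPolynomial σ S →+* B ⧸ I => f g) this

/-- Set a family of variables to zero. -/
noncomputable def killX {S : Type} [CommRing S] (p : Fin 3 → Prop) [DecidablePred p] :
    MvPolynomial (Fin 3) S →+* MvPolynomial (Fin 3) S :=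
  eval₂Hom C (fun j => if p j then 0 else X j)

theorem killX_C {S : Type} [CommRing S] (p : Fin 3 → Prop) [DecidablePred p] (s : S) :
    killX p (C s) = C s := by simp [killX]

theorem killX_X {S : Type} [CommRing S] (p : Fin 3 → Prop) [DecidablePred p] (j : Fin 3) :
    killX p (X j : MvPolynomial (Fin 3) S) = if p j then 0 else X j := by simp [killX]

theorem killX_sub {S : Type} [CommRing S] (p : Fin 3 → Prop) [DecidablePred p]
    (I : Ideal (MvPolynomial (Fin 3) S)) (hI : ∀ j, p j → X j ∈ I) (g : MvPolynomial (Fin 3) S) :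
    g - killX p g ∈ I := by
  refine hom_sub_mem I (RingHom.id _) (killX p) (fun s => (killX_C p s).symm) (fun j => ?_) g
  rw [killX_X]
  split_ifs with h
  · simpa using hI j h
  · simp

theorem killX_lin {S : Type} [CommRing S] (p : Fin 3 → Prop) [DecidablePred p] (x : Fin 3 → S) :
    killX p (lin x) = lin (fun j => if p j then 0 else x j) := by
  simp only [lin, map_sum, map_mul, killX_C, killX_X]
  refine Finset.sum_congr rfl fun j _ => ?_
  split_ifs <;> simp

theorem coeff_lin_mul {S : Type} [CommRing S] (x : Fin 3 → S) (t : MvPolynomial (Fin 3) S)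
    (i : Fin 3) : coeff (Finsupp.single i 1) (lin x * t) = x i * coeff 0 t := by
  rw [lin, Finset.sum_mul, coeff_sum]
  have : ∀ j, coeff (Finsupp.single i 1) (C (x j) * X j * t) =
      if j = i then x i * coeff 0 t else 0 := by
    intro j
    rw [mul_assoc, coeff_C_mul, coeff_X_mul']
    by_cases h : j = i
    · subst h; simp
    · simp [h]
  simp [this]

theorem ext_X_dvd_iff {S B : Type} [CommRing S] [CommRing B] (x : Fin 3 → S)
    (π : MvPolynomial (Fin 3) S →+* B) (hπ : Function.Surjective π)
    (hk : RingHom.ker π = Ideal.span {lin x}) (i : Fin 3) (g : MvPolynomial (Fin 3) S) :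
    π (X i) ∣ π g ↔ lin (fun j => if j = i then 0 else x j) ∣ killX (fun j => j = i) g := by
  have hl : π (lin x) = 0 := by
    rw [← RingHom.mem_ker, hk]; exact Ideal.mem_span_singleton_self _
  constructor
  · rintro ⟨e, he⟩
    obtain ⟨e, rfl⟩ := hπ e
    rw [← map_mul, ← sub_eq_zero, ← map_sub, ← RingHom.mem_ker, hk,
      Ideal.mem_span_singleton] at he
    obtain ⟨t, ht⟩ := he
    have := congrArg (killX (fun j => j = i)) ht
    rw [map_sub, map_mul, killX_X, if_pos rfl, zero_mul, sub_zero, map_mul, killX_lin] at this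
    exact ⟨_, this⟩
  · rintro ⟨t, ht⟩
    have hs : ∀ g : MvPolynomial (Fin 3) S, X i ∣ g - killX (fun j => j = i) g := by
      intro g
      rw [← Ideal.mem_span_singleton]
      apply killX_sub
      rintro j rfl
      exact Ideal.mem_span_singleton_self _
    have h1 : X i ∣ g - lin x * t := by
      have h2 := hs g
      have h3 := (hs (lin x)).mul_right t
      rw [killX_lin] at h3
      have := dvd_sub h2 h3
      rw [ht] at this
      convert this using 1
      ring
    have := map_dvd π h1
    rwa [map_sub, map_mul, hl, zero_mul, sub_zero] at this

/-- The package of primality statements. -/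
structure PR (B : Type) [CommRing B] (y : Fin 3 → B) : Prop where
  dom : IsDomain B
  p0 : Prime (y 0)
  p1 : Prime (y 1)
  n02 : ¬ y 0 ∣ y 2
  n12 : ¬ y 1 ∣ y 2
  n01 : ¬ y 0 ∣ y 1

theorem PR.base {S B : Type} [CommRing S] [IsDomain S] [CommRing B] {y : Fin 3 → B}
    (e : MvPolynomial (Fin 3) S ≃+* B) (he : ∀ i, e (X i) = y i) : PR B y := by
  have hp : ∀ i, Prime (y i) := fun i => by
    rw [← he, MulEquiv.prime_iff]; exact MvPolynomial.X_prime
  have hn : ∀ i j, i ≠ j → ¬ y i ∣ y j := by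
    intro i j hij
    rw [← he, ← he, map_dvd_iff, X_dvd_X]
    tauto
  exact ⟨e.symm.toMulEquiv.isDomain, hp 0, hp 1, hn _ _ (by decide), hn _ _ (by decide),
    hn _ _ (by decide)⟩

theorem PR.step {S B : Type} [CommRing S] [CommRing B] {x : Fin 3 → S} {y : Fin 3 → B}
    (h : IsExt S B x y) (hS : PR S x) : PR B y := by
  obtain ⟨π, hπ, hk, hX⟩ := h
  obtain ⟨_, p0, p1, n02, n12, n01⟩ := hS
  have hf : Prime (lin x) := lin_prime x 0 1 p0 n01
  have hdom : IsDomain B := by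
    have h1 : (RingHom.ker π).IsPrime := by
      rw [hk]; exact (Ideal.span_singleton_prime hf.ne_zero).2 hf
    exact (RingHom.quotientKerEquivOfSurjective hπ).symm.toMulEquiv.isDomain
  have hf0 : Prime (lin (fun j => if j = 0 then 0 else x j)) :=
    lin_prime _ 1 2 (by simpa using p1) (by simpa using n12)
  have hf1 : Prime (lin (fun j => if j = 1 then 0 else x j)) :=
    lin_prime _ 0 2 (by simpa using p0) (by simpa using n02)
  have hprime : ∀ i, ¬ IsUnit (x i) → Prime (lin (fun j => if j = i then 0 else x j)) →
      Prime (y i) := by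
    intro i hi hfi
    rw [← hX i]
    refine ⟨?_, ?_, ?_⟩
    · intro h0
      rw [← RingHom.mem_ker, hk, Ideal.mem_span_singleton] at h0
      obtain ⟨t, ht⟩ := h0
      have := congrArg (coeff (Finsupp.single i 1)) ht
      rw [coeff_lin_mul, coeff_X, if_pos rfl] at this
      exact hi (IsUnit.of_mul_eq_one _ this.symm)
    · intro hu
      have := hu.dvd (a := π 1)
      rw [ext_X_dvd_iff x π hπ hk, map_one] at this
      exact hfi.not_dvd_one this
    · intro u v huv
      obtain ⟨u, rfl⟩ := hπ u
      obtain ⟨v, rfl⟩ := hπ v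
      rw [← map_mul, ext_X_dvd_iff x π hπ hk, map_mul] at huv
      rw [ext_X_dvd_iff x π hπ hk, ext_X_dvd_iff x π hπ hk]
      exact hfi.dvd_or_dvd huv
  have hnd : ∀ i j, j ≠ i → y i ∣ y j → ∃ t, x j * t = 1 ∧ ∀ k, k ≠ i → k ≠ j → x k * t = 0 := by
    intro i j hij hd
    rw [← hX, ← hX, ext_X_dvd_iff x π hπ hk, killX_X, if_neg hij] at hd
    obtain ⟨t, ht⟩ := hd
    refine ⟨coeff 0 t, ?_, ?_⟩
    · have := congrArg (coeff (Finsupp.single j 1)) ht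
      rw [coeff_lin_mul, coeff_X, if_pos rfl, if_neg hij] at this
      exact this.symm
    · intro k hk1 hk2
      have := congrArg (coeff (Finsupp.single k 1)) ht
      rw [coeff_lin_mul, coeff_X, if_neg (by simpa [Finsupp.single_left_inj] using Ne.symm hk2),
        if_neg hk1] at this
      exact this.symm
  refine ⟨hdom, hprime 0 p0.not_isUnit hf0, hprime 1 p1.not_unit hf1, ?_, ?_, ?_⟩
  · intro hd
    obtain ⟨t, h1, h2⟩ := hnd 0 2 (by decide) hd
    have := (mul_eq_zero.1 (h2 1 (by decide) (by decide))).resolve_left p1.ne_zero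
    simp [this] at h1
  · intro hd
    obtain ⟨t, h1, h2⟩ := hnd 1 2 (by decide) hd
    have := (mul_eq_zero.1 (h2 0 (by decide) (by decide))).resolve_left p0.ne_zero
    simp [this] at h1
  · intro hd
    obtain ⟨t, h1, h2⟩ := hnd 0 1 (by decide) hd
    exact p1.not_isUnit (IsUnit.of_mul_eq_one _ h1)

theorem IsExt.equiv {S B : Type} [CommRing S] [CommRing B] {y : Fin 3 → B}
    (h : IsExt S B 0 y) : ∃ e : MvPolynomial (Fin 3) S ≃+* B, ∀ i, e (X i) = y i := by
  obtain ⟨π, hπ, hk, hX⟩ := h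
  have : Function.Injective π := by
    rw [RingHom.injective_iff_ker_eq_bot, hk]
    simp [lin]
  exact ⟨RingEquiv.ofBijective π ⟨this, hπ⟩, hX⟩

theorem IsPath.pr : ∀ (n : ℕ) {B : Type} [CommRing B] {y : Fin 3 → B}, IsPath (n + 1) B y → PR B y
  | 0, B, _, y, h => by
    obtain ⟨S, _, x, h1, h2⟩ := h
    obtain ⟨_, -, -, rfl⟩ := h1
    obtain ⟨e, he⟩ := h2.equiv
    exact PR.base e he
  | n + 1, B, _, y, h => by
    obtain ⟨S, _, x, h1, h2⟩ := h
    exact PR.step h2 (IsPath.pr n h1)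

theorem span_pair_of_equiv {S D : Type} [CommRing S] [IsDomain S] [CommRing D] {y : Fin 3 → D}
    (e : MvPolynomial (Fin 3) S ≃+* D) (he : ∀ i, e (X i) = y i) :
    (Ideal.span {y 0, y 1}).IsPrime ∧ y 2 ∉ Ideal.span {y 0, y 1} := by
  let θ : D →+* MvPolynomial (Fin 3) S := (killX (fun j => j ≠ 2)).comp e.symm.toRingHom
  have hθ : ∀ d, θ d = killX (fun j => j ≠ 2) (e.symm d) := fun _ => rfl
  have hθy : ∀ i, θ (y i) = if i ≠ 2 then 0 else X i := by
    intro i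
    rw [hθ, ← he, RingEquiv.symm_apply_apply, killX_X]
  have hker : RingHom.ker θ = Ideal.span {y 0, y 1} := by
    apply le_antisymm
    · intro d hd
      rw [RingHom.mem_ker, hθ] at hd
      have := killX_sub (fun j : Fin 3 => j ≠ 2)
        ((Ideal.span {y 0, y 1}).comap (e : MvPolynomial (Fin 3) S →+* D)) ?_ (e.symm d)
      · rw [hd, sub_zero, Ideal.mem_comap] at this
        simpa using this
      · intro j hj
        rw [Ideal.mem_comap]
        have : e (X j) ∈ Ideal.span {y 0, y 1} := by
          rw [he]
          apply Ideal.subset_span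
          fin_cases j
          · simp
          · simp
          · exact (hj rfl).elim
        exact this
    · rw [Ideal.span_le]
      rintro d (rfl | rfl)
      · simp [hθy]
      · simp [hθy]
  rw [← hker]
  refine ⟨RingHom.ker_isPrime θ, ?_⟩
  rw [RingHom.mem_ker, hθy]
  simp

theorem ext_three_data {S D : Type} [CommRing S] [IsDomain S] [CommRing D] {x : Fin 3 → S}
    {y : Fin 3 → D} (h : IsExt S D x y) (hx1 : x 1 ≠ 0) :
    ∃ (ξ : Fin 3 → D) (ρ : D →+* S), ξ 0 * y 0 + ξ 1 * y 1 + ξ 2 * y 2 = 0 ∧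
      RingHom.ker ρ = Ideal.span {y 0, y 1, y 2} ∧ ρ (ξ 1) ≠ 0 ∧
      ∀ d, y 2 * d ∈ Ideal.span {y 0, y 1} → d ∈ Ideal.span {y 0, y 1, ξ 2} := by
  obtain ⟨π, hπ, hk, hX⟩ := h
  have hl : π (lin x) = 0 := by
    rw [← RingHom.mem_ker, hk]; exact Ideal.mem_span_singleton_self _
  have hl' := hl
  simp only [lin, Fin.sum_univ_three, map_add, map_mul, hX] at hl'
  have hkle : RingHom.ker π ≤ RingHom.ker (constantCoeff : MvPolynomial (Fin 3) S →+* S) := by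
    rw [hk, Ideal.span_singleton_le_iff_mem, RingHom.mem_ker]
    simp [lin]
  let ρ : D →+* S := π.liftOfSurjective hπ ⟨constantCoeff, hkle⟩
  have hρ : ∀ g, ρ (π g) = constantCoeff g := fun g =>
    RingHom.liftOfRightInverse_comp_apply _ _ _ ⟨constantCoeff, hkle⟩ g
  refine ⟨fun i => π (C (x i)), ρ, hl', ?_, ?_, ?_⟩
  · apply le_antisymm
    · intro d hd
      obtain ⟨g, rfl⟩ := hπ d
      rw [RingHom.mem_ker, hρ] at hd
      have := hom_sub_mem (Ideal.span {y 0, y 1, y 2}) π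
        ((π.comp C).comp constantCoeff) (by simp) ?_ g
      · simpa [hd] using this
      · intro j
        rw [hX]
        simp only [RingHom.comp_apply, constantCoeff_X, map_zero, sub_zero]
        apply Ideal.subset_span
        fin_cases j <;> simp
    · rw [Ideal.span_le]
      rintro d (rfl | rfl | rfl)
      all_goals
        simp [← hX, hρ]
  · rw [hρ, constantCoeff_C]; exact hx1
  · intro d hd
    obtain ⟨g, rfl⟩ := hπ d
    rw [Ideal.mem_span_pair] at hd
    obtain ⟨p, q, hpq⟩ := hd
    obtain ⟨p, rfl⟩ := hπ p
    obtain ⟨q, rfl⟩ := hπ q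
    rw [← hX, ← hX, ← hX, ← map_mul, ← map_mul, ← map_mul, ← map_add, ← sub_eq_zero, ← map_sub,
      ← RingHom.mem_ker, hk, Ideal.mem_span_singleton] at hpq
    obtain ⟨r, hr⟩ := hpq
    have h1 := congrArg (killX (fun j => j ≠ 2)) hr
    have h2 : killX (fun j => j ≠ 2) (lin x) = C (x 2) * X 2 := by
      simp [lin, Fin.sum_univ_three, killX_C, killX_X]
    rw [map_mul, h2] at h1
    simp only [map_sub, map_add, map_mul, killX_X] at h1
    have h3 : X 2 * killX (fun j => j ≠ 2) g =
        X 2 * (- C (x 2) * killX (fun j => j ≠ 2) r) := by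
      simp at h1
      linear_combination - h1
    have h4 := mul_left_cancel₀ (X_ne_zero 2) h3
    have h5 := killX_sub (fun j : Fin 3 => j ≠ 2)
        ((Ideal.span {y 0, y 1, π (C (x 2))}).comap π) ?_ g
    · rw [h4, Ideal.mem_comap, map_sub, map_mul, map_neg] at h5
      have h6 : π (C (x 2)) ∈ Ideal.span {y 0, y 1, π (C (x 2))} := Ideal.subset_span (by simp)
      have := Ideal.sub_mem _ h5 (Ideal.mul_mem_right (π (killX (fun j => j ≠ 2) r)) _ h6)
      convert this using 1
      ring
    · intro j hj
      rw [Ideal.mem_comap, hX]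
      apply Ideal.subset_span
      fin_cases j
      · simp
      · simp
      · exact (hj rfl).elim

theorem IsPath.good : ∀ (n : ℕ) {B : Type} [CommRing B] {y : Fin 3 → B}, IsPath n B y →
    GoodRing B (Fin (n - 2))
  | 0, B, _, y, h => by
    obtain ⟨_, _, _, _⟩ := h
    exact goodRing_of_ufd B
  | 1, B, _, y, h => by
    obtain ⟨S, _, x, h1, h2⟩ := h
    obtain ⟨_, _, _, rfl⟩ := h1
    obtain ⟨e, -⟩ := h2.equiv
    exact (goodRing_of_ufd (MvPolynomial (Fin 3) S)).congr e (Equiv.refl _)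
  | 2, B, _, y, h => by
    have := h.noeth
    have := (IsPath.pr 1 h).dom
    obtain ⟨D, _, x, hD, π, hπ, hk, -⟩ := h
    obtain ⟨_, p0, p1, n02, n12, n01⟩ := IsPath.pr 0 hD
    have hG := IsPath.good 1 (hD.poly 1 {j : Fin 3 // j ≠ 0})
    obtain ⟨S, _, z, h1, h2⟩ := hD
    obtain ⟨_, _, _, rfl⟩ := h1
    obtain ⟨e, he⟩ := h2.equiv
    obtain ⟨hp, hn⟩ := span_pair_of_equiv e he
    exact (GoodRing.ext_two x p0 n01 hp hn π hπ hk hG).congr (RingEquiv.refl B)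
      (Equiv.sumEmpty _ _)
  | n + 3, B, _, y, h => by
    have := h.noeth
    have := (IsPath.pr (n + 2) h).dom
    obtain ⟨D, _, x, hD, π, hπ, hk, -⟩ := h
    obtain ⟨_, p0, p1, n02, n12, n01⟩ := IsPath.pr (n + 1) hD
    have hG := IsPath.good (n + 2) (hD.poly (n + 2) {j : Fin 3 // j ≠ 0})
    obtain ⟨S, _, z, h1, h2⟩ := hD
    obtain ⟨_, q0, q1, -, -, -⟩ := IsPath.pr n h1
    obtain ⟨ξ, ρ, k1, k2, k3, k4⟩ := ext_three_data h2 q1.ne_zero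
    exact (GoodRing.ext_three x ξ p0 n01 k1 ρ k2 k3 k4 π hπ hk hG).congr (RingEquiv.refl B)
      ((Equiv.sumCongr (Equiv.refl _) finOneEquiv.symm).trans finSumFinEquiv)

/-- Inclusion of variables. -/
def pathIncl (n : ℕ) : Fin n × Fin 3 → Fin (n + 1) × Fin 3 := fun p => (p.1.castSucc, p.2)

theorem rename_yvar (K : Type) [Field K] (n i c : ℕ) (hi : i ≤ n) :
    rename (pathIncl n) (yvar K n i c) = yvar K (n + 1) i c := by
  unfold yvar
  by_cases h : 1 ≤ i ∧ i ≤ n ∧ 1 ≤ c ∧ c ≤ 3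
  · rw [dif_pos h, dif_pos (by omega), rename_X]
    rfl
  · rw [dif_neg h, dif_neg (by omega), map_zero]

theorem rename_pathGen (K : Type) [Field K] (n a : ℕ) (ha : a + 1 ≤ n) :
    rename (pathIncl n) (pathGen K n a) = pathGen K (n + 1) a := by
  simp only [pathGen, map_sum, map_mul]
  refine Finset.sum_congr rfl fun k _ => ?_
  rw [rename_yvar K n a _ (by omega), rename_yvar K n (a + 1) _ ha]

theorem yvar_last (K : Type) [Field K] (n : ℕ) (c : Fin 3) :
    yvar K (n + 1) (n + 1) (c.1 + 1) = X (Fin.last n, c) := by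
  unfold yvar
  rw [dif_pos ⟨by omega, le_rfl, by omega, by omega⟩]
  rfl

theorem isExt_path (K : Type) [Field K] (n : ℕ) :
    IsExt (MvPolynomial (Fin n × Fin 3) K ⧸ pathLSS K n)
      (MvPolynomial (Fin (n + 1) × Fin 3) K ⧸ pathLSS K (n + 1))
      (fun c => Ideal.Quotient.mk _ (yvar K n n (c.1 + 1)))
      (fun c => Ideal.Quotient.mk _ (yvar K (n + 1) (n + 1) (c.1 + 1))) := by
  set S := MvPolynomial (Fin n × Fin 3) K ⧸ pathLSS K n with hS
  set B := MvPolynomial (Fin (n + 1) × Fin 3) K ⧸ pathLSS K (n + 1) with hB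
  set mS : MvPolynomial (Fin n × Fin 3) K →+* S := Ideal.Quotient.mk _ with hmS
  set mB : MvPolynomial (Fin (n + 1) × Fin 3) K →+* B := Ideal.Quotient.mk _ with hmB
  set x : Fin 3 → S := fun c => mS (yvar K n n (c.1 + 1)) with hx
  have hgen : ∀ a, 1 ≤ a → a ≤ n → mB (pathGen K (n + 1) a) = 0 := by
    intro a h1 h2
    rw [hmB, Ideal.Quotient.eq_zero_iff_mem]
    exact Ideal.subset_span ⟨a, h1, by omega, rfl⟩
  have hgenS : ∀ a, 1 ≤ a → a + 1 ≤ n → mS (pathGen K n a) = 0 := by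
    intro a h1 h2
    rw [hmS, Ideal.Quotient.eq_zero_iff_mem]
    exact Ideal.subset_span ⟨a, h1, by omega, rfl⟩
  have hι0 : ∀ p ∈ pathLSS K n, (mB.comp (rename (pathIncl n)).toRingHom) p = 0 := by
    intro p hp
    rw [← RingHom.mem_ker]
    revert p hp
    change pathLSS K n ≤ _
    rw [pathLSS, Ideal.span_le]
    rintro g ⟨a, h1, h2, rfl⟩
    rw [SetLike.mem_coe, RingHom.mem_ker]
    change mB (rename (pathIncl n) (pathGen K n a)) = 0
    rw [rename_pathGen K n a h2]
    exact hgen a h1 (by omega)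
  let ι : S →+* B := Ideal.Quotient.lift _ (mB.comp (rename (pathIncl n)).toRingHom) hι0
  have hι : ∀ p, ι (mS p) = mB (rename (pathIncl n) p) := fun p => rfl
  let π : MvPolynomial (Fin 3) S →+* B :=
    eval₂Hom ι (fun c => mB (yvar K (n + 1) (n + 1) (c.1 + 1)))
  have hπC : ∀ s, π (C s) = ι s := fun s => by simp [π]
  have hπX : ∀ c, π (X c) = mB (yvar K (n + 1) (n + 1) (c.1 + 1)) := fun c => by simp [π]
  have hπl : π (lin x) = 0 := by
    have h1 : π (lin x) = mB (pathGen K (n + 1) n) := by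
      simp only [lin, pathGen, map_sum, map_mul, hπC, hπX, hx, hι]
      refine Finset.sum_congr rfl fun k _ => ?_
      rw [rename_yvar K n n _ le_rfl]
    rw [h1]
    rcases Nat.eq_zero_or_pos n with h0 | h0
    · subst h0
      simp [pathGen, yvar]
    · exact hgen n h0 le_rfl
  let T := MvPolynomial (Fin 3) S ⧸ Ideal.span {lin x}
  let mT : MvPolynomial (Fin 3) S →+* T := Ideal.Quotient.mk _
  have hmTl : mT (lin x) = 0 := by
    change Ideal.Quotient.mk _ (lin x) = 0
    rw [Ideal.Quotient.eq_zero_iff_mem]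
    exact Ideal.mem_span_singleton_self _
  let σ0 : MvPolynomial (Fin (n + 1) × Fin 3) K →+* T :=
    eval₂Hom (mT.comp (C.comp (mS.comp C)))
      (fun p => if h : p.1.1 < n then mT (C (mS (X (⟨p.1.1, h⟩, p.2)))) else mT (X p.2))
  have hσr : ∀ p, σ0 (rename (pathIncl n) p) = mT (C (mS p)) := by
    intro p
    have : σ0.comp (rename (pathIncl n) : _ →ₐ[K] _).toRingHom = mT.comp (C.comp mS) := by
      apply MvPolynomial.ringHom_ext
      · intro r; simp [σ0]
      · intro j; simp [σ0, pathIncl]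
    exact congrArg (fun f : _ →+* T => f p) this
  have hσl : ∀ c : Fin 3, σ0 (yvar K (n + 1) (n + 1) (c.1 + 1)) = mT (X c) := by
    intro c
    rw [yvar_last]
    simp [σ0]
  have hσ0 : ∀ p ∈ pathLSS K (n + 1), σ0 p = 0 := by
    intro p hp
    rw [← RingHom.mem_ker]
    revert p hp
    change pathLSS K (n + 1) ≤ _
    rw [pathLSS, Ideal.span_le]
    rintro g ⟨a, h1, h2, rfl⟩
    rw [SetLike.mem_coe, RingHom.mem_ker]
    rcases Nat.lt_or_ge a n with h3 | h3
    · rw [← rename_pathGen K n a h3, hσr, hgenS a h1 h3, map_zero, map_zero]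
    · obtain rfl : a = n := by omega
      rw [← hmTl]
      simp only [lin, pathGen, map_sum, map_mul, hσl, hx]
      refine Finset.sum_congr rfl fun k _ => ?_
      rw [← rename_yvar K a a _ le_rfl, hσr]
  let σ : B →+* T := Ideal.Quotient.lift _ σ0 hσ0
  have hσ : ∀ p, σ (mB p) = σ0 p := fun p => rfl
  have hσπ : σ.comp π = mT := by
    apply MvPolynomial.ringHom_ext
    · intro s
      obtain ⟨p, rfl⟩ := Ideal.Quotient.mk_surjective s
      rw [RingHom.comp_apply, hπC]
      change σ (ι (mS p)) = mT (C (mS p))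
      rw [hι, hσ, hσr]
    · intro c
      rw [RingHom.comp_apply, hπX, hσ, hσl]
  refine ⟨π, ?_, ?_, hπX⟩
  · intro b
    obtain ⟨p, rfl⟩ := Ideal.Quotient.mk_surjective b
    change ∃ a, π a = mB p
    induction p using MvPolynomial.induction_on with
    | C k => exact ⟨C (mS (C k)), by rw [hπC, hι, rename_C]⟩
    | add p q hp hq =>
      obtain ⟨a, ha⟩ := hp
      obtain ⟨b, hb⟩ := hq
      exact ⟨a + b, by rw [map_add, map_add, ha, hb]⟩
    | mul_X p j hp =>
      obtain ⟨a, ha⟩ := hp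
      have : ∃ b, π b = mB (X j) := by
        obtain ⟨i, c⟩ := j
        induction i using Fin.lastCases with
        | last => exact ⟨X c, by rw [hπX, yvar_last]⟩
        | cast i => exact ⟨C (mS (X (i, c))), by rw [hπC, hι, rename_X]; rfl⟩
      obtain ⟨b, hb⟩ := this
      exact ⟨a * b, by rw [map_mul, map_mul, ha, hb]⟩
  · apply le_antisymm
    · intro g hg
      rw [RingHom.mem_ker] at hg
      have h1 : mT g = 0 := by
        rw [← hσπ, RingHom.comp_apply, hg, map_zero]
      exact Ideal.Quotient.eq_zero_iff_mem.1 h1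
    · rw [Ideal.span_singleton_le_iff_mem, RingHom.mem_ker]
      exact hπl

theorem isPath_path (K : Type) [Field K] : ∀ n : ℕ,
    IsPath n (MvPolynomial (Fin n × Fin 3) K ⧸ pathLSS K n)
      (fun c => Ideal.Quotient.mk _ (yvar K n n (c.1 + 1)))
  | 0 => by
    have h0 : pathLSS K 0 = ⊥ := by
      rw [pathLSS, Ideal.span_eq_bot]
      rintro g ⟨a, h1, h2, rfl⟩
      omega
    let e : (MvPolynomial (Fin 0 × Fin 3) K ⧸ pathLSS K 0) ≃+* MvPolynomial (Fin 0 × Fin 3) K :=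
      (Ideal.quotEquivOfEq h0).trans (RingEquiv.quotientBot _)
    have hd : IsDomain (MvPolynomial (Fin 0 × Fin 3) K ⧸ pathLSS K 0) := e.toMulEquiv.isDomain
    refine ⟨hd, inferInstance, ?_, ?_⟩
    · exact e.symm.toMulEquiv.uniqueFactorizationMonoid inferInstance
    · ext c
      simp [yvar]
  | n + 1 => ⟨_, inferInstance, _, isPath_path K n, isExt_path K n⟩

/-- For the `n`-path graph `G` with `n ≥ 3` and `d = 3`, the LSS ring `R_G(3)` is a
normal Noetherian domain whose divisor class group is isomorphic to `ℤ^{n-2}`. -/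
theorem lss_path_classGroup (K : Type) [Field K] (n : ℕ) (hn : 3 ≤ n) :
    ∃ _ : IsDomain (MvPolynomial (Fin n × Fin 3) K ⧸ pathLSS K n),
      IsIntegrallyClosed (MvPolynomial (Fin n × Fin 3) K ⧸ pathLSS K n) ∧
      IsNoetherianRing (MvPolynomial (Fin n × Fin 3) K ⧸ pathLSS K n) ∧
      DivisorClassGroupIsFreeOfRank
        (MvPolynomial (Fin n × Fin 3) K ⧸ pathLSS K n)
        (FractionRing (MvPolynomial (Fin n × Fin 3) K ⧸ pathLSS K n)) (n - 2) := by
  have hp := isPath_path K n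
  have hg := hp.good
  have hd : IsDomain (MvPolynomial (Fin n × Fin 3) K ⧸ pathLSS K n) := by
    obtain ⟨m, rfl⟩ : ∃ m, n = m + 1 := ⟨n - 1, by omega⟩
    exact (IsPath.pr m hp).dom
  refine ⟨hd, ?_, inferInstance, hg.classGroup _⟩
  obtain ⟨_, T, -⟩ := hg
  exact T.isIntegrallyClosed
end

section
/- Let G = ([n], E) be a simple graph whose vertex n has degree t with neighbors 1, …, t, let G' = G ∖ {n}, and let D = det(A) where A is the t×t matrix (y_{ij}) with 1 ≤ i ≤ t and d−t+1 ≤ j ≤ d. Assume that L_G(d) is a complete intersection (for instance d ≥ pmd(G)). Then, writing x_j = y_{nj}, the images of x_1, …, x_{d−t} in R_G(d) are algebraically independent over R_{G'}(d), and the localizations satisfy R_G(d)_D ≅ R_{G'}(d)[x_1, …, x_{d−t}]_D. -/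
open MvPolynomial

/-- The Lovász–Saks–Schrijver ideal `L_G(d)` of a simple graph `G`. -/
noncomputable def lssIdeal (K : Type) [Field K] {V : Type} (G : SimpleGraph V) (d : ℕ) :
    Ideal (MvPolynomial (V × Fin d) K) :=
  Ideal.span {f | ∃ i j : V, G.Adj i j ∧
    f = ∑ k : Fin d, MvPolynomial.X (i, k) * MvPolynomial.X (j, k)}

/-- The height of an ideal: the infimum of the heights of the primes containing it. -/
noncomputable def idealHeight {R : Type*} [CommRing R] (I : Ideal R) : ℕ∞ :=
  ⨅ p : {p : PrimeSpectrum R // I ≤ p.asIdeal}, Order.height p.1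

/-- An ideal is a complete intersection if it is generated by a regular sequence of
length equal to its height. -/
def Ideal.IsCompleteIntersection {R : Type*} [CommRing R] (I : Ideal R) : Prop :=
  ∃ rs : List R, RingTheory.Sequence.IsRegular R rs ∧ Ideal.ofList rs = I ∧
    (rs.length : ℕ∞) = idealHeight I

/-- The inclusion `S' = K[y_{ij} : i ∈ [n], j ∈ [d]] ⊆ S = K[y_{ij} : i ∈ [n+1], j ∈ [d]]`. -/
noncomputable def polyIncl (K : Type) [Field K] (n d : ℕ) :
    MvPolynomial (Fin n × Fin d) K →+* MvPolynomial (Fin (n + 1) × Fin d) K :=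
  (MvPolynomial.rename (Prod.map Fin.castSucc id)).toRingHom

/-- The determinant `D` of the `t × t` matrix of variables `(y_{ij})`, `1 ≤ i ≤ t`,
`d - t + 1 ≤ j ≤ d`, as an element of `S = K[y_{ij} : i ∈ [n+1], j ∈ [d]]`. -/
noncomputable def detD (K : Type) [Field K] (n d t : ℕ) (htn : t ≤ n) (htd : t ≤ d) :
    MvPolynomial (Fin (n + 1) × Fin d) K :=
  Matrix.det (Matrix.of fun i j : Fin t =>
    MvPolynomial.X (⟨i.1, by omega⟩, ⟨d - t + j.1, by omega⟩))

/-- The determinant `D` viewed in `S' = K[y_{ij} : i ∈ [n], j ∈ [d]]` (it only involves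
variables of `S'`). -/
noncomputable def detD' (K : Type) [Field K] (n d t : ℕ) (htn : t ≤ n) (htd : t ≤ d) :
    MvPolynomial (Fin n × Fin d) K :=
  Matrix.det (Matrix.of fun i j : Fin t =>
    MvPolynomial.X (⟨i.1, by omega⟩, ⟨d - t + j.1, by omega⟩))


/-- Syzygies of a (weakly) regular sequence have coefficients in the ideal. -/
theorem syz_of_fin {S : Type*} [CommRing S] : ∀ (r : ℕ) (g : Fin r → S),
    (∀ i : Fin r, ∀ a : S, a * g i ∈ Ideal.span (g '' {j | j < i}) →
      a ∈ Ideal.span (g '' {j | j < i})) →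
    ∀ a : Fin r → S, ∑ i, a i * g i = 0 → ∀ i, a i ∈ Ideal.span (Set.range g) := by
  intro r
  induction r with
  | zero => intro g _ a _ i; exact i.elim0
  | succ r ih =>
    intro g hg a ha
    have himg : g '' {j | j < Fin.last r} = Set.range (fun i : Fin r => g i.castSucc) := by
      ext x
      constructor
      · rintro ⟨j, hj, rfl⟩
        exact ⟨j.castPred (ne_of_lt hj), by simp⟩
      · rintro ⟨j, rfl⟩
        exact ⟨j.castSucc, Fin.castSucc_lt_last j, rfl⟩
    have hsub : Ideal.span (Set.range (fun i : Fin r => g i.castSucc)) ≤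
        Ideal.span (Set.range g) := by
      apply Ideal.span_mono
      rintro _ ⟨j, rfl⟩
      exact ⟨_, rfl⟩
    rw [Fin.sum_univ_castSucc] at ha
    have h1 : a (Fin.last r) ∈ Ideal.span (Set.range (fun i : Fin r => g i.castSucc)) := by
      rw [← himg]
      apply hg
      rw [himg]
      have : a (Fin.last r) * g (Fin.last r) = - ∑ i : Fin r, a i.castSucc * g i.castSucc := by
        linear_combination ha
      rw [this]
      apply neg_mem
      apply sum_mem
      intro i _
      exact Ideal.mul_mem_left _ _ (Ideal.subset_span ⟨i, rfl⟩)
    obtain ⟨b, hb⟩ := (Ideal.mem_span_range_iff_exists_fun).1 h1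
    have h2 := ih (fun i => g i.castSucc) (by
      intro i c hc
      have himg2 : (fun i : Fin r => g i.castSucc) '' {j | j < i} = g '' {j | j < i.castSucc} := by
        ext x
        constructor
        · rintro ⟨j, hj, rfl⟩
          exact ⟨j.castSucc, Fin.castSucc_lt_castSucc_iff.2 hj, rfl⟩
        · rintro ⟨j, hj, rfl⟩
          exact ⟨j.castPred (ne_of_lt (lt_of_lt_of_le hj (Fin.le_last _))), by
            exact Fin.lt_def.2 (Fin.lt_def.1 hj), by simp⟩
      rw [himg2] at hc ⊢
      exact hg _ _ hc) (fun i => a i.castSucc + b i * g (Fin.last r)) (by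
        rw [← ha, ← hb, Finset.sum_mul, ← Finset.sum_add_distrib]
        apply Finset.sum_congr rfl
        intro i _
        ring)
    intro i
    refine Fin.lastCases ?_ (fun i => ?_) i
    · exact hsub h1
    · have h3 := hsub (h2 i)
      have : a i.castSucc = (a i.castSucc + b i * g (Fin.last r)) - b i * g (Fin.last r) := by ring
      rw [this]
      exact sub_mem h3 (Ideal.mul_mem_left _ _ (Ideal.subset_span ⟨_, rfl⟩))

theorem ofList_eq_range {S : Type*} [CommRing S] (rs : List S) :
    Ideal.ofList rs = Ideal.span (Set.range (fun i : Fin rs.length => rs[i])) := by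
  unfold Ideal.ofList
  congr 1
  ext x
  simp only [Set.mem_ofPred_eq, Set.mem_range, List.mem_iff_getElem]
  constructor
  · rintro ⟨i, hi, rfl⟩; exact ⟨⟨i, hi⟩, rfl⟩
  · rintro ⟨i, rfl⟩; exact ⟨i.1, i.2, rfl⟩

theorem syz_of_regular {S : Type*} [CommRing S] (rs : List S)
    (h : RingTheory.Sequence.IsWeaklyRegular S rs) (a : Fin rs.length → S)
    (ha : ∑ i, a i * rs[i] = 0) (i : Fin rs.length) : a i ∈ Ideal.ofList rs := by
  rw [ofList_eq_range]
  refine syz_of_fin rs.length (fun i => rs[i]) ?_ a ha i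
  intro i c hc
  have key : Ideal.span ((fun i : Fin rs.length => rs[i]) '' {j | j < i}) =
      Ideal.ofList (rs.take i) := by
    unfold Ideal.ofList
    congr 1
    ext x
    simp only [Set.mem_image, Set.mem_ofPred_eq, List.mem_take_iff_getElem]
    constructor
    · rintro ⟨j, hj, rfl⟩
      exact ⟨j.1, by have := j.2; have : j.1 < i.1 := hj; omega, rfl⟩
    · rintro ⟨j, hj, rfl⟩
      exact ⟨⟨j, by omega⟩, by show j < i.1; omega, rfl⟩
  rw [key] at hc ⊢
  have h1 := (RingTheory.Sequence.isWeaklyRegular_iff_Fin S rs).1 h i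
  have h2 : ∀ x : S, (Submodule.Quotient.mk x :
      S ⧸ (Ideal.ofList (rs.take i) • (⊤ : Submodule S S))) = 0 ↔ x ∈ Ideal.ofList (rs.take i) := by
    intro x
    rw [Submodule.Quotient.mk_eq_zero]
    simp
  rw [← h2]
  apply h1
  simp only [smul_zero]
  rw [← Submodule.Quotient.mk_smul, h2, smul_eq_mul, mul_comm]
  exact hc

/-- If an ideal is generated by a regular sequence, every generating family that is not longer
has syzygies with coefficients in the ideal. -/
theorem syz_of_generators {S : Type*} [CommRing S] (rs : List S)
    (h : RingTheory.Sequence.IsWeaklyRegular S rs) (hne : Ideal.ofList rs ≠ ⊤)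
    {ι : Type*} [Fintype ι] [DecidableEq ι] (f : ι → S)
    (hf : Ideal.span (Set.range f) = Ideal.ofList rs)
    (hcard : Fintype.card ι ≤ rs.length) (a : ι → S) (ha : ∑ i, a i * f i = 0) (i : ι) :
    a i ∈ Ideal.ofList rs := by
  set I := Ideal.ofList rs with hI
  have hfm : ∀ e, ∃ c : Fin rs.length → S, ∑ i, c i * rs[i] = f e := by
    intro e
    have : f e ∈ Ideal.span (Set.range (fun i : Fin rs.length => rs[i])) := by
      rw [← ofList_eq_range, ← hI, ← hf]
      exact Ideal.subset_span ⟨e, rfl⟩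
    exact (Ideal.mem_span_range_iff_exists_fun).1 this
  have hrm : ∀ i : Fin rs.length, ∃ c : ι → S, ∑ e, c e * f e = rs[i] := by
    intro i
    have : rs[i] ∈ Ideal.span (Set.range f) := by
      rw [hf, hI, ofList_eq_range]
      exact Ideal.subset_span ⟨i, rfl⟩
    exact (Ideal.mem_span_range_iff_exists_fun).1 this
  choose P hP using hfm
  choose Q hQ using hrm
  have : Nontrivial (S ⧸ I) := Ideal.Quotient.nontrivial_iff.2 hne
  let P' : Matrix ι (Fin rs.length) (S ⧸ I) := Matrix.of fun e i => Ideal.Quotient.mk I (P e i)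
  let Q' : Matrix (Fin rs.length) ι (S ⧸ I) := Matrix.of fun i e => Ideal.Quotient.mk I (Q i e)
  have hQP : Q' * P' = 1 := by
    ext i j
    have h1 : ∑ j, (∑ e, Q i e * P e j - if i = j then 1 else 0) * rs[j] = 0 := by
      simp only [sub_mul, Finset.sum_sub_distrib, Finset.sum_mul]
      rw [Finset.sum_comm]
      simp only [mul_assoc, ← Finset.mul_sum, hP]
      rw [hQ]
      simp
    have h2 := syz_of_regular rs h _ h1 j
    rw [← Ideal.Quotient.eq_zero_iff_mem, map_sub, sub_eq_zero] at h2
    simp only [Matrix.mul_apply, P', Q', Matrix.of_apply, Matrix.one_apply]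
    simp only [map_sum, map_mul] at h2
    rw [h2]
    split_ifs <;> simp
  have hle : rs.length ≤ Fintype.card ι := by
    have := card_le_of_injective (S ⧸ I) (Matrix.mulVecLin P') (by
      intro u v huv
      have := congrArg (Matrix.mulVec Q') huv
      simpa [Matrix.mulVecLin_apply, Matrix.mulVec_mulVec, hQP] using this)
    simpa using this
  have hPQ : P' * Q' = 1 := (Matrix.mul_eq_one_comm_of_card_eq _ _ _ (by simp; omega)).1 hQP
  have h3 : ∑ j, (∑ e, a e * P e j) * rs[j] = 0 := by
    simp only [Finset.sum_mul]
    rw [Finset.sum_comm]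
    simp only [mul_assoc, ← Finset.mul_sum, hP]
    exact ha
  have h4 : Matrix.vecMul (fun e => Ideal.Quotient.mk I (a e)) P' = 0 := by
    ext j
    have := syz_of_regular rs h _ h3 j
    rw [← Ideal.Quotient.eq_zero_iff_mem] at this
    simpa [Matrix.vecMul, dotProduct, P'] using this
  have h5 := congrArg (fun v => Matrix.vecMul v Q') h4
  simp only [Matrix.vecMul_vecMul, hPQ, Matrix.vecMul_one, Matrix.zero_vecMul] at h5
  exact Ideal.Quotient.eq_zero_iff_mem.1 (congrFun h5 i)

/-- The edges of a graph on a linearly ordered vertex set, as ordered pairs. -/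
abbrev EdgeIdx {V : Type} [LinearOrder V] (G : SimpleGraph V) : Type :=
  {p : V × V // p.1 < p.2 ∧ G.Adj p.1 p.2}

/-- The edge polynomial. -/
noncomputable def edgePoly (K : Type) [Field K] {V : Type} (d : ℕ) (i j : V) :
    MvPolynomial (V × Fin d) K :=
  ∑ k : Fin d, MvPolynomial.X (i, k) * MvPolynomial.X (j, k)

theorem edgePoly_comm (K : Type) [Field K] {V : Type} (d : ℕ) (i j : V) :
    edgePoly K d i j = edgePoly K d j i := by
  unfold edgePoly
  exact Finset.sum_congr rfl fun k _ => mul_comm _ _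

theorem lssIdeal_eq_span (K : Type) [Field K] {V : Type} [LinearOrder V] (G : SimpleGraph V)
    (d : ℕ) : Ideal.span (Set.range fun e : EdgeIdx G => edgePoly K d e.1.1 e.1.2) =
      lssIdeal K G d := by
  unfold lssIdeal
  congr 1
  ext f
  constructor
  · rintro ⟨e, rfl⟩
    exact ⟨_, _, e.2.2, rfl⟩
  · rintro ⟨i, j, hij, rfl⟩
    rcases lt_trichotomy i j with h | h | h
    · exact ⟨⟨(i, j), h, hij⟩, rfl⟩
    · exact absurd h hij.ne
    · exact ⟨⟨(j, i), h, hij.symm⟩, edgePoly_comm K d j i⟩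

theorem coeff_mul_of_mem_lssIdeal (K : Type) [Field K] {V : Type} (G : SimpleGraph V)
    (d : ℕ) (m : V × Fin d →₀ ℕ) (hm : m.degree = 2)
    (q : MvPolynomial (V × Fin d) K) (hq : q ∈ lssIdeal K G d) :
    ∀ p, coeff m (p * q) = coeff 0 p * coeff m q := by
  unfold lssIdeal at hq
  induction hq using Submodule.span_induction with
  | mem q hq =>
    obtain ⟨i, j, -, rfl⟩ := hq
    intro p
    rw [Finset.mul_sum, coeff_sum, coeff_sum, Finset.mul_sum]
    apply Finset.sum_congr rfl
    intro k _
    have : (X (i, k) * X (j, k) : MvPolynomial (V × Fin d) K) =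
        monomial (Finsupp.single (i, k) 1 + Finsupp.single (j, k) 1) 1 := by
      simp [X, monomial_mul]
    rw [this]
    set u := (Finsupp.single (i, k) 1 + Finsupp.single (j, k) 1 : V × Fin d →₀ ℕ) with hu
    have hud : u.degree = 2 := by
      simp [hu]
    classical
    rw [coeff_mul_monomial', coeff_monomial]
    by_cases h : u = m
    · subst h
      simp
    · rw [if_neg h, if_neg]
      · simp
      · intro hle
        apply h
        have h1 : (m - u).degree + u.degree = m.degree := by
          rw [← map_add, tsub_add_cancel_of_le hle]
        have h2 : (m - u) = 0 := by
          rw [← Finsupp.degree_eq_zero_iff]; omega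
        exact le_antisymm hle (tsub_eq_zero_iff_le.1 h2)
  | zero => simp
  | add x y _ _ hx hy => intro p; simp [mul_add, hx, hy]
  | smul a x _ hx =>
    intro p
    rw [smul_eq_mul, ← mul_assoc, hx, hx]
    rw [← mul_assoc]
    congr 1
    simp [← constantCoeff_eq]

theorem coeff_edgePoly (K : Type) [Field K] {V : Type} [LinearOrder V] (d : ℕ) (k0 : Fin d)
    (i j i' j' : V) (h : i < j) (h' : i' < j') :
    coeff (Finsupp.single (i', k0) 1 + Finsupp.single (j', k0) 1) (edgePoly K d i j) =
      if i = i' ∧ j = j' then 1 else 0 := by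
  classical
  unfold edgePoly
  rw [coeff_sum]
  have : ∀ k, (X (i, k) * X (j, k) : MvPolynomial (V × Fin d) K) =
      monomial (Finsupp.single (i, k) 1 + Finsupp.single (j, k) 1) 1 := by
    intro k
    simp [X, monomial_mul]
  simp only [this, coeff_monomial]
  have key : ∀ k, (Finsupp.single (i, k) 1 + Finsupp.single (j, k) 1 : V × Fin d →₀ ℕ) =
      Finsupp.single (i', k0) 1 + Finsupp.single (j', k0) 1 ↔ (k = k0 ∧ i = i' ∧ j = j') := by
    intro k
    constructor
    · intro he
      have e1 := DFunLike.congr_fun he (i, k)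
      have e2 := DFunLike.congr_fun he (j, k)
      simp only [Finsupp.add_apply, Finsupp.single_apply, Prod.mk.injEq] at e1 e2
      have a1 := h.ne
      have a2 := h.ne'
      have a3 := h'.ne
      have a4 := h.not_gt
      simp only [a1, a2, and_true, if_true, if_false] at e1 e2
      by_cases hk : k0 = k
      · subst hk
        refine ⟨rfl, ?_⟩
        simp only [and_true] at e1 e2
        split_ifs at e1 e2 with b1 b2 b3 b4 b5 b6 <;>
          first | omega | (subst_vars; simp_all)
      · simp [hk] at e1
    · rintro ⟨rfl, rfl, rfl⟩; rfl
  simp only [key]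
  by_cases h1 : i = i' ∧ j = j'
  · simp [h1]
  · simp [h1]

theorem card_edges_le (K : Type) [Field K] {V : Type} [LinearOrder V] [Fintype V]
    (G : SimpleGraph V) [Fintype (EdgeIdx G)]
    (d : ℕ) (k0 : Fin d) (rs : List (MvPolynomial (V × Fin d) K))
    (h : Ideal.ofList rs = lssIdeal K G d) : Fintype.card (EdgeIdx G) ≤ rs.length := by
  classical
  have hfm : ∀ e : EdgeIdx G, ∃ c : Fin rs.length → MvPolynomial (V × Fin d) K,
      ∑ i, c i * rs[i] = edgePoly K d e.1.1 e.1.2 := by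
    intro e
    have : edgePoly K d e.1.1 e.1.2 ∈ Ideal.span (Set.range (fun i : Fin rs.length => rs[i])) := by
      rw [← ofList_eq_range, h, ← lssIdeal_eq_span]
      exact Ideal.subset_span ⟨e, rfl⟩
    exact (Ideal.mem_span_range_iff_exists_fun).1 this
  choose P hP using hfm
  let m : EdgeIdx G → (V × Fin d →₀ ℕ) := fun e =>
    Finsupp.single (e.1.1, k0) 1 + Finsupp.single (e.1.2, k0) 1
  let A : Matrix (EdgeIdx G) (Fin rs.length) K := Matrix.of fun e i => coeff 0 (P e i)
  let B : Matrix (Fin rs.length) (EdgeIdx G) K := Matrix.of fun i e => coeff (m e) rs[i]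
  have hAB : A * B = 1 := by
    ext e e'
    simp only [Matrix.mul_apply, A, B, Matrix.of_apply, Matrix.one_apply]
    have h1 : ∀ i : Fin rs.length, coeff 0 (P e i) * coeff (m e') rs[i] =
        coeff (m e') (P e i * rs[i]) := by
      intro i
      rw [coeff_mul_of_mem_lssIdeal K G d (m e') (by simp [m]) rs[i]]
      rw [← h, ofList_eq_range]
      exact Ideal.subset_span ⟨i, rfl⟩
    simp only [h1]
    rw [← coeff_sum, hP, coeff_edgePoly K d k0 _ _ _ _ e.2.1 e'.2.1]
    simp only [Subtype.ext_iff, Prod.ext_iff]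
  have := card_le_of_injective K (Matrix.mulVecLin B) (by
      intro u v huv
      have := congrArg (Matrix.mulVec A) huv
      simpa [Matrix.mulVecLin_apply, Matrix.mulVec_mulVec, hAB] using this)
  simpa using this

/-- In an LSS ideal which is a complete intersection, multiplication by an edge polynomial is
regular modulo the other edges (in the weak form we need). -/
theorem mem_of_mul_edgePoly_mem (K : Type) [Field K] {V : Type} [LinearOrder V] [Fintype V]
    (G : SimpleGraph V) (d : ℕ) (hd : 0 < d)
    (hCI : (lssIdeal K G d).IsCompleteIntersection) (e : EdgeIdx G)
    (h : MvPolynomial (V × Fin d) K)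
    (hh : h * edgePoly K d e.1.1 e.1.2 ∈
      Ideal.span ((fun e : EdgeIdx G => edgePoly K d e.1.1 e.1.2) '' {e' | e' ≠ e})) :
    h ∈ lssIdeal K G d := by
  classical
  obtain ⟨rs, hreg, hI, -⟩ := hCI
  have hc := card_edges_le K G d ⟨0, hd⟩ rs hI
  have hne : Ideal.ofList rs ≠ ⊤ := by
    have := hreg.top_ne_smul
    intro h
    apply this
    rw [h]
    simp
  obtain ⟨c, hc0, hcs⟩ : ∃ c : EdgeIdx G → MvPolynomial (V × Fin d) K, c e = 0 ∧
      ∑ e', c e' * edgePoly K d e'.1.1 e'.1.2 = h * edgePoly K d e.1.1 e.1.2 := by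
    generalize h * edgePoly K d e.1.1 e.1.2 = q at hh
    induction hh using Submodule.span_induction with
    | mem q hq =>
      obtain ⟨e', he', rfl⟩ := hq
      refine ⟨Pi.single e' 1, ?_, ?_⟩
      · exact Pi.single_eq_of_ne (Ne.symm he') _
      · rw [Finset.sum_eq_single e']
        · simp
        · intro b _ hb
          simp [Pi.single_eq_of_ne hb]
        · simp
    | zero => exact ⟨0, by simp⟩
    | add x y _ _ hx hy =>
      obtain ⟨c, h1, h2⟩ := hx
      obtain ⟨c', h1', h2'⟩ := hy
      exact ⟨c + c', by simp [h1, h1'], by simp [add_mul, Finset.sum_add_distrib, h2, h2']⟩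
    | smul a x _ hx =>
      obtain ⟨c, h1, h2⟩ := hx
      exact ⟨a • c, by simp [h1], by simp [mul_assoc, ← Finset.mul_sum, h2]⟩
  have := syz_of_generators rs hreg.toIsWeaklyRegular hne
    (fun e : EdgeIdx G => edgePoly K d e.1.1 e.1.2) (by rw [hI, lssIdeal_eq_span]) hc
    (fun e' => c e' - (Pi.single e h : EdgeIdx G → MvPolynomial (V × Fin d) K) e') (by
      simp only [sub_mul, Finset.sum_sub_distrib, hcs]
      rw [Finset.sum_eq_single e]
      · simp
      · intro b _ hb
        simp [Pi.single_eq_of_ne hb]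
      · simp) e
  simp only [hc0, Pi.single_eq_same, zero_sub] at this
  rw [← hI]
  simpa using this

theorem add_pow_mem_span_helper {A : Type*} [CommRing A] (p q h : A) (m k : ℕ)
    (hp : p ^ m * h = 0) (hq : q ^ k * h = 0) : (p + q) ^ (m + k) * h = 0 := by
  rw [add_pow, Finset.sum_mul]
  apply Finset.sum_eq_zero
  intro i hi
  by_cases him : m ≤ i
  · obtain ⟨r, rfl⟩ := Nat.exists_eq_add_of_le him
    rw [pow_add]
    linear_combination (p ^ r * q ^ (m + k - (m + r)) * ((m + k).choose (m + r) : A)) * hp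
  · obtain ⟨r, hr⟩ := Nat.exists_eq_add_of_le (show k ≤ m + k - i by omega)
    rw [hr, pow_add]
    linear_combination (p ^ i * q ^ r * ((m + k).choose i : A)) * hq

theorem exists_pyth (K : Type) [Field K] : ∃ a b c : Polynomial K,
    a ^ 2 + b ^ 2 = c ^ 2 ∧ a.coeff 0 = 1 ∧ b.coeff 0 = 0 ∧ c.coeff 0 = 1 ∧ b ≠ 0 := by
  by_cases h2 : (2 : K) = 0
  · refine ⟨1 + Polynomial.X, Polynomial.X, 1, ?_, by simp, by simp, by simp,
      Polynomial.X_ne_zero⟩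
    have : (2 : Polynomial K) = 0 := by
      rw [← map_ofNat (Polynomial.C : K →+* Polynomial K), h2, map_zero]
    linear_combination (Polynomial.X + Polynomial.X ^ 2) * this
  · refine ⟨1 - Polynomial.X ^ 2, Polynomial.C 2 * Polynomial.X, 1 + Polynomial.X ^ 2,
      ?_, by simp, by simp, by simp, ?_⟩
    · simp only [map_ofNat]
      ring
    · exact mul_ne_zero (by simpa using h2) Polynomial.X_ne_zero

theorem poly_ann {A : Type*} [CommRing A] (g : Polynomial A) : ∀ (n : ℕ) (h : Polynomial A),
    h.natDegree < n → g * h = 0 → Polynomial.C (g.coeff 0) ^ n * h = 0 := by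
  intro n
  induction n with
  | zero => intro h hn; omega
  | succ n ih =>
    intro h hn hg
    have h0 : g.coeff 0 * h.coeff 0 = 0 := by
      rw [← Polynomial.mul_coeff_zero, hg, Polynomial.coeff_zero]
    have h1 : Polynomial.C (g.coeff 0) * h =
        (Polynomial.C (g.coeff 0) * h.divX) * Polynomial.X := by
      conv_lhs => rw [← Polynomial.divX_mul_X_add h]
      rw [mul_add, ← Polynomial.C_mul, h0]
      simp [mul_assoc]
    have h2 : g * (Polynomial.C (g.coeff 0) * h.divX) = 0 := by
      have : g * (Polynomial.C (g.coeff 0) * h.divX) * Polynomial.X = 0 := by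
        rw [mul_assoc, ← h1]
        linear_combination Polynomial.C (g.coeff 0) * hg
      exact (Polynomial.isRegular_X.right.mul_right_eq_zero_iff).1 this
    by_cases hn0 : n = 0
    · subst hn0
      have : h.divX = 0 := by
        rw [Polynomial.divX_eq_zero_iff]
        exact Polynomial.eq_C_of_natDegree_eq_zero (by omega)
      rw [pow_one, h1, this]
      simp
    · have h3 := ih (Polynomial.C (g.coeff 0) * h.divX) (by
        refine lt_of_le_of_lt (Polynomial.natDegree_C_mul_le _ _) ?_
        rw [Polynomial.natDegree_divX_eq_natDegree_tsub_one]
        omega) h2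
      rw [pow_succ, mul_assoc, h1, ← mul_assoc, h3, zero_mul]

theorem exists_rot (K : Type) [Field K] {V : Type} (G : SimpleGraph V) (d : ℕ) (k l : Fin d)
    (hkl : k ≠ l) (a b c : Polynomial K) (habc : a ^ 2 + b ^ 2 = c ^ 2)
    (ha : a.coeff 0 = 1) (hb : b.coeff 0 = 0) (hc : c.coeff 0 = 1)
    {R : Type} [CommRing R] [Algebra K R] (π : MvPolynomial (V × Fin d) K →ₐ[K] R)
    (hπ : Function.Surjective π) (hk : RingHom.ker π = lssIdeal K G d) :
    ∃ φ : R →+* Polynomial R,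
      (∀ v, φ (π (X (v, k))) = a.map (algebraMap K R) * Polynomial.C (π (X (v, k))) +
        b.map (algebraMap K R) * Polynomial.C (π (X (v, l)))) ∧
      (∀ v j, j ≠ k → j ≠ l →
        φ (π (X (v, j))) = c.map (algebraMap K R) * Polynomial.C (π (X (v, j)))) ∧
      (∀ z, (φ z).coeff 0 = z) := by
  set a' := a.map (algebraMap K R) with ha'
  set b' := b.map (algebraMap K R) with hb'
  set c' := c.map (algebraMap K R) with hc'
  have habc' : a' ^ 2 + b' ^ 2 = c' ^ 2 := by
    have := congrArg (Polynomial.map (algebraMap K R)) habc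
    simpa using this
  let F : V × Fin d → Polynomial R := fun p =>
    if p.2 = k then a' * Polynomial.C (π (X (p.1, k))) + b' * Polynomial.C (π (X (p.1, l)))
    else if p.2 = l then -b' * Polynomial.C (π (X (p.1, k))) + a' * Polynomial.C (π (X (p.1, l)))
    else c' * Polynomial.C (π (X (p.1, p.2)))
  have hker : RingHom.ker π ≤
      RingHom.ker (aeval F : MvPolynomial (V × Fin d) K →ₐ[K] Polynomial R) := by
    rw [hk]
    unfold lssIdeal
    rw [Ideal.span_le]
    rintro _ ⟨v, w, hvw, rfl⟩
    rw [SetLike.mem_coe, RingHom.mem_ker]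
    have hz : ∑ j : Fin d, π (X (v, j)) * π (X (w, j)) = 0 := by
      simp only [← map_mul, ← map_sum]
      rw [← RingHom.mem_ker, hk]
      exact Ideal.subset_span ⟨v, w, hvw, rfl⟩
    have e1 : ∑ j : Fin d, (F (v, j) * F (w, j) -
        c' ^ 2 * Polynomial.C (π (X (v, j)) * π (X (w, j)))) = 0 := by
      rw [Finset.sum_eq_add k l hkl]
      · simp only [F, if_true, hkl.symm, if_false, Polynomial.C_mul, ← habc']
        ring
      · rintro j - ⟨h1, h2⟩
        simp only [F, h1, h2, if_false, Polynomial.C_mul]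
        ring
      · simp
      · simp
    rw [Finset.sum_sub_distrib, ← Finset.mul_sum, ← map_sum, hz] at e1
    simpa using e1
  let φ : R →+* Polynomial R := (π : MvPolynomial (V × Fin d) K →+* R).liftOfSurjective hπ
    ⟨(aeval F : MvPolynomial (V × Fin d) K →ₐ[K] Polynomial R).toRingHom, hker⟩
  have hφ : ∀ q, φ (π q) = aeval F q := fun q =>
    RingHom.liftOfSurjective_comp_apply (π : MvPolynomial (V × Fin d) K →+* R) hπ
      ⟨(aeval F : MvPolynomial (V × Fin d) K →ₐ[K] Polynomial R).toRingHom, hker⟩ q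
  refine ⟨φ, ?_, ?_, ?_⟩
  · intro v
    simp [hφ, F]
  · intro v j h1 h2
    simp [hφ, F, h1, h2]
  · intro z
    obtain ⟨q, rfl⟩ := hπ z
    rw [hφ]
    have : (Polynomial.constantCoeff.comp
        (aeval F : MvPolynomial (V × Fin d) K →ₐ[K] Polynomial R).toRingHom) = π.toRingHom := by
      apply MvPolynomial.ringHom_ext
      · intro r
        simp
      · rintro ⟨v, j⟩
        simp only [RingHom.comp_apply, AlgHom.toRingHom_eq_coe, RingHom.coe_coe, aeval_X, F]
        split_ifs with h1 h2
        · simp [a', b', ha, hb, h1]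
        · simp [a', b', ha, hb, h2]
        · simp [c', hc]
    exact RingHom.congr_fun this q

/-- Minors of the matrix of images of the variables. -/
noncomputable def minorOf {V : Type} {d : ℕ} {R : Type} [CommRing R] (y : V → Fin d → R) {t : ℕ}
    (ρ : Fin t → V) (σ : Fin t → Fin d) : R :=
  Matrix.det (Matrix.of fun i j => y (ρ i) (σ j))

theorem minor_step (K : Type) [Field K] {V : Type} (G : SimpleGraph V) (d : ℕ)
    {R : Type} [CommRing R] [Algebra K R] (π : MvPolynomial (V × Fin d) K →ₐ[K] R)
    (hπ : Function.Surjective π) (hk : RingHom.ker π = lssIdeal K G d) {t : ℕ}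
    (ρ : Fin t → V) (σ : Fin t → Fin d) (hσ : Function.Injective σ) (j0 : Fin t) (l : Fin d)
    (hl : ∀ j, σ j ≠ l) (z : R)
    (hz : ∃ N, minorOf (fun v j => π (X (v, j))) ρ σ ^ N * z = 0) :
    ∃ N, minorOf (fun v j => π (X (v, j))) ρ (Function.update σ j0 l) ^ N * z = 0 := by
  obtain ⟨m, hm⟩ := hz
  obtain ⟨a, b, c, habc, ha, hb, hc, hb0⟩ := exists_pyth K
  obtain ⟨φ, h1, h2, h3⟩ := exists_rot K G d (σ j0) l (hl j0) a b c habc ha hb hc π hπ hk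
  set a' := a.map (algebraMap K R) with ha'
  set b' := b.map (algebraMap K R) with hb'
  set c' := c.map (algebraMap K R) with hc'
  set D := minorOf (fun v j => π (X (v, j))) ρ σ with hD
  set D' := minorOf (fun v j => π (X (v, j))) ρ (Function.update σ j0 l) with hD'
  have hφ : ∃ e : ℕ, φ D = c' ^ e * (a' * Polynomial.C D + b' * Polynomial.C D') := by
    let M0 : Matrix (Fin t) (Fin t) (Polynomial R) :=
      Matrix.of fun i j => Polynomial.C (π (X (ρ i, σ j)))
    let u : Fin t → Polynomial R := fun i => Polynomial.C (π (X (ρ i, σ j0)))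
    let w : Fin t → Polynomial R := fun i => Polynomial.C (π (X (ρ i, l)))
    let cc : Fin t → Polynomial R := fun j => if j = j0 then 1 else c'
    have e1 : φ D = Matrix.det (Matrix.of fun i j => cc j * (M0.updateCol j0 (a' • u + b' • w)) i j) := by
      rw [hD, minorOf, RingHom.map_det]
      congr 1
      ext1 i j
      simp only [RingHom.mapMatrix_apply, Matrix.map_apply, Matrix.of_apply, Matrix.updateCol_apply]
      by_cases hj : j = j0
      · subst hj
        simp [cc, h1, u, w]
      · simp only [hj, if_false, cc, M0, Matrix.of_apply]
        rw [h2 _ _ (fun h => hj (hσ h)) (hl j)]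
    refine ⟨(Finset.univ.erase j0).card, ?_⟩
    rw [e1, Matrix.det_mul_row, Matrix.det_updateCol_add, Matrix.det_updateCol_smul,
      Matrix.det_updateCol_smul]
    congr 1
    · rw [← Finset.mul_prod_erase _ _ (Finset.mem_univ j0)]
      simp only [cc, if_true, one_mul]
      rw [Finset.prod_congr rfl (g := fun _ => c')]
      · simp
      · intro j hj
        simp [(Finset.mem_erase.1 hj).1]
    · congr 2
      · rw [hD, minorOf, RingHom.map_det]
        congr 1
        ext1 i j
        simp only [RingHom.mapMatrix_apply, Matrix.map_apply, Matrix.of_apply,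
          Matrix.updateCol_apply]
        split_ifs with hj
        · subst hj; rfl
        · rfl
      · rw [hD', minorOf, RingHom.map_det]
        congr 1
        ext1 i j
        simp only [RingHom.mapMatrix_apply, Matrix.map_apply, Matrix.of_apply,
          Matrix.updateCol_apply]
        split_ifs with hj
        · subst hj; simp [w]
        · simp [M0, Function.update_of_ne hj]
  obtain ⟨e, he⟩ := hφ
  set h := φ z with hh
  set g := a' * Polynomial.C D + b' * Polynomial.C D' with hg
  have hreg : ∀ (q : Polynomial K), q ≠ 0 → ∀ f : Polynomial R,
      q.map (algebraMap K R) * f = 0 → f = 0 := by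
    intro q hq f hf
    have hlc : q.leadingCoeff ≠ 0 := by simpa using hq
    have hmon : (Polynomial.C q.leadingCoeff⁻¹ * q).Monic := by
      rw [mul_comm]; exact Polynomial.monic_mul_leadingCoeff_inv hq
    have hmon' := hmon.map (algebraMap K R)
    have : (Polynomial.C q.leadingCoeff⁻¹ * q).map (algebraMap K R) * f = 0 := by
      rw [Polynomial.map_mul, mul_assoc, hf, mul_zero]
    exact (hmon'.mul_right_eq_zero_iff).1 this
  have hgh : g ^ m * h = 0 := by
    have e2 := congrArg φ hm
    rw [map_mul, map_pow, he, map_zero, mul_pow, ← pow_mul, mul_assoc] at e2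
    have : (c ^ (e * m)).map (algebraMap K R) * (g ^ m * h) = 0 := by
      rw [Polynomial.map_pow]; exact e2
    refine hreg _ (pow_ne_zero _ ?_) _ this
    rintro rfl
    simp at hc
  have hg0 : (g ^ m).coeff 0 = D ^ m := by
    rw [Polynomial.coeff_zero_eq_eval_zero]
    simp only [hg, Polynomial.eval_pow, Polynomial.eval_add, Polynomial.eval_mul,
      Polynomial.eval_C]
    rw [← Polynomial.coeff_zero_eq_eval_zero, ← Polynomial.coeff_zero_eq_eval_zero]
    simp [ha', hb', ha, hb]
  have hDh := poly_ann (g ^ m) _ h (Nat.lt_succ_self _) hgh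
  rw [hg0] at hDh
  set N := h.natDegree.succ
  rw [← Polynomial.C_pow, ← pow_mul] at hDh
  have hbD : (b' * Polynomial.C D') ^ (m + m * N) * h = 0 := by
    have e3 : b' * Polynomial.C D' = g + (- (a' * Polynomial.C D)) := by rw [hg]; ring
    have e4 := add_pow_mem_span_helper g (-(a' * Polynomial.C D)) h m (m * N) hgh (by
      rw [neg_pow, mul_pow, ← Polynomial.C_pow]
      linear_combination ((-1) ^ (m * N) * a' ^ (m * N)) * hDh)
    rw [e3]
    exact e4
  refine ⟨m + m * N, ?_⟩
  rw [mul_pow, mul_assoc] at hbD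
  have e5 : Polynomial.C D' ^ (m + m * N) * h = 0 := by
    apply hreg (b ^ (m + m * N)) (pow_ne_zero _ hb0)
    rw [Polynomial.map_pow]
    exact hbD
  have e6 : Polynomial.coeff (Polynomial.C D' ^ (m + m * N) * h) 0 = 0 := by
    rw [e5, Polynomial.coeff_zero]
  rw [← Polynomial.C_pow, Polynomial.coeff_C_mul, hh, h3] at e6
  exact e6

theorem minor_all (K : Type) [Field K] {V : Type} (G : SimpleGraph V) (d : ℕ)
    {R : Type} [CommRing R] [Algebra K R] (π : MvPolynomial (V × Fin d) K →ₐ[K] R)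
    (hπ : Function.Surjective π) (hk : RingHom.ker π = lssIdeal K G d) {t : ℕ}
    (ρ : Fin t → V) (σ : Fin t → Fin d) (hσ : Function.Injective σ) (z : R)
    (hz : ∃ N, minorOf (fun v j => π (X (v, j))) ρ σ ^ N * z = 0) (τ : Fin t → Fin d) :
    ∃ N, minorOf (fun v j => π (X (v, j))) ρ τ ^ N * z = 0 := by
  classical
  by_cases hτ : Function.Injective τ
  · have key : ∀ s : Finset (Fin t), ∃ σ' : Fin t → Fin d, Function.Injective σ' ∧
        (∀ j ∈ s, σ' j = τ j) ∧
        ∃ N, minorOf (fun v j => π (X (v, j))) ρ σ' ^ N * z = 0 := by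
      intro s
      induction s using Finset.induction_on with
      | empty => exact ⟨σ, hσ, by simp, hz⟩
      | insert j s hjs ih =>
        obtain ⟨σ', h1, h2, h3⟩ := ih
        by_cases hr : ∃ j', σ' j' = τ j
        · obtain ⟨j', hj'⟩ := hr
          by_cases hjj : j' = j
          · subst hjj
            refine ⟨σ', h1, ?_, h3⟩
            intro i hi
            rcases Finset.mem_insert.1 hi with rfl | hi
            · exact hj'
            · exact h2 i hi
          · refine ⟨σ' ∘ Equiv.swap j j', h1.comp (Equiv.injective _), ?_, ?_⟩
            · intro i hi
              rcases Finset.mem_insert.1 hi with rfl | his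
              · simp [hj']
              · have n1 : i ≠ j := by rintro rfl; exact hjs his
                have n2 : i ≠ j' := by
                  rintro rfl
                  rw [h2 i his] at hj'
                  exact n1 (hτ hj')
                simp [Equiv.swap_apply_of_ne_of_ne n1 n2, h2 i his]
            · obtain ⟨N, hN⟩ := h3
              refine ⟨N, ?_⟩
              have : minorOf (fun v j => π (X (v, j))) ρ (σ' ∘ Equiv.swap j j') =
                  - minorOf (fun v j => π (X (v, j))) ρ σ' := by
                have e := Matrix.det_permute' (Equiv.swap j j')
                  (Matrix.of fun i j => π (X (ρ i, σ' j)))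
                rw [Equiv.Perm.sign_swap (Ne.symm hjj)] at e
                simpa [minorOf, Matrix.submatrix] using e
              rw [this, neg_pow, mul_assoc, hN, mul_zero]
        · push Not at hr
          refine ⟨Function.update σ' j (τ j), ?_, ?_, minor_step K G d π hπ hk ρ σ' h1 j _ hr z h3⟩
          · intro x y hxy
            by_cases hx : x = j <;> by_cases hy : y = j
            · rw [hx, hy]
            · subst hx
              rw [Function.update_self, Function.update_of_ne hy] at hxy
              exact absurd hxy.symm (hr y)
            · subst hy
              rw [Function.update_self, Function.update_of_ne hx] at hxy
              exact absurd hxy (hr x)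
            · rw [Function.update_of_ne hx, Function.update_of_ne hy] at hxy
              exact h1 hxy
          · intro i hi
            by_cases hij : i = j
            · subst hij; simp
            · rw [Function.update_of_ne hij]
              exact h2 i ((Finset.mem_insert.1 hi).resolve_left hij)
    obtain ⟨σ', -, h2, h3⟩ := key Finset.univ
    have : σ' = τ := funext fun j => h2 j (Finset.mem_univ _)
    rwa [this] at h3
  · refine ⟨1, ?_⟩
    rw [Function.not_injective_iff] at hτ
    obtain ⟨a, b, hab, hne⟩ := hτ
    have : minorOf (fun v j => π (X (v, j))) ρ τ = 0 := by
      apply Matrix.det_zero_of_column_eq hne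
      intro i
      simp [hab]
    rw [this]
    simp

theorem exists_common_ann {R : Type*} [CommRing R] {ι : Type*} (p : ι → R) (s : Finset ι) :
    ∀ z : R, z ≠ 0 → (∀ i, ∃ N, p i ^ N * z = 0) →
      ∃ w : R, w * z ≠ 0 ∧ ∀ i ∈ s, p i * (w * z) = 0 := by
  classical
  induction s using Finset.induction_on with
  | empty => intro z hz _; exact ⟨1, by simpa using hz, by simp⟩
  | insert i s his ih =>
    intro z hz h
    obtain ⟨w, hw, hs⟩ := ih z hz h
    have hex : ∃ N, p i ^ N * (w * z) = 0 := by
      obtain ⟨N, hN⟩ := h i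
      exact ⟨N, by linear_combination w * hN⟩
    have h0 : Nat.find hex ≠ 0 := by
      intro h0
      have := Nat.find_spec hex
      rw [h0] at this
      simp at this
      exact hw this
    obtain ⟨N, hN⟩ := Nat.exists_eq_succ_of_ne_zero h0
    refine ⟨p i ^ N * w, ?_, ?_⟩
    · have := Nat.find_min hex (m := N) (by omega)
      rwa [mul_assoc]
    · intro j hj
      rcases Finset.mem_insert.1 hj with rfl | hj
      · have := Nat.find_spec hex
        rw [hN] at this
        rw [← this, pow_succ]; ring
      · linear_combination p i ^ N * hs j hj

/-- If all `t`-minors (of the first rows) kill `z ≠ 0`, there is a nontrivial relation. -/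
theorem exists_relation {d t : ℕ} {R : Type} [CommRing R] (y : Fin t → Fin d → R) (z : R)
    (hz : z ≠ 0) (h : ∀ τ : Fin t → Fin d, minorOf y id τ * z = 0) :
    ∃ (r : Fin t) (c : Fin t → R), (∀ i, r < i → c i = 0) ∧ c r * z ≠ 0 ∧
      ∀ k, ∑ i, c i * y i k * z = 0 := by
  classical
  let Pr : ℕ → Prop := fun r => ∃ hr : r ≤ t, ∀ τ : Fin r → Fin d,
    minorOf y (Fin.castLE hr) τ * z = 0
  have hex : ∃ r, Pr r := ⟨t, le_rfl, h⟩
  obtain ⟨hr, hall⟩ := Nat.find_spec hex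
  have h0 : Nat.find hex ≠ 0 := by
    intro h0
    obtain ⟨_, h1⟩ : Pr 0 := by rw [← h0]; exact Nat.find_spec hex
    have := h1 Fin.elim0
    simp [minorOf] at this
    exact hz this
  obtain ⟨r, hN⟩ := Nat.exists_eq_succ_of_ne_zero h0
  obtain ⟨hr, hall⟩ : Pr (r + 1) := by rw [← Nat.succ_eq_add_one, ← hN]; exact Nat.find_spec hex
  have hmin : ¬ Pr r := Nat.find_min hex (by omega)
  have hrt : r ≤ t := by omega
  have : ∃ τ : Fin r → Fin d, minorOf y (Fin.castLE hrt) τ * z ≠ 0 := by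
    by_contra hcon
    push Not at hcon
    exact hmin ⟨hrt, hcon⟩
  obtain ⟨τ, hτ⟩ := this
  let c0 : Fin (r + 1) → R := fun i =>
    (-1) ^ (i.1 + r) * Matrix.det (Matrix.of fun (a b : Fin r) => y (Fin.castLE hr (i.succAbove a)) (τ b))
  refine ⟨⟨r, by omega⟩, fun i => if hi : i.1 < r + 1 then c0 ⟨i.1, hi⟩ else 0, ?_, ?_, ?_⟩
  · intro i hi
    have : ¬ i.1 < r + 1 := by have : r < i.1 := hi; omega
    simp [this]
  · have e1 : c0 ⟨r, by omega⟩ = minorOf y (Fin.castLE hrt) τ := by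
      have e2 : (⟨r, by omega⟩ : Fin (r + 1)) = Fin.last r := rfl
      simp only [c0, minorOf]
      rw [Even.neg_one_pow ⟨r, rfl⟩, one_mul, e2]
      congr 1
      ext a b
      simp [Fin.succAbove_last]
    simp only [Nat.lt_succ_self, dif_pos, e1]
    simpa [e1] using hτ
  · intro k
    have e3 := hall (Fin.snoc τ k)
    rw [minorOf, Matrix.det_succ_column _ (Fin.last r), Finset.sum_mul] at e3
    refine Eq.trans ?_ e3
    symm
    have hinj : Function.Injective (Fin.castLE hr) := Fin.castLE_injective hr
    rw [← Finset.sum_subset (Finset.subset_univ (Finset.univ.map ⟨Fin.castLE hr, hinj⟩))]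
    · rw [Finset.sum_map]
      apply Finset.sum_congr rfl
      intro i _
      simp only [Function.Embedding.coeFn_mk, Fin.val_castLE, i.2, dif_pos, c0, Fin.val_last,
        Matrix.of_apply, Fin.snoc_last, Fin.eta]
      have : ((Matrix.of fun i j => y (Fin.castLE hr i) ((Fin.snoc τ k : Fin (r + 1) → Fin d) j)).submatrix i.succAbove
          (Fin.last r).succAbove) =
          Matrix.of fun (a b : Fin r) => y (Fin.castLE hr (i.succAbove a)) (τ b) := by
        ext a b
        simp [Fin.succAbove_last]
      rw [this]
      ring
    · intro i _ hi
      have : ¬ i.1 < r + 1 := by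
        intro hlt
        apply hi
        simp only [Finset.mem_map, Finset.mem_univ, true_and]
        exact ⟨⟨i.1, hlt⟩, by ext; simp⟩
      simp [this]

theorem polyIncl_X (K : Type) [Field K] (n d : ℕ) (i : Fin n) (k : Fin d) :
    polyIncl K n d (X (i, k)) = X (i.castSucc, k) := by
  simp [polyIncl]

theorem polyIncl_C (K : Type) [Field K] (n d : ℕ) (r : K) :
    polyIncl K n d (C r) = C r := by
  simp [polyIncl]

theorem mem_of_polyIncl_mem (K : Type) [Field K] (n d : ℕ) (G : SimpleGraph (Fin (n + 1)))
    (q : MvPolynomial (Fin n × Fin d) K) (hq : polyIncl K n d q ∈ lssIdeal K G d) :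
    q ∈ lssIdeal K (G.comap Fin.castSucc) d := by
  let F : Fin (n + 1) → Fin d → MvPolynomial (Fin n × Fin d) K := fun v k =>
    Fin.lastCases (motive := fun _ => MvPolynomial (Fin n × Fin d) K) 0 (fun i => X (i, k)) v
  have hF0 : ∀ k, F (Fin.last n) k = 0 := fun k => by simp [F]
  have hF1 : ∀ i k, F (Fin.castSucc i) k = X (i, k) := fun i k => by simp [F]
  let ψ : MvPolynomial (Fin (n + 1) × Fin d) K →ₐ[K] MvPolynomial (Fin n × Fin d) K :=
    aeval fun p => F p.1 p.2
  have h1 : lssIdeal K G d ≤ (lssIdeal K (G.comap Fin.castSucc) d).comap ψ.toRingHom := by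
    rw [lssIdeal, Ideal.span_le]
    rintro _ ⟨v, w, hvw, rfl⟩
    rw [SetLike.mem_coe, Ideal.mem_comap]
    have e : ψ.toRingHom (∑ k : Fin d, X (v, k) * X (w, k)) = ∑ k, F v k * F w k := by
      simp [ψ]
    rw [e]
    induction v using Fin.lastCases with
    | last => simp [hF0]
    | cast v =>
      induction w using Fin.lastCases with
      | last => simp [hF0]
      | cast w =>
        simp only [hF1]
        exact Ideal.subset_span ⟨v, w, hvw, rfl⟩
  have h2 : ψ.toRingHom.comp (polyIncl K n d) = RingHom.id _ := by
    apply MvPolynomial.ringHom_ext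
    · intro r
      simp [polyIncl_C]
    · rintro ⟨i, k⟩
      simp [polyIncl_X, ψ, hF1]
  have h3 := h1 hq
  rw [Ideal.mem_comap, ← RingHom.comp_apply, h2] at h3
  exact h3

theorem detD'_nzd (K : Type) [Field K] (n d t : ℕ)
    (G : SimpleGraph (Fin (n + 1))) (htn : t ≤ n) (htd : t ≤ d)
    (hdeg : ∀ i : Fin (n + 1), G.Adj (Fin.last n) i ↔ (i : ℕ) < t)
    (hCI : (lssIdeal K G d).IsCompleteIntersection)
    {R : Type} [CommRing R] [Algebra K R] (π : MvPolynomial (Fin n × Fin d) K →ₐ[K] R)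
    (hπ : Function.Surjective π) (hk : RingHom.ker π = lssIdeal K (G.comap Fin.castSucc) d)
    (z : R) (hz : π (detD' K n d t htn htd) * z = 0) : z = 0 := by
  classical
  rcases Nat.eq_zero_or_pos t with ht | ht
  · subst ht
    simpa [detD'] using hz
  have hd : 0 < d := by omega
  by_contra hz0
  have hm0 : minorOf (fun v j => π (X (v, j))) (Fin.castLE htn)
      (fun j : Fin t => (⟨d - t + j.1, by omega⟩ : Fin d)) = π (detD' K n d t htn htd) := by
    rw [detD', minorOf, AlgHom.map_det]
    rfl
  have hall := minor_all K (G.comap Fin.castSucc) d π hπ hk (Fin.castLE htn)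
    (fun j : Fin t => (⟨d - t + j.1, by omega⟩ : Fin d)) (by
      intro a b hab
      simp only [Fin.mk.injEq] at hab
      ext; omega) z ⟨1, by rw [hm0, pow_one, hz]⟩
  obtain ⟨w, hw, hann⟩ := exists_common_ann
    (fun τ : Fin t → Fin d => minorOf (fun v j => π (X (v, j))) (Fin.castLE htn) τ)
    Finset.univ z hz0 hall
  obtain ⟨r, c, -, hcr, hrel⟩ := exists_relation
    (fun (i : Fin t) k => π (X (Fin.castLE htn i, k))) (w * z) hw
    (fun τ => hann τ (Finset.mem_univ _))
  choose Cc hCc using fun i => hπ (c i)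
  obtain ⟨Z, hZ⟩ := hπ (w * z)
  have hlt : ∀ i : Fin t, (Fin.castLE htn i).castSucc < Fin.last n := fun i =>
    Fin.castSucc_lt_last _
  let ed : Fin t → EdgeIdx G := fun i => ⟨((Fin.castLE htn i).castSucc, Fin.last n), hlt i,
    ((hdeg _).2 i.2).symm⟩
  let J := Ideal.span ((fun e : EdgeIdx G => edgePoly K d e.1.1 e.1.2) '' {e' | e' ≠ ed r})
  have hJ : lssIdeal K (G.comap Fin.castSucc) d ≤ J.comap (polyIncl K n d) := by
    rw [← lssIdeal_eq_span, Ideal.span_le]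
    rintro _ ⟨⟨⟨u, v⟩, huv, hadj⟩, rfl⟩
    rw [SetLike.mem_coe, Ideal.mem_comap]
    apply Ideal.subset_span
    refine ⟨⟨(u.castSucc, v.castSucc), Fin.castSucc_lt_castSucc_iff.2 huv, hadj⟩, ?_, ?_⟩
    · intro he
      have := congrArg (fun e : EdgeIdx G => e.1.2) he
      exact (Fin.castSucc_lt_last v).ne this
    · simp [edgePoly, polyIncl_X]
  have htot : ∑ i, polyIncl K n d (Cc i * Z) *
      edgePoly K d (Fin.castLE htn i).castSucc (Fin.last n) ∈ J := by
    have e1 : ∑ i, polyIncl K n d (Cc i * Z) *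
      edgePoly K d (Fin.castLE htn i).castSucc (Fin.last n) =
        ∑ k, X (Fin.last n, k) * polyIncl K n d (∑ i, Cc i * X (Fin.castLE htn i, k) * Z) := by
      simp only [edgePoly, Finset.mul_sum, map_sum, map_mul, polyIncl_X]
      rw [Finset.sum_comm]
      refine Finset.sum_congr rfl fun k _ => Finset.sum_congr rfl fun i _ => ?_
      ring
    rw [e1]
    refine sum_mem fun k _ => Ideal.mul_mem_left _ _ (hJ ?_)
    rw [← hk, RingHom.mem_ker]
    simp only [map_sum, map_mul, hCc, hZ]
    exact hrel k
  have hmem : polyIncl K n d (Cc r * Z) ∈ lssIdeal K G d := by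
    apply mem_of_mul_edgePoly_mem K G d hd hCI (ed r)
    change polyIncl K n d (Cc r * Z) *
      edgePoly K d (Fin.castLE htn r).castSucc (Fin.last n) ∈ J
    rw [← Finset.add_sum_erase _ _ (Finset.mem_univ r)] at htot
    refine (Submodule.add_mem_iff_left _ ?_).1 htot
    refine sum_mem fun i hi => Ideal.mul_mem_left _ _ (Ideal.subset_span ⟨ed i, ?_, rfl⟩)
    intro he
    apply (Finset.mem_erase.1 hi).1
    have := congrArg (fun e : EdgeIdx G => e.1.1.1) he
    exact Fin.ext this
  have := mem_of_polyIncl_mem K n d G _ hmem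
  rw [← hk, RingHom.mem_ker, map_mul, hCc, hZ] at this
  exact hcr this

/-- Index bound for the first `d - t` coordinates. -/
theorem low_lt {d t : ℕ} (j : Fin (d - t)) : j.1 < d := j.2.trans_le (Nat.sub_le d t)

theorem sum_split {A : Type*} [AddCommMonoid A] (d t : ℕ) (htd : t ≤ d) (f : Fin d → A) :
    ∑ k, f k = ∑ j : Fin (d - t), f ⟨j.1, low_lt j⟩ + ∑ j : Fin t, f ⟨d - t + j.1, by omega⟩ := by
  obtain ⟨m, rfl⟩ := Nat.exists_eq_add_of_le' htd
  have hm : m + t - t = m := by omega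
  rw [Fin.sum_univ_add]
  congr 1
  · exact (Fintype.sum_equiv (finCongr hm) _ _ fun j => rfl).symm
  · refine Finset.sum_congr rfl fun j _ => ?_
    congr 1
    ext
    simp

/-- The map `R_G → R_{G'}[x_1, …, x_{d-t}]_D` solving for the last `t` coordinates. -/
theorem exists_alpha (K : Type) [Field K] (n d t : ℕ)
    (G : SimpleGraph (Fin (n + 1))) (htn : t ≤ n) (htd : t ≤ d)
    (hdeg : ∀ i : Fin (n + 1), G.Adj (Fin.last n) i ↔ (i : ℕ) < t)
    {R' : Type} [CommRing R'] [Algebra K R'] (π : MvPolynomial (Fin n × Fin d) K →ₐ[K] R')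
    (hk : RingHom.ker π = lssIdeal K (G.comap Fin.castSucc) d)
    {R : Type} [CommRing R] [Algebra K R] (Pi' : MvPolynomial (Fin (n + 1) × Fin d) K →ₐ[K] R)
    (hPi : Function.Surjective Pi') (hK : RingHom.ker Pi' = lssIdeal K G d)
    {TD : Type} [CommRing TD] [Algebra (MvPolynomial (Fin (d - t)) R') TD]
    (hu : IsUnit (algebraMap (MvPolynomial (Fin (d - t)) R') TD (C (π (detD' K n d t htn htd))))) :
    ∃ α : R →+* TD,
      (∀ p, α (Pi' (polyIncl K n d p)) = algebraMap (MvPolynomial (Fin (d - t)) R') TD (C (π p))) ∧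
      (∀ j : Fin (d - t), α (Pi' (X (Fin.last n, ⟨j.1, low_lt j⟩))) =
        algebraMap (MvPolynomial (Fin (d - t)) R') TD (X j)) := by
  set γ : MvPolynomial (Fin n × Fin d) K →+* TD :=
    (algebraMap (MvPolynomial (Fin (d - t)) R') TD).comp
      ((C : R' →+* MvPolynomial (Fin (d - t)) R').comp π.toRingHom) with hγ
  have hγ0 : ∀ p, γ p = algebraMap (MvPolynomial (Fin (d - t)) R') TD (C (π p)) := fun p => rfl
  let A : Matrix (Fin t) (Fin t) TD :=
    Matrix.of fun i j => γ (X (Fin.castLE htn i, ⟨d - t + j.1, by omega⟩))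
  have hdet : IsUnit A.det := by
    have : A.det = γ (detD' K n d t htn htd) := by
      rw [detD', RingHom.map_det]
      rfl
    rw [this]
    exact hu
  let xl : Fin (d - t) → TD := fun j => algebraMap (MvPolynomial (Fin (d - t)) R') TD (X j)
  let bb : Fin t → TD := fun i => ∑ j : Fin (d - t), γ (X (Fin.castLE htn i, ⟨j.1, low_lt j⟩)) * xl j
  let xh : Fin t → TD := A⁻¹.mulVec (-bb)
  have hxh : A.mulVec xh = -bb := by
    simp only [xh, Matrix.mulVec_mulVec, Matrix.mul_nonsing_inv _ hdet, Matrix.one_mulVec]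
  let xx : Fin d → TD := fun k => if h : k.1 < d - t then xl ⟨k.1, h⟩ else
    xh ⟨k.1 - (d - t), by omega⟩
  have hxl : ∀ j : Fin (d - t), xx ⟨j.1, low_lt j⟩ = xl j := fun j => by simp [xx]
  have hxh' : ∀ j : Fin t, xx ⟨d - t + j.1, by omega⟩ = xh j := fun j => by simp [xx]
  have hrel : ∀ i : Fin t, ∑ k, γ (X (Fin.castLE htn i, k)) * xx k = 0 := by
    intro i
    rw [sum_split d t htd]
    simp only [hxl, hxh']
    have e := congrFun hxh i
    simp only [Matrix.mulVec, dotProduct, A, Matrix.of_apply, Pi.neg_apply] at e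
    rw [e]
    simp [bb]
  let F : Fin (n + 1) → Fin d → TD := fun v k =>
    Fin.lastCases (motive := fun _ => TD) (xx k) (fun i => γ (X (i, k))) v
  have hF0 : ∀ k, F (Fin.last n) k = xx k := fun k => by simp [F]
  have hF1 : ∀ i k, F (Fin.castSucc i) k = γ (X (i, k)) := fun i k => by simp [F]
  let ψ : MvPolynomial (Fin (n + 1) × Fin d) K →+* TD :=
    eval₂Hom (γ.comp C) fun p => F p.1 p.2
  have hψX : ∀ v k, ψ (X (v, k)) = F v k := fun v k => by simp [ψ]
  have hlast : ∀ v : Fin n, G.Adj (Fin.last n) v.castSucc →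
      ∑ k, γ (X (v, k)) * xx k = 0 := by
    intro v hv
    have := (hdeg _).1 hv
    exact hrel ⟨v.1, this⟩
  have hker : RingHom.ker Pi'.toRingHom ≤ RingHom.ker ψ := by
    have hK' : RingHom.ker Pi'.toRingHom = lssIdeal K G d := hK
    rw [hK', lssIdeal, Ideal.span_le]
    rintro _ ⟨v, w, hvw, rfl⟩
    rw [SetLike.mem_coe, RingHom.mem_ker]
    simp only [map_sum, map_mul, hψX]
    induction v using Fin.lastCases with
    | last =>
      induction w using Fin.lastCases with
      | last => exact absurd hvw (G.loopless.irrefl _)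
      | cast w =>
        simp only [hF0, hF1]
        rw [← hlast w hvw]
        exact Finset.sum_congr rfl fun k _ => mul_comm _ _
    | cast v =>
      induction w using Fin.lastCases with
      | last =>
        simp only [hF0, hF1]
        exact hlast v hvw.symm
      | cast w =>
        simp only [hF1, ← map_mul, ← map_sum]
        rw [hγ0]
        have : (∑ k, X (v, k) * X (w, k) : MvPolynomial (Fin n × Fin d) K) ∈ RingHom.ker π := by
          rw [hk]
          exact Ideal.subset_span ⟨v, w, hvw, rfl⟩
        rw [RingHom.mem_ker] at this
        rw [this, map_zero, map_zero]
  let α : R →+* TD := Pi'.toRingHom.liftOfSurjective hPi ⟨ψ, hker⟩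
  have hα : ∀ q, α (Pi' q) = ψ q := fun q =>
    RingHom.liftOfSurjective_comp_apply Pi'.toRingHom hPi ⟨ψ, hker⟩ q
  refine ⟨α, ?_, ?_⟩
  · intro p
    rw [hα, ← hγ0]
    have : ψ.comp (polyIncl K n d) = γ := by
      apply MvPolynomial.ringHom_ext
      · intro r
        simp [polyIncl_C, ψ]
      · rintro ⟨i, k⟩
        simp [polyIncl_X, hψX, hF1]
    exact RingHom.congr_fun this p
  · intro j
    rw [hα, hψX, hF0, hxl]

theorem lss_core (K : Type) [Field K] (n d t : ℕ)
    (G : SimpleGraph (Fin (n + 1))) (htn : t ≤ n) (htd : t ≤ d)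
    (hdeg : ∀ i : Fin (n + 1), G.Adj (Fin.last n) i ↔ (i : ℕ) < t)
    (hCI : (lssIdeal K G d).IsCompleteIntersection)
    {R' : Type} [CommRing R'] [Algebra K R'] (π : MvPolynomial (Fin n × Fin d) K →ₐ[K] R')
    (hπ : Function.Surjective π)
    (hk : RingHom.ker π = lssIdeal K (G.comap Fin.castSucc) d)
    {R : Type} [CommRing R] [Algebra K R] (Pi' : MvPolynomial (Fin (n + 1) × Fin d) K →ₐ[K] R)
    (hPi : Function.Surjective Pi') (hK : RingHom.ker Pi' = lssIdeal K G d)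
    (ι : R' →+* R) (hι : ∀ p, ι (π p) = Pi' (polyIncl K n d p))
    (TD : Type) [CommRing TD] [Algebra (MvPolynomial (Fin (d - t)) R') TD]
    [IsLocalization.Away (C (π (detD' K n d t htn htd)) : MvPolynomial (Fin (d - t)) R') TD]
    (RD : Type) [CommRing RD] [Algebra R RD]
    [IsLocalization.Away (Pi' (detD K n d t htn htd)) RD] :
    Function.Injective (eval₂Hom ι (fun j : Fin (d - t) => Pi' (X (Fin.last n, ⟨j.1, low_lt j⟩)))) ∧
    Nonempty (RD ≃+* TD) := by
  have hu := IsLocalization.Away.algebraMap_isUnit (S := TD)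
    (C (π (detD' K n d t htn htd)) : MvPolynomial (Fin (d - t)) R')
  have huR := IsLocalization.Away.algebraMap_isUnit (S := RD) (Pi' (detD K n d t htn htd))
  obtain ⟨α, hα1, hα2⟩ := exists_alpha K n d t G htn htd hdeg π hk Pi' hPi hK hu
  set β := eval₂Hom ι (fun j : Fin (d - t) => Pi' (X (Fin.last n, ⟨j.1, low_lt j⟩))) with hβ
  have hβC : ∀ r, β (C r) = ι r := fun r => by simp [hβ]
  have hβX : ∀ j : Fin (d - t), β (X j) = Pi' (X (Fin.last n, ⟨j.1, low_lt j⟩)) :=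
    fun r => by simp [hβ]
  have hαβ : α.comp β = algebraMap (MvPolynomial (Fin (d - t)) R') TD := by
    apply MvPolynomial.ringHom_ext
    · intro r
      obtain ⟨p, rfl⟩ := hπ r
      rw [RingHom.comp_apply, hβC, hι, hα1]
    · intro j
      rw [RingHom.comp_apply, hβX, hα2]
  have hDD : polyIncl K n d (detD' K n d t htn htd) = detD K n d t htn htd := by
    rw [detD', detD, RingHom.map_det]
    congr 1
    ext1 i j
    simp only [RingHom.mapMatrix_apply, Matrix.map_apply, Matrix.of_apply, polyIncl_X]
    rfl
  constructor
  · have hinj : Function.Injective (algebraMap (MvPolynomial (Fin (d - t)) R') TD) := by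
      apply IsLocalization.injective TD
        (M := Submonoid.powers (C (π (detD' K n d t htn htd)) : MvPolynomial (Fin (d - t)) R'))
      rw [Submonoid.powers_le, mem_nonZeroDivisors_iff_right]
      intro f hf
      ext m
      have e := congrArg (coeff m) hf
      rw [mul_comm, coeff_C_mul] at e
      simpa using detD'_nzd K n d t G htn htd hdeg hCI π hπ hk _ e
    rw [← hαβ] at hinj
    exact Function.Injective.of_comp (f := α) hinj
  · have huα : IsUnit (α (Pi' (detD K n d t htn htd))) := by
      rw [← hDD, hα1]; exact hu
    have huβ : IsUnit (((algebraMap R RD).comp β)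
        (C (π (detD' K n d t htn htd)) : MvPolynomial (Fin (d - t)) R')) := by
      rw [RingHom.comp_apply, hβC, hι, hDD]; exact huR
    let α' : RD →+* TD := IsLocalization.Away.lift (Pi' (detD K n d t htn htd)) huα
    let β' : TD →+* RD := IsLocalization.Away.lift
      (C (π (detD' K n d t htn htd)) : MvPolynomial (Fin (d - t)) R') huβ
    have hα' : ∀ r, α' (algebraMap R RD r) = α r := fun r =>
      IsLocalization.Away.lift_eq _ huα r
    have hβ' : ∀ r, β' (algebraMap _ TD r) = algebraMap R RD (β r) := fun r =>
      IsLocalization.Away.lift_eq _ huβ r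
    have h1 : α'.comp β' = RingHom.id TD := by
      apply IsLocalization.ringHom_ext
        (Submonoid.powers (C (π (detD' K n d t htn htd)) : MvPolynomial (Fin (d - t)) R'))
      refine RingHom.ext fun x => ?_
      simp only [RingHom.comp_apply, hβ', hα', RingHom.id_apply]
      exact RingHom.congr_fun hαβ x
    have hincl : ∀ p, β' (α (Pi' (polyIncl K n d p))) =
        algebraMap R RD (Pi' (polyIncl K n d p)) := by
      intro p
      rw [hα1, hβ', hβC, hι]
    have hlow : ∀ j : Fin (d - t), β' (α (Pi' (X (Fin.last n, ⟨j.1, low_lt j⟩)))) =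
        algebraMap R RD (Pi' (X (Fin.last n, ⟨j.1, low_lt j⟩))) := by
      intro j
      rw [hα2, hβ', hβX]
    -- the two homomorphisms from `S`
    let f1 : MvPolynomial (Fin (n + 1) × Fin d) K →+* RD := (β'.comp α).comp Pi'.toRingHom
    let f2 : MvPolynomial (Fin (n + 1) × Fin d) K →+* RD := (algebraMap R RD).comp Pi'.toRingHom
    have hf1 : ∀ q, f1 q = β' (α (Pi' q)) := fun q => rfl
    have hf2 : ∀ q, f2 q = algebraMap R RD (Pi' q) := fun q => rfl
    let A : Matrix (Fin t) (Fin t) RD := Matrix.of fun i j =>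
      f2 (X ((Fin.castLE htn i).castSucc, ⟨d - t + j.1, by omega⟩))
    have hAdet : IsUnit A.det := by
      have : A.det = f2 (detD K n d t htn htd) := by
        rw [detD, RingHom.map_det]
        rfl
      rw [this]
      exact huR
    have hvar : ∀ i k, f1 (X (Fin.castSucc i, k)) = f2 (X (Fin.castSucc i, k)) := by
      intro i k
      rw [hf1, hf2, ← polyIncl_X, hincl]
    have hzero : ∀ i : Fin t, Pi' (∑ k, X ((Fin.castLE htn i).castSucc, k) * X (Fin.last n, k)) = 0 := by
      intro i
      rw [← RingHom.mem_ker, hK]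
      exact Ideal.subset_span ⟨_, _, ((hdeg _).2 i.2).symm, rfl⟩
    have hhigh : (fun j : Fin t => f1 (X (Fin.last n, ⟨d - t + j.1, by omega⟩))) =
        (fun j : Fin t => f2 (X (Fin.last n, ⟨d - t + j.1, by omega⟩))) := by
      have hA : A.mulVec (fun j : Fin t => f1 (X (Fin.last n, ⟨d - t + j.1, by omega⟩))) =
          A.mulVec (fun j : Fin t => f2 (X (Fin.last n, ⟨d - t + j.1, by omega⟩))) := by
        ext i
        simp only [Matrix.mulVec, dotProduct, A, Matrix.of_apply]
        have z1 : f1 (∑ k, X ((Fin.castLE htn i).castSucc, k) * X (Fin.last n, k)) = 0 := by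
          rw [hf1, hzero, map_zero, map_zero]
        have z2 : f2 (∑ k, X ((Fin.castLE htn i).castSucc, k) * X (Fin.last n, k)) = 0 := by
          rw [hf2, hzero, map_zero]
        rw [sum_split d t htd] at z1 z2
        simp only [map_add, map_sum, map_mul, hvar] at z1 z2
        have hl : ∀ j : Fin (d - t), f1 (X (Fin.last n, ⟨j.1, low_lt j⟩)) =
          f2 (X (Fin.last n, ⟨j.1, low_lt j⟩)) := hlow
        simp only [hl] at z1
        exact add_left_cancel (z1.trans z2.symm)
      have := congrArg (A⁻¹.mulVec) hA
      simpa only [Matrix.mulVec_mulVec, Matrix.nonsing_inv_mul _ hAdet, Matrix.one_mulVec] using this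
    have hf : f1 = f2 := by
      apply MvPolynomial.ringHom_ext
      · intro r
        rw [hf1, hf2, ← polyIncl_C, hincl]
      · rintro ⟨v, k⟩
        induction v using Fin.lastCases with
        | cast v => exact hvar v k
        | last =>
          by_cases hkl : k.1 < d - t
          · exact hlow ⟨k.1, hkl⟩
          · have e := congrFun hhigh ⟨k.1 - (d - t), by omega⟩
            have hkk : (⟨d - t + (k.1 - (d - t)), by omega⟩ : Fin d) = k := by
              ext; simp; omega
            simpa only [hkk] using e
    have h2 : β'.comp α' = RingHom.id RD := by
      apply IsLocalization.ringHom_ext (Submonoid.powers (Pi' (detD K n d t htn htd)))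
      refine RingHom.ext fun x => ?_
      obtain ⟨q, rfl⟩ := hPi x
      simp only [RingHom.comp_apply, hα', RingHom.id_apply]
      exact RingHom.congr_fun hf q
    exact ⟨RingEquiv.ofRingHom α' β' h1 h2⟩

set_option synthInstance.maxHeartbeats 1000000 in
set_option maxHeartbeats 2000000 in
/-- Let `G` be a graph on `n+1` vertices whose last vertex has degree `t` with neighbors
the first `t` vertices, let `G'` be obtained by deleting the last vertex and suppose
`L_G(d)` is a complete intersection.  Writing `x_j = y_{(n+1)j}`, the images of
`x_1, …, x_{d-t}` in `R_G(d)` are algebraically independent over `R_{G'}(d)`, and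
`R_G(d)_D ≅ R_{G'}(d)[x_1, …, x_{d-t}]_D`. -/
theorem lss_localization_at_det (K : Type) [Field K] (n d t : ℕ)
    (G : SimpleGraph (Fin (n + 1))) (htn : t ≤ n) (htd : t ≤ d)
    (hdeg : ∀ i : Fin (n + 1), G.Adj (Fin.last n) i ↔ (i : ℕ) < t)
    (hle : lssIdeal K (G.comap Fin.castSucc) d ≤
      Ideal.comap (polyIncl K n d) (lssIdeal K G d))
    (hCI : (lssIdeal K G d).IsCompleteIntersection) :
    (letI : Algebra (MvPolynomial (Fin n × Fin d) K ⧸ lssIdeal K (G.comap Fin.castSucc) d)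
        (MvPolynomial (Fin (n + 1) × Fin d) K ⧸ lssIdeal K G d) :=
      (Ideal.quotientMap (lssIdeal K G d) (polyIncl K n d) hle).toAlgebra
     AlgebraicIndependent
       (MvPolynomial (Fin n × Fin d) K ⧸ lssIdeal K (G.comap Fin.castSucc) d)
       (fun j : Fin (d - t) =>
         Ideal.Quotient.mk (lssIdeal K G d)
           (MvPolynomial.X (Fin.last n, ⟨j.1, by omega⟩)))) ∧
    Nonempty
      (Localization.Away (Ideal.Quotient.mk (lssIdeal K G d) (detD K n d t htn htd)) ≃+*
        Localization.Away
          ((MvPolynomial.C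
            (Ideal.Quotient.mk (lssIdeal K (G.comap Fin.castSucc) d)
              (detD' K n d t htn htd)) :
            MvPolynomial (Fin (d - t))
              (MvPolynomial (Fin n × Fin d) K ⧸ lssIdeal K (G.comap Fin.castSucc) d)))) := by
  have core := lss_core K n d t G htn htd hdeg hCI
    (Ideal.Quotient.mkₐ K (lssIdeal K (G.comap Fin.castSucc) d))
    (Ideal.Quotient.mkₐ_surjective K _) (Ideal.Quotient.mkₐ_ker K _)
    (Ideal.Quotient.mkₐ K (lssIdeal K G d))
    (Ideal.Quotient.mkₐ_surjective K _) (Ideal.Quotient.mkₐ_ker K _)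
    (Ideal.quotientMap (lssIdeal K G d) (polyIncl K n d) hle)
    (fun p => Ideal.quotientMap_mk)
    (Localization.Away
      ((MvPolynomial.C (Ideal.Quotient.mkₐ K (lssIdeal K (G.comap Fin.castSucc) d)
        (detD' K n d t htn htd)) :
        MvPolynomial (Fin (d - t))
          (MvPolynomial (Fin n × Fin d) K ⧸ lssIdeal K (G.comap Fin.castSucc) d))))
    (Localization.Away (Ideal.Quotient.mkₐ K (lssIdeal K G d) (detD K n d t htn htd)))
  refine ⟨?_, core.2⟩
  exact core.1
end
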